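/- Let 1≤s<2 and let Ω satisfy (H) with Ω(−θ)=Ω(θ) for all θ. Then there exist a,b∈(0,∞) such that ρ_{a,b} is the unique minimizer of E up to translation. -/

import Mathlib

/-!
Write the interaction kernel as `W = K + |x|²`, where `K(x) = |x|^{-s} Ω(θ(x))` is the repulsive
part. The ellipse density `ρ_{a,b}` is shown to satisfy the Euler-Lagrange conditions for suitable
`a, b`, and `K` is shown to be strictly positive definite on differences of probability measures;
together these give unique minimality.

*Euler-Lagrange conditions.* In polar coordinates centred at the evaluation point, the potential
`K * ρ_{a,b}` is a superposition over directions `α`, with the weight `kw`, of one-dimensional Riesz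
potentials of restrictions of `ρ₂` to lines (`potential_eq`), which are affine copies of
`(1 - τ²)^{s/2}` (`lineInt_eq`). The one-dimensional potential equals a quadratic polynomial on
`(-1, 1)`, by a Möbius substitution that produces Beta integrals (`uPot_inside`), and dominates that
polynomial outside (`uPot_outside`). Hence the total potential equals a constant on the ellipse and
is at least that constant everywhere (`EL_eq`, `EL_ge`), provided that the resulting quadratic form
equals `-|x|²` up to a constant. The mixed coefficient vanishes since `Ω(-θ) = Ω(θ)` (`kw_cross`);
the two diagonal equations are solved in `exists_ab` by the intermediate value theorem for the ratio
of the axes, followed by a choice of the size using homogeneity.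

*Positive definiteness.* A superposition, over all directions `β` with weight `Ω(β)` and over all
scales, of Gaussians very elongated in the direction `e_β` is homogeneous of degree `-s`, and since
`s ≥ 1` its angular part concentrates: it equals a multiple of `K` up to factors `1 ± δ` with
`δ` arbitrarily small (`angInt_approx`, `Krep_approx`). Each Gaussian is positive definite through
its Fourier transform (`gauss_pd`), so `K` is (`Krep_pd`). For the equality case, a small
multiple of the isotropic kernel `|x|^{-s}` is split off; the remainder is still positive definite,
while the isotropic kernel is an exact superposition of Gaussians, for which equality forces equal
characteristic functions (`gauss_eq`, `Krep_eq`).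

*Conclusion.* For a centred measure the energy of `|x|²` is linear in the measure, namely twice the
second moment (`II_qk`). Combining the Euler-Lagrange conditions with positive definiteness
(`abstract_min`) shows that `ρ_{a,b}` is the unique minimizer among centred measures
(`centred_min`); every other measure of finite energy is translated to its centre of mass
(`general_min`).
-/

open MeasureTheory Real Filter Set Topology
open scoped ENNReal

noncomputable section

namespace Aniso

/-- The Euclidean norm on `ℝ × ℝ`. -/
def nrm (x : ℝ × ℝ) : ℝ := Real.sqrt (x.1 ^ 2 + x.2 ^ 2)

/-- The angle `θ(x) ∈ [-π, π)` of a nonzero point `x ∈ ℝ²`,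
so that `x / |x| = (cos (ang x), sin (ang x))`. -/
def ang (x : ℝ × ℝ) : ℝ :=
  if Complex.arg ⟨x.1, x.2⟩ = π then -π else Complex.arg ⟨x.1, x.2⟩

/-- The unit vector `e_φ = (cos φ, sin φ)`. -/
def eVec (φ : ℝ) : ℝ × ℝ := (Real.cos φ, Real.sin φ)

/-- The constant `τ_s = (2π)^{-s} Γ(s) cos(sπ/2)`. -/
def tauC (s : ℝ) : ℝ := (2 * π) ^ (-s) * Real.Gamma s * Real.cos (s * π / 2)

/-- The constant `c_s = π^{s-1} Γ((2-s)/2) / Γ(s/2)`. -/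
def cC (s : ℝ) : ℝ := π ^ (s - 1) * Real.Gamma ((2 - s) / 2) / Real.Gamma (s / 2)

/-- Hypothesis (H): `Ω` is smooth, 2π-periodic, strictly positive and π-periodic. -/
def SatisfiesH (Ω : ℝ → ℝ) : Prop :=
  ContDiff ℝ (⊤ : ℕ∞) Ω ∧ (∀ θ, Ω (θ + 2 * π) = Ω θ) ∧ (∀ θ, 0 < Ω θ) ∧ ∀ θ, Ω (θ + π) = Ω θ

/-- Hypothesis (h): `ω` is smooth, 2π-periodic, nonnegative, not identically zero,
π-periodic, and `ω(π/2) = 0`. -/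
def Satisfiesh (ω : ℝ → ℝ) : Prop :=
  ContDiff ℝ (⊤ : ℕ∞) ω ∧ (∀ θ, ω (θ + 2 * π) = ω θ) ∧ (∀ θ, 0 ≤ ω θ) ∧ (∃ θ, ω θ ≠ 0) ∧
    (∀ θ, ω (θ + π) = ω θ) ∧ ω (π / 2) = 0

/-- The transformed angle function `Ω̃`. -/
def Omt (s : ℝ) (Ω : ℝ → ℝ) (φ : ℝ) : ℝ :=
  tauC (2 - s) * (∫ θ in (-π)..π, |Real.cos (φ - θ)| ^ (-2 + s) * (Ω θ - Ω (φ + π / 2)))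
    + cC s * Ω (φ + π / 2)

/-- The interaction potential `W(x) = |x|^{-s} Ω(θ(x)) + |x|²` as an `[0,∞]`-valued
kernel, with `W(0) = ∞`. -/
def Wkernel (s : ℝ) (Ω : ℝ → ℝ) (x : ℝ × ℝ) : ℝ≥0∞ :=
  if x = 0 then ⊤ else ENNReal.ofReal (nrm x ^ (-s) * Ω (ang x) + nrm x ^ 2)

/-- The interaction energy `E[ρ] = (1/2) ∬ W(x-y) dρ(y) dρ(x) ∈ [0,∞]`. -/
def energy (s : ℝ) (Ω : ℝ → ℝ) (ρ : Measure (ℝ × ℝ)) : ℝ≥0∞ :=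
  (1 / 2 : ℝ≥0∞) * ∫⁻ x, ∫⁻ y, Wkernel s Ω (x - y) ∂ρ ∂ρ

/-- The real-valued interaction potential (with junk value `0` at the origin,
which is Lebesgue negligible). -/
def Wr (s : ℝ) (Ω : ℝ → ℝ) (x : ℝ × ℝ) : ℝ := nrm x ^ (-s) * Ω (ang x) + nrm x ^ 2

/-- `ρ` minimizes the energy `E` among probability measures on `ℝ²`. -/
def IsMinimizer (E : Measure (ℝ × ℝ) → ℝ≥0∞) (ρ : Measure (ℝ × ℝ)) : Prop :=
  IsProbabilityMeasure ρ ∧ ∀ μ : Measure (ℝ × ℝ), IsProbabilityMeasure μ → E ρ ≤ E μ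

/-- `ρ` is the unique minimizer of `E` up to translation: it is a minimizer and every
minimizer is a translate of it. -/
def IsUniqueMinimizer (E : Measure (ℝ × ℝ) → ℝ≥0∞) (ρ : Measure (ℝ × ℝ)) : Prop :=
  IsMinimizer E ρ ∧ ∀ μ, IsMinimizer E μ → ∃ v : ℝ × ℝ, μ = Measure.map (fun x => x + v) ρ

def R2 (s : ℝ) : ℝ := (8 * Real.sin (s * π / 2) / (s ^ 2 * (2 + s) * π)) ^ (-(1 / (s + 2)))

def C2 (s : ℝ) : ℝ := 4 * Real.sin (s * π / 2) / (s ^ 2 * π ^ 2)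

/-- The density `ρ₂(x) = C₂ (R₂² - |x|²)₊^{s/2}`. -/
def rho2 (s : ℝ) (x : ℝ × ℝ) : ℝ := C2 s * (max (R2 s ^ 2 - nrm x ^ 2) 0) ^ (s / 2)

def rho2meas (s : ℝ) : Measure (ℝ × ℝ) := volume.withDensity fun x => ENNReal.ofReal (rho2 s x)

/-- Counterclockwise rotation of `ℝ²` by the angle `η`. -/
def Rot (η : ℝ) (x : ℝ × ℝ) : ℝ × ℝ :=
  (x.1 * Real.cos η - x.2 * Real.sin η, x.1 * Real.sin η + x.2 * Real.cos η)

/-- The measure `ρ_{a,b,η}`: the pushforward of `ρ₂(x) dx` under `x ↦ R_η (a x₁, b x₂)`. -/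
def rhoE (s a b η : ℝ) : Measure (ℝ × ℝ) :=
  Measure.map (fun x => Rot η (a * x.1, b * x.2)) (rho2meas s)

/-- The measure `ρ_{a,b} = ρ_{a,b,0}`. -/
def rhoAB (s a b : ℝ) : Measure (ℝ × ℝ) := rhoE s a b 0

/-- The Beta function. -/
def BetaR (x y : ℝ) : ℝ := Real.Gamma x * Real.Gamma y / Real.Gamma (x + y)

def C1 (s : ℝ) : ℝ := 2 * Real.cos (s * π / 2) / (s * (s + 1) * π)

def R1 (s : ℝ) : ℝ := (C1 s * BetaR (1 / 2) ((3 + s) / 2)) ^ (-(1 / (s + 2)))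

/-- The density `ρ₁(t) = C₁ (R₁² - t²)₊^{(1+s)/2}` on `ℝ`. -/
def rho1 (s t : ℝ) : ℝ := C1 s * (max (R1 s ^ 2 - t ^ 2) 0) ^ ((1 + s) / 2)

def rho1meas (s : ℝ) : Measure ℝ := volume.withDensity fun t => ENNReal.ofReal (rho1 s t)

/-- The measure `ρ_{1D}`: the pushforward of `ρ₁(t) dt` under `t ↦ (0, t)`. -/
def rho1D (s : ℝ) : Measure (ℝ × ℝ) := Measure.map (fun t : ℝ => ((0 : ℝ), t)) (rho1meas s)

/-- The support of a measure: points all of whose neighborhoods have positive measure. -/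
def msupport {α : Type*} [TopologicalSpace α] [MeasurableSpace α] (μ : Measure α) : Set α :=
  {x | ∀ U ∈ 𝓝 x, 0 < μ U}

def Acoef (s : ℝ) (Ω : ℝ → ℝ) (a b : ℝ) : ℝ :=
  tauC s * (R1 s / R2 s) ^ (2 + s) *
    ∫ φ in (-π)..π,
      (a ^ 2 * Real.cos φ ^ 2 + b ^ 2 * Real.sin φ ^ 2) ^ (-(2 + s) / 2) *
        Real.cos φ ^ 2 * Omt s Ω φ

def Bcoef (s : ℝ) (Ω : ℝ → ℝ) (a b : ℝ) : ℝ :=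
  tauC s * (R1 s / R2 s) ^ (2 + s) *
    ∫ φ in (-π)..π,
      (a ^ 2 * Real.cos φ ^ 2 + b ^ 2 * Real.sin φ ^ 2) ^ (-(2 + s) / 2) *
        Real.sin φ ^ 2 * Omt s Ω φ

def Dcoef (s : ℝ) (Ω : ℝ → ℝ) (a b : ℝ) : ℝ :=
  tauC s * (R1 s / R2 s) ^ (2 + s) *
    ∫ φ in (-π)..π,
      (a ^ 2 * Real.cos φ ^ 2 + b ^ 2 * Real.sin φ ^ 2) ^ (-(2 + s) / 2) *
        (Real.cos φ * Real.sin φ) * Omt s Ω φ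

def Mfun (s : ℝ) (Ω : ℝ → ℝ) (a b : ℝ) : ℝ :=
  tauC s * (R1 s / R2 s) ^ (2 + s) *
    ∫ φ in (-π)..π, (a ^ 2 * Real.cos φ ^ 2 + b ^ 2 * Real.sin φ ^ 2) ^ (-s / 2) * Omt s Ω φ

def calE (s : ℝ) (Ω : ℝ → ℝ) (a b : ℝ) : ℝ := Mfun s Ω a b + s / 2 * (a ^ 2 + b ^ 2)

/-- A measure has compact support. -/
def HasCompactSupportM (ρ : Measure (ℝ × ℝ)) : Prop :=
  ∃ K : Set (ℝ × ℝ), IsCompact K ∧ ρ Kᶜ = 0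

/-- The linear interpolation `(1-t) ρ₀ + t ρ₁`. -/
def mix (ρ₀ ρ₁ : Measure (ℝ × ℝ)) (t : ℝ) : Measure (ℝ × ℝ) :=
  ENNReal.ofReal (1 - t) • ρ₀ + ENNReal.ofReal t • ρ₁

/-- Linear interpolation convexity (LIC): for any two distinct compactly supported
probability measures of finite energy with the same center of mass, the energy is
strictly convex along their linear interpolation. -/
def LIC (s : ℝ) (Ω : ℝ → ℝ) : Prop :=
  ∀ ρ₀ ρ₁ : Measure (ℝ × ℝ), IsProbabilityMeasure ρ₀ → IsProbabilityMeasure ρ₁ →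
    HasCompactSupportM ρ₀ → HasCompactSupportM ρ₁ →
    energy s Ω ρ₀ < ⊤ → energy s Ω ρ₁ < ⊤ → ρ₀ ≠ ρ₁ →
    (∫ x, x ∂ρ₀) = (∫ x, x ∂ρ₁) →
    StrictConvexOn ℝ (Set.Icc (0 : ℝ) 1) fun t => (energy s Ω (mix ρ₀ ρ₁ t)).toReal

/-- The interaction energy of a bounded compactly supported signed density. -/
def energyR (s : ℝ) (Ω : ℝ → ℝ) (μ : ℝ × ℝ → ℝ) : ℝ :=
  (1 / 2) * ∫ x : ℝ × ℝ, (∫ y : ℝ × ℝ, Wr s Ω (x - y) * μ y) * μ x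

/-- The logarithmic potential `W_log(x) = -ln|x| + Ω(θ(x)) + |x|²` (real valued,
with junk value at the origin). -/
def Wlog (Ω : ℝ → ℝ) (x : ℝ × ℝ) : ℝ := -Real.log (nrm x) + Ω (ang x) + nrm x ^ 2

def WlogKernel (Ω : ℝ → ℝ) (x : ℝ × ℝ) : ℝ≥0∞ :=
  if x = 0 then ⊤ else ENNReal.ofReal (Wlog Ω x)

/-- The logarithmic interaction energy. -/
def energyLog (Ω : ℝ → ℝ) (ρ : Measure (ℝ × ℝ)) : ℝ≥0∞ :=
  (1 / 2 : ℝ≥0∞) * ∫⁻ x, ∫⁻ y, WlogKernel Ω (x - y) ∂ρ ∂ρ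

/-- The family `W_{(s)}(x) = |x|^{-s} (1/s + Ω(θ(x))) - 1/s + |x|²`. -/
def Wsfam (s : ℝ) (Ω : ℝ → ℝ) (x : ℝ × ℝ) : ℝ :=
  nrm x ^ (-s) * (1 / s + Ω (ang x)) - 1 / s + nrm x ^ 2

/-- The transformed angle function of `W_{(s)}`. -/
def Omts (s : ℝ) (Ω : ℝ → ℝ) (φ : ℝ) : ℝ :=
  tauC (2 - s) * (∫ θ in (-π)..π, |Real.cos (φ - θ)| ^ (-2 + s) * (Ω θ - Ω (φ + π / 2)))
    + cC s * (1 / s + Ω (φ + π / 2))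

/-- The truncated integral appearing in the principal value defining `Ω̃_log`. -/
def pvInt (Ω : ℝ → ℝ) (φ δ : ℝ) : ℝ :=
  ∫ θ in {θ : ℝ | θ ∈ Set.Icc (-π) π ∧ δ ≤ |Real.cos (φ - θ)|},
    |Real.cos (φ - θ)| ^ (-(2 : ℝ)) * (Ω θ - Ω (φ + π / 2))

def OmtLogFam (Ω : ℝ → ℝ) (φ δ : ℝ) : ℝ :=
  -((2 * π) ^ (-(2 : ℝ))) * pvInt Ω φ δ + (2 * π)⁻¹

/-- The transformed angle function `Ω̃_log`, defined as the principal value limit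
(via `limUnder`, which returns the limit whenever it exists). -/
def OmtLog (Ω : ℝ → ℝ) (φ : ℝ) : ℝ := limUnder (𝓝[>] (0 : ℝ)) (OmtLogFam Ω φ)

/-- The closed elliptical region `B(0; a, b)`. -/
def ellipseSet (a b : ℝ) : Set (ℝ × ℝ) := {x | x.1 ^ 2 / a ^ 2 + x.2 ^ 2 / b ^ 2 ≤ 1}

def ALog (Ω : ℝ → ℝ) (a b : ℝ) : ℝ :=
  ∫ φ in (-π)..π,
    (a ^ 2 * Real.cos φ ^ 2 + b ^ 2 * Real.sin φ ^ 2)⁻¹ * Real.cos φ ^ 2 * OmtLog Ω φ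

def BLog (Ω : ℝ → ℝ) (a b : ℝ) : ℝ :=
  ∫ φ in (-π)..π,
    (a ^ 2 * Real.cos φ ^ 2 + b ^ 2 * Real.sin φ ^ 2)⁻¹ * Real.sin φ ^ 2 * OmtLog Ω φ

def DLog (Ω : ℝ → ℝ) (a b : ℝ) : ℝ :=
  ∫ φ in (-π)..π,
    (a ^ 2 * Real.cos φ ^ 2 + b ^ 2 * Real.sin φ ^ 2)⁻¹ *
      (Real.cos φ * Real.sin φ) * OmtLog Ω φ

/-- The uniform probability measure on the rotated ellipse `B(0; a, b, η)`. -/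
def unifEllipse (a b η : ℝ) : Measure (ℝ × ℝ) :=
  volume.withDensity ((Rot η '' ellipseSet a b).indicator fun _ => ENNReal.ofReal ((π * a * b)⁻¹))

/-- The pushforward of the density `(2/(πb²)) (b² - t²)₊^{1/2} dt` under `t ↦ R_η (0, t)`. -/
def semicirc (b η : ℝ) : Measure (ℝ × ℝ) :=
  Measure.map (fun t : ℝ => Rot η (0, t))
    (volume.withDensity fun t =>
      ENNReal.ofReal (2 / (π * b ^ 2) * (max (b ^ 2 - t ^ 2) 0) ^ ((1 : ℝ) / 2)))

/-- The vertical semicircle measure `ρ_{1D}` for the logarithmic case. -/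
def rho1Dlog : Measure (ℝ × ℝ) :=
  Measure.map (fun t : ℝ => ((0 : ℝ), t))
    (volume.withDensity fun t => ENNReal.ofReal (2 / π * (max (1 - t ^ 2) 0) ^ ((1 : ℝ) / 2)))

/-- The measure `ψ(t) dt` placed on the vertical axis. -/
def rhoPsi (ψ : ℝ → ℝ) : Measure (ℝ × ℝ) :=
  Measure.map (fun t : ℝ => ((0 : ℝ), t)) (volume.withDensity fun t => ENNReal.ofReal (ψ t))

/-! ### The one-dimensional Riesz potential of `(1 - τ²)^{s/2}` -/

/-- The Beta integral `∫₀¹ y^{-s/2} (1-y)^{s/2} dy`. -/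
def betaA (s : ℝ) : ℝ := ∫ y in Ioo (0 : ℝ) 1, y ^ (-(s / 2)) * (1 - y) ^ (s / 2)

lemma betaA_integrable {s : ℝ} (hs0 : 0 < s) (hs2 : s < 2) :
    IntegrableOn (fun y : ℝ => y ^ (-(s / 2)) * (1 - y) ^ (s / 2)) (Ioo 0 1) := by
  have h1 : IntegrableOn (fun y : ℝ => y ^ (-(s / 2))) (Ioo 0 1) := by
    have := (intervalIntegral.intervalIntegrable_rpow' (a := 0) (b := 1) (r := -(s/2)) (by linarith))
    rw [intervalIntegrable_iff_integrableOn_Ioo_of_le zero_le_one] at this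
    exact this
  refine Integrable.mono' h1 ?_ ?_
  · apply Measurable.aestronglyMeasurable
    fun_prop
  · refine (ae_restrict_iff' measurableSet_Ioo).2 (Eventually.of_forall fun y hy => ?_)
    have h2 : 0 ≤ y ^ (-(s / 2)) := rpow_nonneg hy.1.le _
    have h3 : 0 ≤ (1 - y) ^ (s / 2) := rpow_nonneg (by linarith [hy.2]) _
    have h4 : (1 - y) ^ (s / 2) ≤ 1 := rpow_le_one (by linarith [hy.2]) (by linarith [hy.1]) (by linarith)
    rw [norm_of_nonneg (by positivity)]
    nlinarith

lemma betaA_pos {s : ℝ} (hs0 : 0 < s) (hs2 : s < 2) : 0 < betaA s := by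
  unfold betaA
  rw [setIntegral_pos_iff_support_of_nonneg_ae]
  · have : (Function.support fun y : ℝ => y ^ (-(s / 2)) * (1 - y) ^ (s / 2)) ∩ Ioo 0 1 = Ioo 0 1 := by
      rw [inter_eq_right]
      intro y hy
      have h2 : 0 < y ^ (-(s / 2)) := rpow_pos_of_pos hy.1 _
      have h3 : 0 < (1 - y) ^ (s / 2) := rpow_pos_of_pos (by linarith [hy.2]) _
      exact (mul_pos h2 h3).ne'
    rw [this]; simp
  · refine (ae_restrict_iff' measurableSet_Ioo).2 (Eventually.of_forall fun y hy => ?_)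
    have h2 : 0 ≤ y ^ (-(s / 2)) := rpow_nonneg hy.1.le _
    have h3 : 0 ≤ (1 - y) ^ (s / 2) := rpow_nonneg (by linarith [hy.2]) _
    exact mul_nonneg h2 h3
  · exact betaA_integrable hs0 hs2

lemma betaA_integrable' {s : ℝ} (hs0 : 0 < s) (hs2 : s < 2) :
    IntegrableOn (fun y : ℝ => y ^ (-(s / 2)) * (1 - y) ^ (s / 2) * y) (Ioo 0 1) := by
  refine Integrable.mono' (betaA_integrable hs0 hs2) ?_ ?_
  · apply Measurable.aestronglyMeasurable
    fun_prop
  · refine (ae_restrict_iff' measurableSet_Ioo).2 (Eventually.of_forall fun y hy => ?_)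
    have h2 : 0 ≤ y ^ (-(s / 2)) := rpow_nonneg hy.1.le _
    have h3 : 0 ≤ (1 - y) ^ (s / 2) := rpow_nonneg (by linarith [hy.2]) _
    have := hy.1.le
    rw [norm_of_nonneg (by positivity)]
    have := mul_nonneg h2 h3
    nlinarith [hy.2]

/-- The first moment of the Beta density, from integrating the derivative of
`y^{1-s/2} (1-y)^{1+s/2}`, which vanishes at both endpoints. -/
lemma betaA_moment {s : ℝ} (hs0 : 0 < s) (hs2 : s < 2) :
    ∫ y in Ioo (0 : ℝ) 1, y ^ (-(s / 2)) * (1 - y) ^ (s / 2) * y = (2 - s) / 4 * betaA s := by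
  have hI := betaA_integrable hs0 hs2
  have hI' := betaA_integrable' hs0 hs2
  have key : ∫ y in (0:ℝ)..1, (y ^ (-(s / 2)) * (1 - y) ^ (s / 2) * (1 - s / 2)
      - 2 * (y ^ (-(s / 2)) * (1 - y) ^ (s / 2) * y)) = 0 := by
    have h0 : IntervalIntegrable (fun y : ℝ => (y ^ (-(s / 2)) * (1 - y) ^ (s / 2) * (1 - s / 2)
      - 2 * (y ^ (-(s / 2)) * (1 - y) ^ (s / 2) * y))) volume 0 1 := by
      rw [intervalIntegrable_iff_integrableOn_Ioo_of_le zero_le_one]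
      exact (Integrable.mul_const hI _).sub (Integrable.const_mul hI' _)
    rw [intervalIntegral.integral_eq_sub_of_hasDerivAt_of_le zero_le_one
      (f := fun y : ℝ => y ^ (1 - s / 2) * (1 - y) ^ (1 + s / 2)) ?_ ?_ h0]
    · simp only [sub_self]
      rw [zero_rpow (by linarith), zero_rpow (by linarith)]; simp
    · apply ContinuousOn.mul
      · exact (continuous_id.rpow_const (fun _ => Or.inr (by linarith))).continuousOn
      · exact ((continuous_const.sub continuous_id).rpow_const
          (fun _ => Or.inr (by linarith))).continuousOn
    · intro y hy
      have hy1 : 0 < 1 - y := by linarith [hy.2]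
      have d1 : HasDerivAt (fun y : ℝ => y ^ (1 - s / 2)) ((1 - s / 2) * y ^ (1 - s / 2 - 1)) y :=
        hasDerivAt_rpow_const (Or.inl hy.1.ne')
      have d2 : HasDerivAt (fun y : ℝ => (1 - y) ^ (1 + s / 2))
          ((-1) * (1 + s / 2) * (1 - y) ^ (1 + s / 2 - 1)) y :=
        ((hasDerivAt_id y).const_sub 1).rpow_const (Or.inl hy1.ne')
      refine (d1.mul d2).congr_deriv ?_
      have e1 : y ^ (1 - s / 2) = y ^ (-(s / 2)) * y := by
        rw [sub_eq_neg_add, rpow_add hy.1, rpow_one]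
      have e2 : (1 - y) ^ (1 + s / 2) = (1 - y) ^ (s / 2) * (1 - y) := by
        rw [add_comm, rpow_add hy1, rpow_one]
      rw [e1, e2, show 1 - s / 2 - 1 = -(s / 2) by ring, show 1 + s / 2 - 1 = s / 2 by ring]
      ring
  rw [intervalIntegral.integral_of_le zero_le_one, integral_Ioc_eq_integral_Ioo,
    integral_sub (Integrable.mul_const hI _) (Integrable.const_mul hI' _),
    integral_mul_const, integral_const_mul] at key
  unfold betaA
  linarith

lemma lintegral_betaA {s : ℝ} (hs0 : 0 < s) (hs2 : s < 2) (c d : ℝ) (hc : 0 ≤ c) (hcd : 0 ≤ c + d) :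
    ∫⁻ y in Ioo (0 : ℝ) 1, ENNReal.ofReal (y ^ (-(s / 2)) * (1 - y) ^ (s / 2) * (c + d * y))
      = ENNReal.ofReal (betaA s * (c + d * ((2 - s) / 4))) := by
  have hI := betaA_integrable hs0 hs2
  have hI' := betaA_integrable' hs0 hs2
  have e : (fun y : ℝ => y ^ (-(s / 2)) * (1 - y) ^ (s / 2) * (c + d * y)) =
    fun y : ℝ => c * (y ^ (-(s / 2)) * (1 - y) ^ (s / 2)) +
      d * (y ^ (-(s / 2)) * (1 - y) ^ (s / 2) * y) := by ext y; ring
  rw [← ofReal_integral_eq_lintegral_ofReal]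
  · congr 1
    rw [e, integral_add (Integrable.const_mul hI _) (Integrable.const_mul hI' _),
      integral_const_mul, integral_const_mul, betaA_moment hs0 hs2]
    unfold betaA; ring
  · rw [e]; exact (Integrable.const_mul hI _).add (Integrable.const_mul hI' _)
  · refine (ae_restrict_iff' measurableSet_Ioo).2 (Eventually.of_forall fun y hy => ?_)
    have h2 : 0 ≤ y ^ (-(s / 2)) := rpow_nonneg hy.1.le _
    have h3 : 0 ≤ (1 - y) ^ (s / 2) := rpow_nonneg (by linarith [hy.2]) _
    have h4 : 0 ≤ c + d * y := by nlinarith [hy.1, hy.2]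
    exact mul_nonneg (mul_nonneg h2 h3) h4

/-- The Riesz potential of order `s - 1` on the line of the density `(1 - τ²)^{s/2}`. -/
def uPot (s t : ℝ) : ℝ≥0∞ :=
  ∫⁻ τ in Ioo (-1 : ℝ) 1, ENNReal.ofReal (|t - τ| ^ (1 - s) * (1 - τ ^ 2) ^ (s / 2))

lemma uPot_neg (s t : ℝ) : uPot s (-t) = uPot s t := by
  have h := lintegral_image_eq_lintegral_abs_deriv_mul (s := Ioo (-1 : ℝ) 1) (f := fun x : ℝ => -x)
    (f' := fun _ => -1) measurableSet_Ioo (fun x _ => (hasDerivAt_id x).neg.hasDerivWithinAt)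
    (neg_injective.injOn)
    (fun τ => ENNReal.ofReal (|-t - τ| ^ (1 - s) * (1 - τ ^ 2) ^ (s / 2)))
  unfold uPot
  have e : (fun x : ℝ => -x) '' Ioo (-1 : ℝ) 1 = Ioo (-1) 1 := by
    simp
  rw [e] at h
  rw [h]
  refine setLIntegral_congr_fun measurableSet_Ioo fun τ _ => ?_
  simp only [abs_neg, abs_one, ENNReal.ofReal_one, one_mul, neg_sq]
  rw [show -t - -τ = -(t - τ) by ring, abs_neg]

/-- Folding of an integral over `(-1,1)` onto `(0,1)`. -/
lemma lintegral_fold (F : ℝ → ℝ≥0∞) (hF : Measurable F) :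
    ∫⁻ v in Ioo (-1 : ℝ) 1, F v = ∫⁻ v in Ioo (0 : ℝ) 1, (F v + F (-v)) := by
  have h := lintegral_image_eq_lintegral_abs_deriv_mul (s := Ioo (0 : ℝ) 1) (f := fun x : ℝ => -x)
    (f' := fun _ => -1) measurableSet_Ioo (fun x _ => (hasDerivAt_id x).neg.hasDerivWithinAt)
    (neg_injective.injOn) F
  have e : (fun x : ℝ => -x) '' Ioo (0 : ℝ) 1 = Ioo (-1) 0 := by
    simp
  rw [e] at h
  simp only [abs_neg, abs_one, ENNReal.ofReal_one, one_mul] at h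
  rw [lintegral_add_left hF, ← h, add_comm]
  have e2 : Ioo (-1 : ℝ) 1 = Ioc (-1) 0 ∪ Ioo 0 1 := (Ioc_union_Ioo_eq_Ioo (by norm_num) (by norm_num)).symm
  rw [e2, lintegral_union measurableSet_Ioo, ]
  · congr 1
    exact setLIntegral_congr Ioo_ae_eq_Ioc.symm
  · rw [Set.disjoint_left]; intro x hx hx'; linarith [hx.2, hx'.1]

/-- Inside the interval the potential is a quadratic polynomial. The Möbius substitution
`τ = (t - v) / (1 - t v)` followed by `y = v² (1 - t²) / (1 - t² v²)` turns it into Beta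
integrals. -/
lemma uPot_inside {s : ℝ} (hs1 : 1 ≤ s) (hs2 : s < 2) {t : ℝ} (ht : |t| < 1) :
    uPot s t = ENNReal.ofReal (betaA s * (1 - (s - 1) * t ^ 2)) := by
  obtain ⟨ht1, ht2⟩ := abs_lt.1 ht
  set z := t ^ 2 with hz
  have hz1 : z < 1 := by nlinarith
  have hz0 : 0 ≤ z := sq_nonneg t
  have hpos : ∀ v ∈ Ioo (-1 : ℝ) 1, 0 < 1 - t * v := fun v hv => by
    nlinarith [hv.1, hv.2, mul_pos (sub_pos.2 ht2) (sub_pos.2 hv.2),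
      mul_pos (sub_pos.2 ht1) (sub_pos.2 hv.1), mul_pos (sub_pos.2 ht2) (sub_pos.2 hv.1),
      mul_pos (sub_pos.2 ht1) (sub_pos.2 hv.2)]
  -- The Möbius involution of `(-1, 1)`; it sends the singularity `τ = t` to `v = 0`.
  have h1 := lintegral_image_eq_lintegral_abs_deriv_mul (s := Ioo (-1 : ℝ) 1)
    (f := fun v : ℝ => (t - v) / (1 - t * v))
    (f' := fun v => -(1 - z) / (1 - t * v) ^ 2) measurableSet_Ioo
    (fun v hv => by
      have := (((hasDerivAt_id v).const_sub t).div (((hasDerivAt_id v).const_mul t).const_sub 1)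
        (hpos v hv).ne')
      refine (this.congr_deriv ?_).hasDerivWithinAt
      simp only [id, hz]; ring)
    (fun v hv w hw hvw => by
      have a := (hpos v hv).ne'
      have b := (hpos w hw).ne'
      simp only at hvw
      rw [div_eq_div_iff a b] at hvw
      have : (1 - z) * (v - w) = 0 := by rw [hz]; linear_combination -hvw
      rcases mul_eq_zero.1 this with h | h <;> linarith)
    (fun τ => ENNReal.ofReal (|t - τ| ^ (1 - s) * (1 - τ ^ 2) ^ (s / 2)))
  have himg : ∀ v ∈ Ioo (-1 : ℝ) 1, (t - v) / (1 - t * v) ∈ Ioo (-1 : ℝ) 1 := fun v hv => by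
    have := hpos v hv
    constructor
    · rw [lt_div_iff₀ this]; nlinarith [mul_pos (sub_pos.2 ht1) (sub_pos.2 hv.2)]
    · rw [div_lt_iff₀ this]; nlinarith [mul_pos (sub_pos.2 ht2) (sub_pos.2 hv.1)]
  have e1 : (fun v : ℝ => (t - v) / (1 - t * v)) '' Ioo (-1 : ℝ) 1 = Ioo (-1) 1 := by
    apply Subset.antisymm
    · rintro _ ⟨v, hv, rfl⟩; exact himg v hv
    · intro τ hτ
      refine ⟨_, himg τ hτ, ?_⟩
      have := (hpos τ hτ).ne'
      have h3 := (hpos _ (himg τ hτ)).ne'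
      simp only
      rw [div_eq_iff h3]
      field_simp
      ring
  rw [e1] at h1
  unfold uPot
  rw [h1]
  have h2 : ∀ v ∈ Ioo (-1 : ℝ) 1, ENNReal.ofReal |-(1 - z) / (1 - t * v) ^ 2| *
      ENNReal.ofReal (|t - (t - v) / (1 - t * v)| ^ (1 - s) *
        (1 - ((t - v) / (1 - t * v)) ^ 2) ^ (s / 2)) =
      ENNReal.ofReal (|v| ^ (1 - s) * (1 - v ^ 2) ^ (s / 2) * (1 - z) ^ (2 - s / 2)
        * (1 / (1 - t * v) ^ 3)) := by
    intro v hv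
    have hp := hpos v hv
    have hz' : 0 < 1 - z := by linarith
    have hv2 : 0 ≤ 1 - v ^ 2 := by nlinarith [hv.1, hv.2]
    rw [← ENNReal.ofReal_mul (abs_nonneg _)]
    congr 1
    have a1 : t - (t - v) / (1 - t * v) = v * (1 - z) / (1 - t * v) := by
      rw [hz]; field_simp; ring
    have a2 : 1 - ((t - v) / (1 - t * v)) ^ 2 = (1 - z) * (1 - v ^ 2) / (1 - t * v) ^ 2 := by
      rw [hz]; field_simp; ring
    have a0 : |-(1 - z) / (1 - t * v) ^ 2| = (1 - z) / (1 - t * v) ^ 2 := by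
      rw [neg_div, abs_neg, abs_of_pos (by positivity)]
    rw [a0, a1, a2, abs_div, abs_mul, abs_of_pos hp, abs_of_pos hz', div_rpow (by positivity) hp.le,
      mul_rpow (abs_nonneg _) hz'.le, div_rpow (by positivity) (by positivity),
      mul_rpow hz'.le hv2]
    have a3 : ((1 - t * v) ^ 2) ^ (s / 2) = (1 - t * v) * (1 - t * v) ^ (s - 1) := by
      rw [← rpow_natCast, ← rpow_mul hp.le]
      nth_rewrite 2 [← rpow_one (1 - t * v)]
      rw [← rpow_add hp]; congr 1; push_cast; ring
    have a4 : (1 - t * v) ^ (1 - s) = ((1 - t * v) ^ (s - 1))⁻¹ := by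
      rw [← rpow_neg hp.le]; congr 1; ring
    have a5 : (1 - z) ^ (2 - s / 2) = (1 - z) * (1 - z) ^ (1 - s) * (1 - z) ^ (s / 2) := by
      nth_rewrite 2 [← rpow_one (1 - z)]
      rw [← rpow_add hz', ← rpow_add hz']; congr 1; ring
    have a6 : 0 < (1 - t * v) ^ (s - 1) := rpow_pos_of_pos hp _
    rw [a3, a4, a5]
    field_simp
  rw [setLIntegral_congr_fun measurableSet_Ioo h2, lintegral_fold _ (by fun_prop)]
  -- The contributions of `v` and `-v` add up to an expression in `v²`, for which
  -- `y = (1 - z) v² / (1 - z v²)` is the natural variable.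
  have hposv : ∀ v ∈ Ioo (0 : ℝ) 1, 0 < 1 - z * v ^ 2 := fun v hv => by
    have : v ^ 2 < 1 := by nlinarith [hv.1, hv.2]
    nlinarith [sq_nonneg v]
  have h3 := lintegral_image_eq_lintegral_abs_deriv_mul (s := Ioo (0 : ℝ) 1)
    (f := fun v : ℝ => (1 - z) * v ^ 2 / (1 - z * v ^ 2))
    (f' := fun v => 2 * v * (1 - z) / (1 - z * v ^ 2) ^ 2) measurableSet_Ioo
    (fun v hv => by
      have := (((hasDerivAt_pow 2 v).const_mul (1 - z)).div
        (((hasDerivAt_pow 2 v).const_mul z).const_sub 1) (hposv v hv).ne')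
      refine (this.congr_deriv ?_).hasDerivWithinAt
      simp only [Nat.cast_ofNat]; ring)
    (fun v hv w hw hvw => by
      have a := (hposv v hv).ne'
      have b := (hposv w hw).ne'
      simp only at hvw
      rw [div_eq_div_iff a b] at hvw
      have : (1 - z) * ((v + w) * (v - w)) = 0 := by linear_combination hvw
      rcases mul_eq_zero.1 this with h | h
      · linarith
      rcases mul_eq_zero.1 h with h | h <;> linarith [hv.1, hw.1])
    (fun y => ENNReal.ofReal (y ^ (-(s / 2)) * (1 - y) ^ (s / 2) * ((1 - z) + 4 * z * y)))
  have e3 : (fun v : ℝ => (1 - z) * v ^ 2 / (1 - z * v ^ 2)) '' Ioo (0 : ℝ) 1 = Ioo 0 1 := by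
    apply Subset.antisymm
    · rintro _ ⟨v, hv, rfl⟩
      have := hposv v hv
      have h1 : 0 < 1 - z := by linarith
      have h2 := hv.1
      refine ⟨by positivity, ?_⟩
      rw [div_lt_one this]
      have : v ^ 2 < 1 := by nlinarith [hv.1, hv.2]
      nlinarith
    · intro y hy
      have h1 : 0 < 1 - z + z * y := by nlinarith [hy.1, hy.2]
      have hw : 0 < y / (1 - z + z * y) := div_pos hy.1 h1
      refine ⟨√(y / (1 - z + z * y)), ⟨Real.sqrt_pos.2 hw, ?_⟩, ?_⟩
      · rw [Real.sqrt_lt' one_pos, one_pow]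
        rw [div_lt_one h1]; nlinarith [hy.1, hy.2]
      · simp only
        rw [Real.sq_sqrt hw.le]
        have : 1 - z * (y / (1 - z + z * y)) = (1 - z) / (1 - z + z * y) := by
          field_simp; ring
        rw [this]
        have : 1 - z ≠ 0 := by linarith
        field_simp
  rw [e3] at h3
  have h4 : ∀ v ∈ Ioo (0 : ℝ) 1, ENNReal.ofReal |2 * v * (1 - z) / (1 - z * v ^ 2) ^ 2| *
      ENNReal.ofReal (((1 - z) * v ^ 2 / (1 - z * v ^ 2)) ^ (-(s / 2)) *
        (1 - (1 - z) * v ^ 2 / (1 - z * v ^ 2)) ^ (s / 2) *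
        ((1 - z) + 4 * z * ((1 - z) * v ^ 2 / (1 - z * v ^ 2)))) =
      ENNReal.ofReal (|v| ^ (1 - s) * (1 - v ^ 2) ^ (s / 2) * (1 - z) ^ (2 - s / 2)
        * (1 / (1 - t * v) ^ 3)) + ENNReal.ofReal (|-v| ^ (1 - s) * (1 - (-v) ^ 2) ^ (s / 2) *
          (1 - z) ^ (2 - s / 2) * (1 / (1 - t * (-v)) ^ 3)) := by
    intro v hv
    have hp := hposv v hv
    have hp1 : 0 < 1 - t * v := hpos v ⟨by linarith [hv.1], hv.2⟩
    have hp2 : 0 < 1 + t * v := by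
      have := hpos (-v) ⟨by linarith [hv.2], by linarith [hv.1]⟩
      linarith
    have hz' : 0 < 1 - z := by linarith
    have hv0 := hv.1
    have hv2 : 0 < 1 - v ^ 2 := by nlinarith [hv.1, hv.2]
    have hP : 1 - z * v ^ 2 = (1 - t * v) * (1 + t * v) := by rw [hz]; ring
    rw [abs_neg, neg_sq, mul_neg, sub_neg_eq_add, ← ENNReal.ofReal_mul (abs_nonneg _),
      ← ENNReal.ofReal_add (by positivity) (by positivity), abs_of_pos hv0,
      abs_of_pos (by positivity)]
    congr 1
    have a1 : 1 - (1 - z) * v ^ 2 / (1 - z * v ^ 2) = (1 - v ^ 2) / (1 - z * v ^ 2) := by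
      field_simp; ring
    have a3 : (v ^ 2) ^ (-(s / 2)) * v = v ^ (1 - s) := by
      rw [← rpow_natCast, ← rpow_mul hv0.le]
      nth_rewrite 2 [← rpow_one v]
      rw [← rpow_add hv0]; congr 1; push_cast; ring
    have a5 : (1 - z) ^ (2 - s / 2) = (1 - z) ^ (-(s / 2)) * (1 - z) ^ 2 := by
      rw [← rpow_natCast, ← rpow_add hz']; congr 1; push_cast; ring
    have a4 : (1 - z * v ^ 2) ^ (-(s / 2)) = ((1 - z * v ^ 2) ^ (s / 2))⁻¹ := rpow_neg hp.le _
    have a6 : 0 < (1 - z * v ^ 2) ^ (s / 2) := rpow_pos_of_pos hp _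
    rw [a1, div_rpow (by positivity) hp.le, div_rpow hv2.le hp.le, mul_rpow hz'.le (by positivity),
      a4, ← a3, a5]
    have a7 : (1 - z) + 4 * z * ((1 - z) * v ^ 2 / (1 - z * v ^ 2)) =
        (1 - z) * (1 + 3 * z * v ^ 2) / (1 - z * v ^ 2) := by field_simp; ring
    have a8 : 1 / (1 - t * v) ^ 3 + 1 / (1 + t * v) ^ 3 =
        2 * (1 + 3 * z * v ^ 2) / (1 - z * v ^ 2) ^ 3 := by
      rw [hP, hz]; field_simp; ring
    rw [a7, ← mul_add, a8]
    generalize (1 - z * v ^ 2) ^ (s / 2) = g at a6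
    field_simp
  rw [setLIntegral_congr_fun measurableSet_Ioo h4, lintegral_betaA (by linarith) hs2 _ _
    (by linarith) (by nlinarith)] at h3
  rw [← h3]
  congr 1
  ring

/-- The convex function `b ↦ b^{-r}` lies above its tangents. -/
lemma rpow_tangent {r b h : ℝ} (hr0 : 0 ≤ r) (hr1 : r ≤ 1) (hb : 0 < b) (hh : 0 ≤ h) :
    b ^ (-r) ≤ (b + h) ^ (-r) + r * h * b ^ (-r - 1) := by
  have hx : 0 ≤ h / b := by positivity
  have h1 : (1 + h / b) ^ r ≤ 1 + r * (h / b) :=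
    rpow_one_add_le_one_add_mul_self (by linarith) hr0 hr1
  have h2 : 0 < (1 + h / b) ^ r := by positivity
  have h3 : 1 - r * (h / b) ≤ (1 + h / b) ^ (-r) := by
    have h6 : (1 + h / b) ^ r * (1 + h / b) ^ (-r) = 1 := by
      rw [← rpow_add (by positivity)]; simp
    have h7 : 0 < (1 + h / b) ^ (-r) := by positivity
    have h8 : 0 ≤ r * (h / b) := by positivity
    by_contra hcon
    push Not at hcon
    nlinarith
  have h4 : b + h = b * (1 + h / b) := by field_simp
  rw [h4, mul_rpow hb.le (by positivity), rpow_sub_one hb.ne']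
  have : 0 < b ^ (-r) := rpow_pos_of_pos hb _
  have h5 : r * h * (b ^ (-r) / b) = b ^ (-r) * (r * (h / b)) := by ring
  rw [h5]
  nlinarith

/-- Outside the interval the potential dominates the same quadratic polynomial, by convexity
of `t ↦ (t - τ)^{1-s}` on `[1, ∞)`. -/
lemma uPot_outside {s : ℝ} (hs1 : 1 ≤ s) (hs2 : s < 2) {t : ℝ} (ht : 1 ≤ |t|) :
    ENNReal.ofReal (betaA s * (1 - (s - 1) * t ^ 2)) ≤ uPot s t := by
  wlog ht0 : 0 ≤ t generalizing t
  · have := this (t := -t) (by simpa using ht) (by linarith)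
    rwa [uPot_neg, neg_sq] at this
  rw [abs_of_nonneg ht0] at ht
  have hA := betaA_pos (by linarith : 0 < s) hs2
  have hsub : ∀ F : ℝ → ℝ≥0∞, ∫⁻ τ in Ioo (-1 : ℝ) 1, F τ
      = ∫⁻ y in Ioo (0 : ℝ) 1, ENNReal.ofReal 2 * F (1 - 2 * y) := by
    intro F
    have h := lintegral_image_eq_lintegral_abs_deriv_mul (s := Ioo (0 : ℝ) 1)
      (f := fun y : ℝ => 1 - 2 * y) (f' := fun _ => -2) measurableSet_Ioo
      (fun x _ => (((hasDerivAt_id x).const_mul 2).const_sub 1 |>.congr_deriv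
        (by norm_num)).hasDerivWithinAt)
      (fun x _ y _ h => by simp only at h; linarith) F
    have e : (fun y : ℝ => 1 - 2 * y) '' Ioo (0 : ℝ) 1 = Ioo (-1) 1 := by
      ext x; constructor
      · rintro ⟨y, hy, rfl⟩; constructor <;> linarith [hy.1, hy.2]
      · intro hx; exact ⟨(1 - x) / 2, ⟨by linarith [hx.2], by linarith [hx.1]⟩, by simp only; ring⟩
    rw [e] at h; rw [h]; norm_num
  have hU : uPot s t = ∫⁻ y in Ioo (0 : ℝ) 1, ENNReal.ofReal 2 *
      ENNReal.ofReal (|t - (1 - 2 * y)| ^ (1 - s) * (1 - (1 - 2 * y) ^ 2) ^ (s / 2)) := hsub _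
  have hb1 := lintegral_betaA (s := s) (by linarith) hs2 0 4 le_rfl (by norm_num)
  have hb2 := lintegral_betaA (s := s) (by linarith) hs2 (2 * (s - 1) * (t - 1)) 0
    (by have := sub_nonneg.2 hs1; have := sub_nonneg.2 ht; positivity)
    (by have := sub_nonneg.2 hs1; have := sub_nonneg.2 ht; positivity)
  have hle : ENNReal.ofReal (betaA s * (0 + 4 * ((2 - s) / 4))) ≤
      uPot s t + ENNReal.ofReal (betaA s * (2 * (s - 1) * (t - 1) + 0 * ((2 - s) / 4))) := by
    rw [← hb1, ← hb2, hU, ← lintegral_add_right _ (by fun_prop)]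
    refine setLIntegral_mono (by fun_prop) fun y hy => ?_
    have hy0 := hy.1
    have hy1 : 0 < 1 - y := by linarith [hy.2]
    rw [← ENNReal.ofReal_mul (by norm_num)]
    have hq : 0 < t - (1 - 2 * y) := by linarith
    have hs' := sub_nonneg.2 hs1
    have ht' := sub_nonneg.2 ht
    rw [abs_of_pos hq, ← ENNReal.ofReal_add]
    rotate_left
    · have : 0 ≤ 1 - (1 - 2 * y) ^ 2 := by nlinarith
      positivity
    · have := (rpow_pos_of_pos hy0 (-(s/2))).le
      positivity
    apply ENNReal.ofReal_le_ofReal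
    -- Replace `(t - τ)^{1-s}` by its tangent at `t = 1`, where `1 - τ = 2 y`.
    have T := rpow_tangent (r := s - 1) (b := 2 * y) (h := t - 1) hs' (by linarith) (by linarith) ht'
    rw [show 2 * y + (t - 1) = t - (1 - 2 * y) by ring, show -(s - 1) = 1 - s by ring] at T
    have q1 : 1 - (1 - 2 * y) ^ 2 = (2 * y) * (2 * (1 - y)) := by ring
    have q2 : (2 : ℝ) ^ (s / 2) * 2 ^ (s / 2) = 2 ^ s := by
      rw [← rpow_add (by norm_num)]; congr 1; ring
    rw [q1, mul_rpow (by positivity) (by positivity), mul_rpow (by norm_num) hy0.le,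
      mul_rpow (by norm_num) hy1.le]
    have q3 : (2 * y) ^ (1 - s) = 2 ^ (-s) * 2 * (y ^ (-(s/2)) * y ^ (-(s/2)) * y) := by
      rw [mul_rpow (by norm_num) hy0.le, ← rpow_add hy0, sub_eq_neg_add, rpow_add_one (by norm_num),
        rpow_add_one hy0.ne']
      ring_nf
    have q4 : (2 * y) ^ (1 - s - 1) = 2 ^ (-s) * (y ^ (-(s/2)) * y ^ (-(s/2))) := by
      rw [mul_rpow (by norm_num) hy0.le, ← rpow_add hy0]
      ring_nf
    have q5 : y ^ (-(s/2)) * y ^ (s/2) = 1 := by rw [← rpow_add hy0]; simp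
    have q6 : (2 : ℝ) ^ (-s) * 2 ^ s = 1 := by rw [← rpow_add (by norm_num)]; simp
    rw [q3, q4] at T
    have P : 0 < 2 * ((2 : ℝ) ^ (s / 2) * y ^ (s / 2) * (2 ^ (s / 2) * (1 - y) ^ (s / 2))) := by
      positivity
    have := mul_le_mul_of_nonneg_left T P.le
    set α := y ^ (-(s/2))
    set β := y ^ (s/2)
    set γ := (1 - y) ^ (s/2)
    set U := (t - (1 - 2 * y)) ^ (1 - s)
    have l1 : 2 * (2 ^ (s / 2) * β * (2 ^ (s / 2) * γ)) * (2 ^ (-s) * 2 * (α * α * y)) =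
       α * γ * (4 * y) := by
      linear_combination (4 * β * γ * α * α * y * 2 ^ (-s)) * q2 + (4 * β * γ * α * α * y) * q6 +
       (4 * γ * α * y) * q5
    have l2 : 2 * (2 ^ (s / 2) * β * (2 ^ (s / 2) * γ)) * ((s - 1) * (t - 1) * (2 ^ (-s) * (α * α)))
       = α * γ * (2 * (s - 1) * (t - 1)) := by
      linear_combination (2 * (s - 1) * (t - 1) * β * γ * α * α * 2 ^ (-s)) * q2 +
        (2 * (s - 1) * (t - 1) * β * γ * α * α) * q6 + (2 * (s - 1) * (t - 1) * γ * α) * q5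
    rw [mul_add, l1, l2] at this
    simp only [zero_add, zero_mul, add_zero]
    linarith
  have hs' := sub_nonneg.2 hs1
  have ht' := sub_nonneg.2 ht
  have h7 : ENNReal.ofReal (betaA s * (1 - (s - 1) * t ^ 2)) +
      ENNReal.ofReal (betaA s * (2 * (s - 1) * (t - 1) + 0 * ((2 - s) / 4))) ≤
      uPot s t + ENNReal.ofReal (betaA s * (2 * (s - 1) * (t - 1) + 0 * ((2 - s) / 4))) := by
    rcases le_or_gt 0 (betaA s * (1 - (s - 1) * t ^ 2)) with h | h
    · refine le_trans ?_ hle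
      rw [← ENNReal.ofReal_add h (by positivity)]
      apply ENNReal.ofReal_le_ofReal
      -- The tangent bound exceeds the polynomial by exactly this square.
      have : 0 ≤ betaA s * ((s - 1) * (t - 1) ^ 2) := by positivity
      nlinarith
    · rw [ENNReal.ofReal_of_nonpos h.le, zero_add]
      exact le_add_self
  exact (ENNReal.add_le_add_iff_right ENNReal.ofReal_ne_top).1 h7

/-! ### The repulsive kernel -/

lemma nrm_sq (x : ℝ × ℝ) : nrm x ^ 2 = x.1 ^ 2 + x.2 ^ 2 := Real.sq_sqrt (by positivity)

lemma nrm_nonneg (x : ℝ × ℝ) : 0 ≤ nrm x := Real.sqrt_nonneg _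

lemma nrm_pos {x : ℝ × ℝ} (hx : x ≠ 0) : 0 < nrm x := by
  apply Real.sqrt_pos.2
  by_contra h
  push Not at h
  apply hx
  ext <;> simp <;> nlinarith [sq_nonneg x.1, sq_nonneg x.2]

@[fun_prop]
lemma continuous_nrm : Continuous nrm := by unfold nrm; fun_prop

lemma nrm_polar {r : ℝ} (hr : 0 ≤ r) (α : ℝ) : nrm (r * cos α, r * sin α) = r := by
  unfold nrm
  rw [show (r * cos α) ^ 2 + (r * sin α) ^ 2 = r ^ 2 * (cos α ^ 2 + sin α ^ 2) by ring,
    cos_sq_add_sin_sq, mul_one, Real.sqrt_sq hr]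

lemma ang_coe (x : ℝ × ℝ) : (ang x : Real.Angle) = (Complex.arg ⟨x.1, x.2⟩ : Real.Angle) := by
  unfold ang
  split_ifs with h
  · rw [h, Real.Angle.coe_neg, Real.Angle.neg_coe_pi]
  · rfl

lemma Om_coe {Ω : ℝ → ℝ} (hper : ∀ θ, Ω (θ + 2 * π) = Ω θ) {α β : ℝ}
    (h : (α : Real.Angle) = β) : Ω α = Ω β := by
  obtain ⟨n, hn⟩ := Real.Angle.angle_eq_iff_two_pi_dvd_sub.1 h
  have : α = β + n * (2 * π) := by linarith
  rw [this]
  exact (show Function.Periodic Ω (2 * π) from hper).int_mul n β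

lemma Om_ang_polar {Ω : ℝ → ℝ} (hper : ∀ θ, Ω (θ + 2 * π) = Ω θ) {r : ℝ} (hr : 0 < r) (α : ℝ) :
    Ω (ang (r * cos α, r * sin α)) = Ω α := by
  apply Om_coe hper
  rw [ang_coe]
  have := Complex.arg_mul_cos_add_sin_mul_I_coe_angle hr (α : Real.Angle)
  rw [← this]
  congr 2
  apply Complex.ext <;> simp [Complex.cos_ofReal_re, Complex.sin_ofReal_re]

lemma polar_repr {x : ℝ × ℝ} : x = (nrm x * cos (ang x), nrm x * sin (ang x)) := by
  have h := ang_coe x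
  have hc : cos (ang x) = cos (Complex.arg ⟨x.1, x.2⟩) := by
    rw [← Real.Angle.cos_coe, h, Real.Angle.cos_coe]
  have hs : sin (ang x) = sin (Complex.arg ⟨x.1, x.2⟩) := by
    rw [← Real.Angle.sin_coe, h, Real.Angle.sin_coe]
  have hn : nrm x = ‖(⟨x.1, x.2⟩ : ℂ)‖ := by
    rw [Complex.norm_def, Complex.normSq_mk, nrm]; congr 1; ring
  rw [hc, hs, hn]
  ext
  · exact (Complex.norm_mul_cos_arg (⟨x.1, x.2⟩ : ℂ)).symm
  · exact (Complex.norm_mul_sin_arg (⟨x.1, x.2⟩ : ℂ)).symm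

lemma continuousOn_Om_ang {Ω : ℝ → ℝ} (hc : Continuous Ω) (hper : ∀ θ, Ω (θ + 2 * π) = Ω θ) :
    ContinuousOn (fun x => Ω (ang x)) {0}ᶜ := by
  have hp : Function.Periodic Ω (2 * π) := hper
  have e : (fun x => Ω (ang x)) =
      fun x : ℝ × ℝ => hp.lift ((Complex.arg ⟨x.1, x.2⟩ : Real.Angle)) := by
    ext x
    rw [← ang_coe]; exact (hp.lift_coe _).symm
  rw [e]
  have hl : Continuous (hp.lift) := by
    apply continuous_coinduced_dom.2
    exact hc
  intro x hx
  apply ContinuousAt.continuousWithinAt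
  have h1 : ContinuousAt (fun x : ℝ × ℝ => (⟨x.1, x.2⟩ : ℂ)) x :=
    (Complex.equivRealProdCLM.symm.continuous).continuousAt
  have h2 : (⟨x.1, x.2⟩ : ℂ) ≠ 0 := by
    intro h
    apply hx
    rw [Complex.ext_iff] at h
    exact Prod.ext h.1 h.2
  exact hl.continuousAt.comp (ContinuousAt.comp (f := fun x : ℝ × ℝ => (⟨x.1, x.2⟩ : ℂ))
    (Complex.continuousAt_arg_coe_angle h2) h1)

/-- The real-valued repulsive kernel `|x|^{-s} Ω(θ(x))`. -/
def kap (s : ℝ) (Ω : ℝ → ℝ) (x : ℝ × ℝ) : ℝ := nrm x ^ (-s) * Ω (ang x)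

/-- The repulsive kernel with values in `[0,∞]`, infinite at the origin. -/
def Krep (s : ℝ) (Ω : ℝ → ℝ) (x : ℝ × ℝ) : ℝ≥0∞ := if x = 0 then ⊤ else ENNReal.ofReal (kap s Ω x)

lemma kap_polar {s : ℝ} {Ω : ℝ → ℝ} (hper : ∀ θ, Ω (θ + 2 * π) = Ω θ) {r : ℝ} (hr : 0 < r) (α : ℝ) :
    kap s Ω (r * cos α, r * sin α) = r ^ (-s) * Ω α := by
  rw [kap, nrm_polar hr.le, Om_ang_polar hper hr]

lemma kap_smul {s : ℝ} {Ω : ℝ → ℝ} (hper : ∀ θ, Ω (θ + 2 * π) = Ω θ) {r : ℝ} (hr : 0 < r)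
    (x : ℝ × ℝ) (hx : x ≠ 0) : kap s Ω (r * x.1, r * x.2) = r ^ (-s) * kap s Ω x := by
  have hn := nrm_pos hx
  have h1 : x.1 = nrm x * cos (ang x) := congrArg Prod.fst (polar_repr (x := x))
  have h2 : x.2 = nrm x * sin (ang x) := congrArg Prod.snd (polar_repr (x := x))
  have e : (r * x.1, r * x.2) = ((r * nrm x) * cos (ang x), (r * nrm x) * sin (ang x)) := by
    rw [mul_assoc, mul_assoc, ← h1, ← h2]
  rw [e, kap_polar hper (by positivity), mul_rpow hr.le hn.le, kap]; ring

lemma kap_neg {s : ℝ} {Ω : ℝ → ℝ} (hper : ∀ θ, Ω (θ + 2 * π) = Ω θ)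
    (hpi : ∀ θ, Ω (θ + π) = Ω θ) (x : ℝ × ℝ) : kap s Ω (-x) = kap s Ω x := by
  rcases eq_or_ne x 0 with rfl | hx
  · simp
  have hn := nrm_pos hx
  have h1 : x.1 = nrm x * cos (ang x) := congrArg Prod.fst (polar_repr (x := x))
  have h2 : x.2 = nrm x * sin (ang x) := congrArg Prod.snd (polar_repr (x := x))
  have e : -x = (nrm x * cos (ang x + π), nrm x * sin (ang x + π)) := by
    rw [cos_add_pi, sin_add_pi, mul_neg, mul_neg, ← h1, ← h2]; rfl
  rw [e, kap_polar hper hn, hpi, kap]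

lemma kap_reflect {s : ℝ} {Ω : ℝ → ℝ} (hper : ∀ θ, Ω (θ + 2 * π) = Ω θ)
    (hsymm : ∀ θ, Ω (-θ) = Ω θ) (x : ℝ × ℝ) : kap s Ω (x.1, -x.2) = kap s Ω x := by
  rcases eq_or_ne x 0 with rfl | hx
  · simp [show ((0 : ℝ), (0 : ℝ)) = 0 from rfl]
  have hn := nrm_pos hx
  have h1 : x.1 = nrm x * cos (ang x) := congrArg Prod.fst (polar_repr (x := x))
  have h2 : x.2 = nrm x * sin (ang x) := congrArg Prod.snd (polar_repr (x := x))
  have e : (x.1, -x.2) = (nrm x * cos (-ang x), nrm x * sin (-ang x)) := by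
    rw [cos_neg, sin_neg, mul_neg, ← h1, ← h2]
  rw [e, kap_polar hper hn, hsymm, kap]

lemma continuousOn_kap {s : ℝ} {Ω : ℝ → ℝ} (hc : Continuous Ω) (hper : ∀ θ, Ω (θ + 2 * π) = Ω θ) :
    ContinuousOn (kap s Ω) {0}ᶜ := by
  apply ContinuousOn.mul _ (continuousOn_Om_ang hc hper)
  apply ContinuousOn.rpow_const continuous_nrm.continuousOn
  intro x hx
  exact Or.inl (nrm_pos hx).ne'

lemma kap_pos {s : ℝ} {Ω : ℝ → ℝ} (hpos : ∀ θ, 0 < Ω θ) {x : ℝ × ℝ} (hx : x ≠ 0) :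
    0 < kap s Ω x := mul_pos (rpow_pos_of_pos (nrm_pos hx) _) (hpos _)

@[fun_prop]
lemma measurable_nrm : Measurable nrm := continuous_nrm.measurable

@[fun_prop]
lemma measurable_ang : Measurable ang := by
  unfold ang
  have : Measurable (fun x : ℝ × ℝ => Complex.arg ⟨x.1, x.2⟩) :=
    Complex.measurable_arg.comp (Complex.equivRealProdCLM.symm.continuous).measurable
  exact Measurable.ite (this (measurableSet_singleton π)) measurable_const this

lemma measurable_Krep {s : ℝ} {Ω : ℝ → ℝ} (hc : Continuous Ω) : Measurable (Krep s Ω) := by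
  refine Measurable.ite (measurableSet_singleton 0) measurable_const ?_
  unfold kap
  have := hc.measurable
  fun_prop

lemma Krep_neg {s : ℝ} {Ω : ℝ → ℝ} (hper : ∀ θ, Ω (θ + 2 * π) = Ω θ)
    (hpi : ∀ θ, Ω (θ + π) = Ω θ) (x : ℝ × ℝ) : Krep s Ω (-x) = Krep s Ω x := by
  unfold Krep
  rw [kap_neg hper hpi]
  simp

lemma Wkernel_eq {s : ℝ} {Ω : ℝ → ℝ} (hpos : ∀ θ, 0 < Ω θ) (x : ℝ × ℝ) :
    Wkernel s Ω x = Krep s Ω x + ENNReal.ofReal (nrm x ^ 2) := by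
  unfold Wkernel Krep
  split_ifs with h
  · simp
  · rw [← ENNReal.ofReal_add (kap_pos hpos h).le (sq_nonneg _)]; rfl

/-! ### Integration along lines -/

lemma C2_pos {s : ℝ} (hs1 : 1 ≤ s) (hs2 : s < 2) : 0 < C2 s := by
  have : 0 < sin (s * π / 2) := sin_pos_of_pos_of_lt_pi (by positivity) (by nlinarith [pi_pos])
  unfold C2; positivity

lemma R2_pos {s : ℝ} (hs1 : 1 ≤ s) (hs2 : s < 2) : 0 < R2 s := by
  have : 0 < sin (s * π / 2) := sin_pos_of_pos_of_lt_pi (by positivity) (by nlinarith [pi_pos])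
  unfold R2; positivity

lemma measurable_rho2 (s : ℝ) : Measurable (rho2 s) := by unfold rho2; fun_prop

lemma rho2_nonneg {s : ℝ} (hs1 : 1 ≤ s) (hs2 : s < 2) (x : ℝ × ℝ) : 0 ≤ rho2 s x := by
  have := C2_pos hs1 hs2
  unfold rho2; positivity

/-- The Riesz-weighted integral of `ρ₂` along the line through `X` with direction `e_α`. -/
def lineInt (s : ℝ) (X : ℝ × ℝ) (α : ℝ) : ℝ≥0∞ :=
  ∫⁻ t : ℝ, ENNReal.ofReal (|t| ^ (1 - s)) *
    ENNReal.ofReal (rho2 s (X.1 - t * cos α, X.2 - t * sin α))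

/-- The restriction of `ρ₂` to a line is an affine copy of `(1 - τ²)^{s/2}`. -/
lemma lineInt_eq {s : ℝ} (hs1 : 1 ≤ s) (hs2 : s < 2) (X : ℝ × ℝ) (α : ℝ) {ℓ : ℝ} (hℓ : 0 < ℓ)
    (h : ℓ ^ 2 = R2 s ^ 2 - nrm X ^ 2 + (X.1 * cos α + X.2 * sin α) ^ 2) :
    lineInt s X α = ENNReal.ofReal (C2 s * ℓ ^ 2) *
      uPot s ((X.1 * cos α + X.2 * sin α) / ℓ) := by
  set d := X.1 * cos α + X.2 * sin α with hd
  have hC := C2_pos hs1 hs2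
  have key : ∀ t : ℝ, R2 s ^ 2 - nrm (X.1 - t * cos α, X.2 - t * sin α) ^ 2 = ℓ ^ 2 - (t - d) ^ 2 := by
    intro t
    rw [h, nrm_sq, nrm_sq, hd]
    have := cos_sq_add_sin_sq α
    simp only
    linear_combination -t ^ 2 * this
  have h1 := lintegral_image_eq_lintegral_abs_deriv_mul (s := Ioo (-1 : ℝ) 1)
    (f := fun τ : ℝ => d - ℓ * τ) (f' := fun _ => -ℓ) measurableSet_Ioo
    (fun x _ => (((hasDerivAt_id x).const_mul ℓ).const_sub d |>.congr_deriv
      (by simp)).hasDerivWithinAt)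
    (fun x _ y _ h => by
      have : ℓ * (x - y) = 0 := by simp only at h; linarith
      rcases mul_eq_zero.1 this with h | h <;> linarith)
    (fun t => ENNReal.ofReal (|t| ^ (1 - s)) *
      ENNReal.ofReal (rho2 s (X.1 - t * cos α, X.2 - t * sin α)))
  have h2 : lineInt s X α = ∫⁻ t in (fun τ : ℝ => d - ℓ * τ) '' Ioo (-1 : ℝ) 1,
      ENNReal.ofReal (|t| ^ (1 - s)) *
      ENNReal.ofReal (rho2 s (X.1 - t * cos α, X.2 - t * sin α)) := by
    have e : (fun τ : ℝ => d - ℓ * τ) '' Ioo (-1 : ℝ) 1 = Ioo (d - ℓ) (d + ℓ) := by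
      ext x; constructor
      · rintro ⟨y, hy, rfl⟩; constructor <;> nlinarith [hy.1, hy.2]
      · intro hx
        refine ⟨(d - x) / ℓ, ⟨?_, ?_⟩, by simp only; field_simp; ring⟩
        · rw [lt_div_iff₀ hℓ]; linarith [hx.2]
        · rw [div_lt_iff₀ hℓ]; linarith [hx.1]
    rw [e, ← lintegral_indicator measurableSet_Ioo, lineInt]
    congr 1
    ext t
    by_cases ht : t ∈ Ioo (d - ℓ) (d + ℓ)
    · rw [indicator_of_mem ht]
    · rw [indicator_of_notMem ht, rho2, key, max_eq_right, zero_rpow (by linarith)]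
      · simp
      · by_contra hcon
        push Not at hcon
        have := abs_lt_of_sq_lt_sq (show (t - d) ^ 2 < ℓ ^ 2 by linarith) hℓ.le
        rw [abs_lt] at this
        exact ht ⟨by linarith, by linarith⟩
  rw [h2, h1, uPot, ← lintegral_const_mul _ (by fun_prop)]
  refine setLIntegral_congr_fun measurableSet_Ioo fun τ hτ => ?_
  have hτ2 : 0 ≤ 1 - τ ^ 2 := by nlinarith [hτ.1, hτ.2]
  rw [← ENNReal.ofReal_mul (by positivity), ← ENNReal.ofReal_mul (by positivity),
    ← ENNReal.ofReal_mul (by positivity)]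
  congr 1
  rw [rho2, key, show ℓ ^ 2 - (d - ℓ * τ - d) ^ 2 = ℓ ^ 2 * (1 - τ ^ 2) by ring,
    max_eq_left (by positivity), mul_rpow (by positivity) hτ2,
    show d - ℓ * τ = ℓ * (d / ℓ - τ) by field_simp, abs_mul, abs_neg, abs_of_pos hℓ,
    mul_rpow hℓ.le (abs_nonneg _)]
  have e1 : (ℓ ^ 2) ^ (s / 2) = ℓ ^ s := by
    rw [← rpow_natCast, ← rpow_mul hℓ.le]; congr 1; push_cast; ring
  have e2 : ℓ ^ s * ℓ ^ (1 - s) = ℓ := by rw [← rpow_add hℓ]; simp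
  rw [e1]
  linear_combination (ℓ * |d / ℓ - τ| ^ (1 - s) * C2 s * (1 - τ ^ 2) ^ (s / 2)) * e2

/-- The quadratic polynomial that the line integral equals inside the disc. -/
def lineQ (s : ℝ) (X : ℝ × ℝ) (α : ℝ) : ℝ :=
  C2 s * betaA s * (R2 s ^ 2 - nrm X ^ 2 + (2 - s) * (X.1 * cos α + X.2 * sin α) ^ 2)

lemma lineInt_ge {s : ℝ} (hs1 : 1 ≤ s) (hs2 : s < 2) (X : ℝ × ℝ) (α : ℝ) :
    ENNReal.ofReal (lineQ s X α) ≤ lineInt s X α := by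
  have hC := C2_pos hs1 hs2
  have hA := betaA_pos (by linarith : 0 < s) hs2
  set d := X.1 * cos α + X.2 * sin α with hd
  rcases le_or_gt (R2 s ^ 2 - nrm X ^ 2 + d ^ 2) 0 with h | h
  · rw [ENNReal.ofReal_of_nonpos]
    · exact bot_le
    · unfold lineQ
      rw [← hd]
      have : R2 s ^ 2 - nrm X ^ 2 + (2 - s) * d ^ 2 ≤ 0 := by nlinarith [sq_nonneg d]
      exact mul_nonpos_of_nonneg_of_nonpos (by positivity) this
  · have hℓ := Real.sqrt_pos.2 h
    rw [lineInt_eq hs1 hs2 X α hℓ (Real.sq_sqrt h.le), ← hd]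
    set ℓ := √(R2 s ^ 2 - nrm X ^ 2 + d ^ 2)
    have hq : ℓ ^ 2 = R2 s ^ 2 - nrm X ^ 2 + d ^ 2 := Real.sq_sqrt h.le
    have e : lineQ s X α = (C2 s * ℓ ^ 2) * (betaA s * (1 - (s - 1) * (d / ℓ) ^ 2)) := by
      rw [lineQ, ← hd]
      have : ℓ ^ 2 * (d / ℓ) ^ 2 = d ^ 2 := by field_simp
      linear_combination -(C2 s * betaA s) * hq + (C2 s * betaA s * (s - 1)) * this
    rw [e, ENNReal.ofReal_mul (by positivity)]
    gcongr
    rcases lt_or_ge |d / ℓ| 1 with h1 | h1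
    · rw [uPot_inside hs1 hs2 h1]
    · exact uPot_outside hs1 hs2 h1

lemma lineInt_inside {s : ℝ} (hs1 : 1 ≤ s) (hs2 : s < 2) {X : ℝ × ℝ} (hX : nrm X < R2 s) (α : ℝ) :
    lineInt s X α = ENNReal.ofReal (lineQ s X α) := by
  have hC := C2_pos hs1 hs2
  set d := X.1 * cos α + X.2 * sin α with hd
  have h0 : 0 < R2 s ^ 2 - nrm X ^ 2 := by nlinarith [nrm_nonneg X]
  have h : 0 < R2 s ^ 2 - nrm X ^ 2 + d ^ 2 := by positivity
  have hℓ := Real.sqrt_pos.2 h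
  rw [lineInt_eq hs1 hs2 X α hℓ (Real.sq_sqrt h.le), ← hd]
  set ℓ := √(R2 s ^ 2 - nrm X ^ 2 + d ^ 2)
  have hq : ℓ ^ 2 = R2 s ^ 2 - nrm X ^ 2 + d ^ 2 := Real.sq_sqrt h.le
  have e : lineQ s X α = (C2 s * ℓ ^ 2) * (betaA s * (1 - (s - 1) * (d / ℓ) ^ 2)) := by
    rw [lineQ, ← hd]
    have : ℓ ^ 2 * (d / ℓ) ^ 2 = d ^ 2 := by field_simp
    linear_combination -(C2 s * betaA s) * hq + (C2 s * betaA s * (s - 1)) * this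
  have hlt : |d / ℓ| < 1 := by
    rw [abs_div, abs_of_pos hℓ, div_lt_one hℓ]
    exact abs_lt_of_sq_lt_sq (by linarith) hℓ.le
  rw [e, uPot_inside hs1 hs2 hlt, ← ENNReal.ofReal_mul (by positivity)]

lemma lintegral_fold_Ioi (F : ℝ → ℝ≥0∞) (hF : Measurable F) :
    ∫⁻ t, F t = ∫⁻ t in Ioi (0 : ℝ), (F t + F (-t)) := by
  have h := lintegral_image_eq_lintegral_abs_deriv_mul (s := Ioi (0 : ℝ)) (f := fun x : ℝ => -x)
    (f' := fun _ => -1) measurableSet_Ioi (fun x _ => (hasDerivAt_id x).neg.hasDerivWithinAt)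
    (neg_injective.injOn) F
  have e : (fun x : ℝ => -x) '' Ioi (0 : ℝ) = Iio 0 := by simp
  rw [e] at h
  simp only [abs_neg, abs_one, ENNReal.ofReal_one, one_mul] at h
  rw [lintegral_add_left hF, ← h, ← lintegral_add_compl F (measurableSet_Ioi (a := (0:ℝ))), compl_Ioi]
  congr 1
  exact setLIntegral_congr Iio_ae_eq_Iic.symm

lemma lintegral_polar (f : ℝ × ℝ → ℝ≥0∞) (hf : Measurable f) :
    ∫⁻ x, f x = ∫⁻ α in Ioo (-π) π, ∫⁻ r in Ioi (0 : ℝ),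
      ENNReal.ofReal r * f (r * cos α, r * sin α) := by
  rw [← lintegral_comp_polarCoord_symm, polarCoord_target, Measure.volume_eq_prod,
    ← Measure.prod_restrict, lintegral_prod_symm]
  · rfl
  · apply Measurable.aemeasurable
    have : Measurable (fun p : ℝ × ℝ => (p.1 * cos p.2, p.1 * sin p.2)) := by fun_prop
    simp only [smul_eq_mul, polarCoord_symm_apply]
    exact (by fun_prop : Measurable fun p : ℝ × ℝ => ENNReal.ofReal p.1).mul (hf.comp this)

/-- The weight of the direction `e_α` after rescaling the axes by `a` and `b`. -/
def kw (s : ℝ) (Ω : ℝ → ℝ) (a b α : ℝ) : ℝ := kap s Ω (a * cos α, b * sin α)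

lemma rhoAB_eq (s a b : ℝ) :
    rhoAB s a b = Measure.map (fun x : ℝ × ℝ => (a * x.1, b * x.2)) (rho2meas s) := by
  simp [rhoAB, rhoE, Rot]

lemma trig_ne {a b : ℝ} (ha : 0 < a) (hb : 0 < b) (α : ℝ) : ((a * cos α, b * sin α) : ℝ × ℝ) ≠ 0 := by
  intro h
  have h1 : a * cos α = 0 := congrArg Prod.fst h
  have h2 : b * sin α = 0 := congrArg Prod.snd h
  have h3 : cos α = 0 := by rcases mul_eq_zero.1 h1 with h | h <;> [linarith; exact h]
  have h4 : sin α = 0 := by rcases mul_eq_zero.1 h2 with h | h <;> [linarith; exact h]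
  have := cos_sq_add_sin_sq α
  rw [h3, h4] at this; norm_num at this

/-- The repulsive potential of `ρ_{a,b}` is a superposition of one-dimensional potentials. -/
lemma potential_eq {s : ℝ} {Ω : ℝ → ℝ} (hc : Continuous Ω)
    (hper : ∀ θ, Ω (θ + 2 * π) = Ω θ) (hpi : ∀ θ, Ω (θ + π) = Ω θ)
    {a b : ℝ} (ha : 0 < a) (hb : 0 < b) (X : ℝ × ℝ) :
    2 * ∫⁻ y, Krep s Ω ((a * X.1, b * X.2) - y) ∂(rhoAB s a b) =
      ∫⁻ α in Ioo (-π) π, ENNReal.ofReal (kw s Ω a b α) * lineInt s X α := by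
  have mK := measurable_Krep (s := s) hc
  have mr := measurable_rho2 s
  rw [rhoAB_eq, lintegral_map (by fun_prop) (by fun_prop), rho2meas,
    lintegral_withDensity_eq_lintegral_mul _ (by fun_prop) (by fun_prop)]
  simp only [Pi.mul_apply]
  set f : ℝ × ℝ → ℝ≥0∞ := fun w => ENNReal.ofReal (rho2 s (X - w)) * Krep s Ω (a * w.1, b * w.2)
    with hf
  have mf : Measurable f := by
    have : Measurable fun w : ℝ × ℝ => Krep s Ω (a * w.1, b * w.2) := mK.comp (by fun_prop)
    exact (by fun_prop : Measurable fun w : ℝ × ℝ => ENNReal.ofReal (rho2 s (X - w))).mul this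
  have h1 : ∫⁻ z : ℝ × ℝ, ENNReal.ofReal (rho2 s z) * Krep s Ω ((a * X.1, b * X.2) - (a * z.1, b * z.2))
      = ∫⁻ w, f w := by
    rw [← lintegral_sub_left_eq_self f X]
    congr 1; ext z
    simp only [hf, sub_sub_cancel, Prod.fst_sub, Prod.snd_sub, Prod.mk_sub_mk, mul_sub]
  have h2 : ∫⁻ w, f (-w) = ∫⁻ w, f w := lintegral_neg_eq_self f
  rw [h1, two_mul]
  nth_rewrite 2 [← h2]
  rw [← lintegral_add_left mf, lintegral_polar _ (by fun_prop)]
  refine setLIntegral_congr_fun measurableSet_Ioo fun α _ => ?_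
  rw [lineInt, lintegral_fold_Ioi _ (by fun_prop), ← lintegral_const_mul _ (by fun_prop)]
  refine setLIntegral_congr_fun measurableSet_Ioi fun r (hr : 0 < r) => ?_
  simp only [hf, Prod.neg_mk]
  have hne := trig_ne ha hb α
  have e1 : kap s Ω (a * (r * cos α), b * (r * sin α)) = r ^ (-s) * kw s Ω a b α := by
    rw [kw, ← kap_smul hper hr _ hne]; congr 1; ext <;> simp only <;> ring
  have hne' : ((a * (r * cos α), b * (r * sin α)) : ℝ × ℝ) ≠ 0 := by
    intro h
    apply hne
    have h1 : a * (r * cos α) = 0 := congrArg Prod.fst h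
    have h2 : b * (r * sin α) = 0 := congrArg Prod.snd h
    ext
    · simp only [Prod.fst_zero]
      have : r * (a * cos α) = 0 := by linarith
      exact (mul_eq_zero.1 this).resolve_left hr.ne'
    · simp only [Prod.snd_zero]
      have : r * (b * sin α) = 0 := by linarith
      exact (mul_eq_zero.1 this).resolve_left hr.ne'
  have e2 : Krep s Ω (a * (r * cos α), b * (r * sin α)) =
      ENNReal.ofReal (r ^ (-s)) * ENNReal.ofReal (kw s Ω a b α) := by
    rw [Krep, if_neg hne', e1, ENNReal.ofReal_mul (by positivity)]
  have e3 : Krep s Ω (a * -(r * cos α), b * -(r * sin α)) =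
      ENNReal.ofReal (r ^ (-s)) * ENNReal.ofReal (kw s Ω a b α) := by
    rw [← e2, ← Krep_neg hper hpi]; simp
  rw [e2, e3, abs_neg, abs_of_pos hr]
  have e4 : ENNReal.ofReal (r ^ (1 - s)) = ENNReal.ofReal r * ENNReal.ofReal (r ^ (-s)) := by
    rw [← ENNReal.ofReal_mul hr.le]; congr 1
    rw [sub_eq_add_neg, rpow_add hr, rpow_one]
  have e5 : X - (r * cos α, r * sin α) = (X.1 - r * cos α, X.2 - r * sin α) := rfl
  have e6 : X - (-(r * cos α), -(r * sin α)) = (X.1 - -r * cos α, X.2 - -r * sin α) := by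
    ext <;> simp
  rw [e4, e5, e6]
  ring

lemma rho2meas_prob {s : ℝ} (hs1 : 1 ≤ s) (hs2 : s < 2) : IsProbabilityMeasure (rho2meas s) := by
  have hC := C2_pos hs1 hs2
  have hR := R2_pos hs1 hs2
  constructor
  rw [rho2meas, withDensity_apply _ MeasurableSet.univ, Measure.restrict_univ,
    lintegral_polar _ (by have := measurable_rho2 s; fun_prop)]
  have h1 : ∀ α : ℝ, ∫⁻ r in Ioi (0 : ℝ), ENNReal.ofReal r *
      ENNReal.ofReal (rho2 s (r * cos α, r * sin α)) =
      ENNReal.ofReal (C2 s * (R2 s ^ (s + 2) / (s + 2))) := by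
    intro α
    have e1 : ∫⁻ r in Ioi (0 : ℝ), ENNReal.ofReal r * ENNReal.ofReal (rho2 s (r * cos α, r * sin α))
        = ∫⁻ r in Ioc (0 : ℝ) (R2 s), ENNReal.ofReal (C2 s * (r * (R2 s ^ 2 - r ^ 2) ^ (s / 2))) := by
      rw [← lintegral_indicator measurableSet_Ioi, ← lintegral_indicator measurableSet_Ioc]
      congr 1; ext r
      by_cases hr : 0 < r
      · rw [indicator_of_mem (show r ∈ Ioi 0 from hr), ← ENNReal.ofReal_mul hr.le, rho2,
          nrm_polar hr.le]
        by_cases hr2 : r ≤ R2 s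
        · rw [indicator_of_mem (show r ∈ Ioc 0 (R2 s) from ⟨hr, hr2⟩), max_eq_left (by nlinarith)]
          congr 1; ring
        · rw [indicator_of_notMem (fun h => hr2 h.2), max_eq_right (by nlinarith),
            zero_rpow (by linarith)]
          simp
      · rw [indicator_of_notMem (show r ∉ Ioi (0 : ℝ) from hr), indicator_of_notMem (fun h => hr h.1)]
    have hd : ∀ r ∈ Ioo 0 (R2 s), HasDerivAt (fun r => -(R2 s ^ 2 - r ^ 2) ^ (s / 2 + 1) / (s + 2))
        (r * (R2 s ^ 2 - r ^ 2) ^ (s / 2)) r := by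
      intro r hr
      have hp : 0 < R2 s ^ 2 - r ^ 2 := by nlinarith [hr.1, hr.2]
      have := ((((hasDerivAt_pow 2 r).const_sub (R2 s ^ 2)).rpow_const (p := s / 2 + 1)
        (Or.inl hp.ne')).neg.div_const (s + 2))
      refine this.congr_deriv ?_
      rw [add_sub_cancel_right]; simp only [Nat.cast_ofNat]; field_simp; ring
    have hcont : Continuous fun r : ℝ => r * (R2 s ^ 2 - r ^ 2) ^ (s / 2) :=
      continuous_id.mul ((continuous_const.sub (continuous_pow 2)).rpow_const
        (fun _ => Or.inr (by linarith)))
    have hInt := intervalIntegral.integral_eq_sub_of_hasDerivAt_of_le hR.le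
      (f := fun r => -(R2 s ^ 2 - r ^ 2) ^ (s / 2 + 1) / (s + 2))
      ((((continuous_const.sub (continuous_pow 2)).rpow_const
        (fun _ => Or.inr (by linarith))).neg.div_const _).continuousOn) hd
      (hcont.intervalIntegrable _ _)
    rw [intervalIntegral.integral_of_le hR.le] at hInt
    rw [e1, ← ofReal_integral_eq_lintegral_ofReal, integral_const_mul, hInt]
    · congr 2
      have : (R2 s ^ 2) ^ (s / 2 + 1) = R2 s ^ (s + 2) := by
        rw [← rpow_natCast, ← rpow_mul hR.le]; congr 1; push_cast; ring
      simp only [sub_self]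
      rw [zero_rpow (by linarith), zero_pow two_ne_zero, sub_zero, this]; ring
    · exact ((hcont.const_mul _).integrableOn_Icc).mono_set Ioc_subset_Icc_self
    · refine (ae_restrict_iff' measurableSet_Ioc).2 (Eventually.of_forall fun r hr => ?_)
      have : 0 ≤ R2 s ^ 2 - r ^ 2 := by nlinarith [hr.1, hr.2]
      have := hr.1
      simp only [Pi.zero_apply]
      positivity
  simp only [h1]
  rw [lintegral_const, Measure.restrict_apply MeasurableSet.univ, univ_inter, Real.volume_Ioo,
    ← ENNReal.ofReal_mul (by positivity), ENNReal.ofReal_eq_one]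
  have hsin : 0 < sin (s * π / 2) := sin_pos_of_pos_of_lt_pi (by positivity) (by nlinarith [pi_pos])
  have e : R2 s ^ (s + 2) = (8 * sin (s * π / 2) / (s ^ 2 * (2 + s) * π))⁻¹ := by
    rw [R2, ← rpow_mul (by positivity), ← rpow_neg_one]; congr 1; field_simp
  rw [e, C2]
  field_simp
  ring

/-! ### The semi-axes of the ellipse -/

lemma Om_bounds {Ω : ℝ → ℝ} (hc : Continuous Ω) (hper : ∀ θ, Ω (θ + 2 * π) = Ω θ)
    (hpos : ∀ θ, 0 < Ω θ) : ∃ m M : ℝ, 0 < m ∧ ∀ θ, m ≤ Ω θ ∧ Ω θ ≤ M := by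
  have hK := Function.Periodic.compact_of_continuous (show Function.Periodic Ω (2 * π) from hper)
    (by positivity) hc
  obtain ⟨m, ⟨θ₀, rfl⟩, hm⟩ := hK.exists_isLeast (range_nonempty Ω)
  obtain ⟨M, -, hM⟩ := hK.exists_isGreatest (range_nonempty Ω)
  exact ⟨Ω θ₀, M, hpos _, fun θ => ⟨hm (mem_range_self θ), hM (mem_range_self θ)⟩⟩

lemma continuous_kw {s : ℝ} {Ω : ℝ → ℝ} (hc : Continuous Ω) (hper : ∀ θ, Ω (θ + 2 * π) = Ω θ)
    {a b : ℝ} (ha : 0 < a) (hb : 0 < b) : Continuous (kw s Ω a b) :=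
  (continuousOn_kap hc hper).comp_continuous (by fun_prop) (fun α => trig_ne ha hb α)

lemma kw_pos {s : ℝ} {Ω : ℝ → ℝ} (hpos : ∀ θ, 0 < Ω θ) {a b : ℝ} (ha : 0 < a) (hb : 0 < b)
    (α : ℝ) : 0 < kw s Ω a b α := kap_pos hpos (trig_ne ha hb α)

lemma kw_scale {s : ℝ} {Ω : ℝ → ℝ} (hper : ∀ θ, Ω (θ + 2 * π) = Ω θ) {a b r : ℝ} (ha : 0 < a)
    (hb : 0 < b) (hr : 0 < r) (α : ℝ) : kw s Ω (r * a) (r * b) α = r ^ (-s) * kw s Ω a b α := by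
  rw [kw, kw, ← kap_smul hper hr _ (trig_ne ha hb α)]
  simp only [mul_assoc]

lemma kw_le {s : ℝ} (hs0 : 0 ≤ s) {Ω : ℝ → ℝ} {M : ℝ} (hpos : ∀ θ, 0 < Ω θ) (hM : ∀ θ, Ω θ ≤ M)
    {x y z : ℝ} (hz : 0 < z) (hx : z ≤ x) (hy : z ≤ y) (α : ℝ) :
    kw s Ω (√x) (√y) α ≤ M * z ^ (-s / 2) := by
  have h1 : √z ≤ nrm (√x * cos α, √y * sin α) := by
    apply Real.sqrt_le_sqrt
    rw [mul_pow, mul_pow, sq_sqrt (by linarith), sq_sqrt (by linarith)]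
    nlinarith [cos_sq_add_sin_sq α, mul_le_mul_of_nonneg_right hx (sq_nonneg (cos α)),
      mul_le_mul_of_nonneg_right hy (sq_nonneg (sin α))]
  have h2 : nrm (√x * cos α, √y * sin α) ^ (-s) ≤ z ^ (-s / 2) := by
    calc _ ≤ (√z) ^ (-s) := rpow_le_rpow_of_nonpos (Real.sqrt_pos.2 hz) h1 (by linarith)
      _ = z ^ (-s / 2) := by
        rw [Real.sqrt_eq_rpow, ← rpow_mul hz.le]; congr 1; ring
  rw [kw, kap, mul_comm M]
  exact mul_le_mul h2 (hM _) (hpos _).le (by positivity)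

lemma kw_ge {s : ℝ} (hs0 : 0 ≤ s) {Ω : ℝ → ℝ} {m : ℝ} (hm0 : 0 < m) (hm : ∀ θ, m ≤ Ω θ)
    {x y : ℝ} (hx0 : 0 < x) (hy0 : 0 < y) (hx : x ≤ 1) (hy : y ≤ 1) (α : ℝ) :
    m ≤ kw s Ω (√x) (√y) α := by
  have h0 : 0 < nrm (√x * cos α, √y * sin α) :=
    nrm_pos (trig_ne (Real.sqrt_pos.2 hx0) (Real.sqrt_pos.2 hy0) α)
  have h1 : nrm (√x * cos α, √y * sin α) ≤ 1 := by
    rw [nrm, Real.sqrt_le_one, mul_pow, mul_pow, sq_sqrt hx0.le, sq_sqrt hy0.le]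
    nlinarith [cos_sq_add_sin_sq α, mul_le_mul_of_nonneg_right hx (sq_nonneg (cos α)),
      mul_le_mul_of_nonneg_right hy (sq_nonneg (sin α))]
  have h2 : 1 ≤ nrm (√x * cos α, √y * sin α) ^ (-s) :=
    one_le_rpow_of_pos_of_le_one_of_nonpos h0 h1 (by linarith)
  rw [kw, kap]
  nlinarith [hm (ang (√x * cos α, √y * sin α))]

/-- The defect of the balance between the two axes for the ellipse with squared semi-axes
proportional to `x` and `1 - x`. -/
def axisDefect (s : ℝ) (Ω : ℝ → ℝ) (x : ℝ) : ℝ :=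
  ∫ α in (-π)..π, kw s Ω (√x) (√(1 - x)) α *
    ((1 - x) * (1 - (2 - s) * cos α ^ 2) - x * (1 - (2 - s) * sin α ^ 2))

lemma axisDefect_cont {s : ℝ} {Ω : ℝ → ℝ} (hc : Continuous Ω)
    (hper : ∀ θ, Ω (θ + 2 * π) = Ω θ) : ContinuousOn (axisDefect s Ω) (Ioo 0 1) := by
  rw [continuousOn_iff_continuous_domRestrict]
  apply intervalIntegral.continuous_parametric_intervalIntegral_of_continuous'
    (f := fun (x : Ioo (0 : ℝ) 1) α => kw s Ω (√x.1) (√(1 - x.1)) α *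
    ((1 - x.1) * (1 - (2 - s) * cos α ^ 2) - x.1 * (1 - (2 - s) * sin α ^ 2)))
  apply Continuous.mul
  · apply (continuousOn_kap hc hper).comp_continuous
      (f := fun p : Ioo (0 : ℝ) 1 × ℝ => (√p.1.1 * cos p.2, √(1 - p.1.1) * sin p.2))
    · fun_prop
    · rintro ⟨⟨x, hx⟩, α⟩
      exact trig_ne (Real.sqrt_pos.2 hx.1) (Real.sqrt_pos.2 (by linarith [hx.2])) α
  · fun_prop

lemma small_rpow {p : ℝ} (hp : 0 < p) {δ : ℝ} (hδ : 0 < δ) :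
    ∃ ε : ℝ, 0 < ε ∧ ε ≤ 1 / 2 ∧ ε ^ p < δ := by
  have h1 : Tendsto (fun ε : ℝ => ε ^ p) (𝓝[>] 0) (𝓝 (0 ^ p)) :=
    ((continuousAt_rpow_const 0 p (Or.inr hp.le)).tendsto).mono_left nhdsWithin_le_nhds
  rw [zero_rpow hp.ne'] at h1
  have h2 : ∀ᶠ ε : ℝ in 𝓝[>] 0, ε ∈ Ioc 0 (1 / 2 : ℝ) := Ioc_mem_nhdsGT (by norm_num)
  obtain ⟨ε, h3, h4⟩ := ((h1.eventually_lt_const hδ).and h2).exists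
  exact ⟨ε, h4.1, h4.2, h3⟩

lemma integral_sin_sq_pi : ∫ α in (-π)..π, sin α ^ 2 = π := by
  rw [integral_sin_sq]; simp

lemma integral_cos_sq_pi : ∫ α in (-π)..π, cos α ^ 2 = π := by
  rw [integral_cos_sq]; simp

/-- The balance defect is positive for tall and negative for flat ellipses, so by the
intermediate value theorem it vanishes for some ellipse. -/
lemma exists_axisDefect_zero {s : ℝ} (hs1 : 1 ≤ s) (hs2 : s < 2) {Ω : ℝ → ℝ} (hc : Continuous Ω)
    (hper : ∀ θ, Ω (θ + 2 * π) = Ω θ) (hpos : ∀ θ, 0 < Ω θ) :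
    ∃ x ∈ Ioo (0 : ℝ) 1, axisDefect s Ω x = 0 := by
  obtain ⟨m, M, hm0, hmM⟩ := Om_bounds hc hper hpos
  have hM0 : 0 < M := hm0.trans_le ((hmM 0).1.trans (hmM 0).2)
  obtain ⟨ε, hε0, hε1, hε⟩ := small_rpow (p := 1 - s / 2) (by linarith)
    (δ := m / (4 * M)) (by positivity)
  have hεM : M * ε ^ (1 - s / 2) < m / 4 := by
    rw [lt_div_iff₀ (by positivity)] at hε; linarith
  have hpow : ε ^ (-s / 2) * ε = ε ^ (1 - s / 2) := by
    rw [show (1 - s / 2) = -s / 2 + 1 by ring, rpow_add hε0, rpow_one]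
  have hInt : ∀ x ∈ Ioo (0 : ℝ) 1, IntervalIntegrable (fun α => kw s Ω (√x) (√(1 - x)) α *
    ((1 - x) * (1 - (2 - s) * cos α ^ 2) - x * (1 - (2 - s) * sin α ^ 2))) volume (-π) π := by
    intro x hx
    apply Continuous.intervalIntegrable
    exact (continuous_kw hc hper (Real.sqrt_pos.2 hx.1)
      (Real.sqrt_pos.2 (by linarith [hx.2]))).mul (by fun_prop)
  have hpi := pi_pos
  -- As `ε → 0` the weight is at most `M ε^{-s/2}`, so the terms carrying a factor `ε` vanish
  -- because `s < 2`, and the other terms keep a definite sign.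
  have hA : 0 < axisDefect s Ω ε := by
    have h1 : ∫ α in (-π)..π, (m / 2 * sin α ^ 2 - M * ε ^ (1 - s / 2)) ≤ axisDefect s Ω ε := by
      apply intervalIntegral.integral_mono_on (by linarith)
        (Continuous.intervalIntegrable (by fun_prop) _ _) (hInt ε ⟨hε0, by linarith⟩)
      intro α _
      have k1 := kw_ge (s := s) (by linarith) hm0 (fun θ => (hmM θ).1) hε0
        (by linarith : 0 < 1 - ε) (by linarith) (by linarith) α
      have k2 := kw_le (s := s) (by linarith) hpos (fun θ => (hmM θ).2) hε0
        le_rfl (by linarith : ε ≤ 1 - ε) α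
      set k := kw s Ω (√ε) (√(1 - ε)) α
      have hcs := cos_sq_add_sin_sq α
      have q : (1 - ε) * sin α ^ 2 - ε ≤
          (1 - ε) * (1 - (2 - s) * cos α ^ 2) - ε * (1 - (2 - s) * sin α ^ 2) := by
        have q1 : sin α ^ 2 ≤ 1 - (2 - s) * cos α ^ 2 := by nlinarith [sq_nonneg (cos α)]
        have q2 : 1 - (2 - s) * sin α ^ 2 ≤ 1 := by nlinarith [sq_nonneg (sin α)]
        nlinarith
      have q3 : k * ε ≤ M * ε ^ (1 - s / 2) := by
        rw [← hpow, ← mul_assoc]; exact mul_le_mul_of_nonneg_right k2 hε0.le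
      have q4 : m / 2 * sin α ^ 2 ≤ k * ((1 - ε) * sin α ^ 2) := by
        have : m / 2 ≤ k * (1 - ε) := by nlinarith
        nlinarith [sq_nonneg (sin α), mul_le_mul_of_nonneg_right this (sq_nonneg (sin α))]
      nlinarith [mul_le_mul_of_nonneg_left q (hm0.le.trans k1)]
    rw [intervalIntegral.integral_sub (Continuous.intervalIntegrable (by fun_prop) _ _)
      (Continuous.intervalIntegrable (by fun_prop) _ _), intervalIntegral.integral_const_mul,
      integral_sin_sq_pi, intervalIntegral.integral_const, smul_eq_mul] at h1
    nlinarith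
  have hB : axisDefect s Ω (1 - ε) < 0 := by
    have h1 : axisDefect s Ω (1 - ε) ≤
        ∫ α in (-π)..π, (M * ε ^ (1 - s / 2) - m / 2 * cos α ^ 2) := by
      apply intervalIntegral.integral_mono_on (by linarith)
        (hInt (1 - ε) ⟨by linarith, by linarith⟩) (Continuous.intervalIntegrable (by fun_prop) _ _)
      intro α _
      rw [sub_sub_cancel]
      have k1 := kw_ge (s := s) (by linarith) hm0 (fun θ => (hmM θ).1) (by linarith : 0 < 1 - ε)
        hε0 (by linarith) (by linarith) α
      have k2 := kw_le (s := s) (by linarith) hpos (fun θ => (hmM θ).2) hε0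
        (by linarith : ε ≤ 1 - ε) le_rfl α
      set k := kw s Ω (√(1 - ε)) (√ε) α
      have hcs := cos_sq_add_sin_sq α
      have q : ε * (1 - (2 - s) * cos α ^ 2) - (1 - ε) * (1 - (2 - s) * sin α ^ 2) ≤
          ε - (1 - ε) * cos α ^ 2 := by
        have q1 : cos α ^ 2 ≤ 1 - (2 - s) * sin α ^ 2 := by nlinarith [sq_nonneg (sin α)]
        have q2 : 1 - (2 - s) * cos α ^ 2 ≤ 1 := by nlinarith [sq_nonneg (cos α)]
        nlinarith
      have q3 : k * ε ≤ M * ε ^ (1 - s / 2) := by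
        rw [← hpow, ← mul_assoc]; exact mul_le_mul_of_nonneg_right k2 hε0.le
      have q4 : m / 2 * cos α ^ 2 ≤ k * ((1 - ε) * cos α ^ 2) := by
        have : m / 2 ≤ k * (1 - ε) := by nlinarith
        nlinarith [sq_nonneg (cos α), mul_le_mul_of_nonneg_right this (sq_nonneg (cos α))]
      nlinarith [mul_le_mul_of_nonneg_left q (hm0.le.trans k1)]
    rw [intervalIntegral.integral_sub (Continuous.intervalIntegrable (by fun_prop) _ _)
      (Continuous.intervalIntegrable (by fun_prop) _ _), intervalIntegral.integral_const_mul (m / 2),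
      integral_cos_sq_pi, intervalIntegral.integral_const, smul_eq_mul] at h1
    nlinarith
  have hsub : Icc ε (1 - ε) ⊆ Ioo (0 : ℝ) 1 := fun x hx => ⟨by linarith [hx.1], by linarith [hx.2]⟩
  obtain ⟨x, hx, hx0⟩ := intermediate_value_Icc' (by linarith : ε ≤ 1 - ε)
    ((axisDefect_cont hc hper).mono hsub) ⟨hB.le, hA.le⟩
  exact ⟨x, hsub hx, hx0⟩

/-- The constant relating the potential of `ρ_{a,b}` to the angular moments of `kw`. -/
def kap0 (s : ℝ) : ℝ := C2 s * betaA s / 2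

/-- The two equations which make the potential of `ρ_{a,b}` balance the confinement `|x|²`
are solvable. A zero of `axisDefect` gives the ratio of the axes; homogeneity of the kernel
then gives the size. -/
lemma exists_ab {s : ℝ} (hs1 : 1 ≤ s) (hs2 : s < 2) {Ω : ℝ → ℝ} (hc : Continuous Ω)
    (hper : ∀ θ, Ω (θ + 2 * π) = Ω θ) (hpos : ∀ θ, 0 < Ω θ) :
    ∃ a b : ℝ, 0 < a ∧ 0 < b ∧
      kap0 s * (∫ α in (-π)..π, kw s Ω a b α * (1 - (2 - s) * cos α ^ 2)) = a ^ 2 ∧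
      kap0 s * (∫ α in (-π)..π, kw s Ω a b α * (1 - (2 - s) * sin α ^ 2)) = b ^ 2 := by
  obtain ⟨x, hx, hx0⟩ := exists_axisDefect_zero hs1 hs2 hc hper hpos
  have hx1 : 0 < 1 - x := by linarith [hx.2]
  have ha := Real.sqrt_pos.2 hx.1
  have hb := Real.sqrt_pos.2 hx1
  have hk : 0 < kap0 s := by
    have hC := C2_pos hs1 hs2
    have hA := betaA_pos (by linarith : 0 < s) hs2
    unfold kap0; positivity
  have hck := continuous_kw (s := s) hc hper ha hb
  set A := ∫ α in (-π)..π, kw s Ω (√x) (√(1 - x)) α * (1 - (2 - s) * cos α ^ 2) with hA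
  set B := ∫ α in (-π)..π, kw s Ω (√x) (√(1 - x)) α * (1 - (2 - s) * sin α ^ 2) with hB
  have hAB : (1 - x) * A - x * B = 0 := by
    rw [← hx0, axisDefect, hA, hB, ← intervalIntegral.integral_const_mul,
      ← intervalIntegral.integral_const_mul, ← intervalIntegral.integral_sub]
    · congr 1; ext α; ring
    · exact (continuous_const.mul (hck.mul (by fun_prop))).intervalIntegrable _ _
    · exact (continuous_const.mul (hck.mul (by fun_prop))).intervalIntegrable _ _
  have hApos : 0 < A := by
    obtain ⟨m, M, hm0, hmM⟩ := Om_bounds hc hper hpos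
    have h1 : ∫ α in (-π)..π, m * sin α ^ 2 ≤ A := by
      apply intervalIntegral.integral_mono_on (by linarith [pi_pos])
        (Continuous.intervalIntegrable (by fun_prop) _ _)
        ((hck.mul (by fun_prop)).intervalIntegrable _ _)
      intro α _
      have k1 := kw_ge (s := s) (by linarith) hm0 (fun θ => (hmM θ).1) hx.1 hx1 hx.2.le
        (by linarith [hx.1]) α
      have hcs := cos_sq_add_sin_sq α
      exact mul_le_mul k1 (by nlinarith [sq_nonneg (cos α)]) (sq_nonneg _) (hm0.le.trans k1)
    rw [intervalIntegral.integral_const_mul, integral_sin_sq_pi] at h1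
    exact lt_of_lt_of_le (by have := pi_pos; positivity) h1
  -- Rescaling by `r` multiplies the left sides by `r^{-s}` and the right sides by `r²`.
  set r := (kap0 s * (A / x)) ^ (1 / (s + 2)) with hr
  have hx' := hx.1
  have hbase : 0 < kap0 s * (A / x) := by positivity
  have hr0 : 0 < r := rpow_pos_of_pos hbase _
  have hrs : kap0 s * (A / x) = r ^ s * r ^ 2 := by
    rw [hr, ← rpow_natCast, ← rpow_mul hbase.le, ← rpow_mul hbase.le, ← rpow_add hbase]
    rw [show 1 / (s + 2) * s + 1 / (s + 2) * ((2 : ℕ) : ℝ) = 1 by push_cast; field_simp, rpow_one]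
  have hrr : r ^ (-s) * r ^ s = 1 := by rw [← rpow_add hr0]; simp
  refine ⟨r * √x, r * √(1 - x), by positivity, by positivity, ?_, ?_⟩
  · simp only [kw_scale hper ha hb hr0, mul_assoc]
    rw [intervalIntegral.integral_const_mul, ← hA, mul_pow, sq_sqrt hx.1.le]
    have : A = x * (A / x) := by field_simp
    linear_combination r ^ (-s) * kap0 s * this + x * r ^ (-s) * hrs + x * r ^ 2 * hrr
  · simp only [kw_scale hper ha hb hr0, mul_assoc]
    rw [intervalIntegral.integral_const_mul, ← hB, mul_pow, sq_sqrt hx1.le]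
    have : B = (1 - x) * (A / x) := by field_simp; linarith
    linear_combination r ^ (-s) * kap0 s * this + (1 - x) * r ^ (-s) * hrs +
      (1 - x) * r ^ 2 * hrr

/-! ### The Euler-Lagrange conditions for the ellipse -/

/-- The repulsive potential generated by `ρ_{a,b}`. -/
def Pot (s : ℝ) (Ω : ℝ → ℝ) (a b : ℝ) (x : ℝ × ℝ) : ℝ≥0∞ := ∫⁻ y, Krep s Ω (x - y) ∂(rhoAB s a b)

/-- The constant value of the total potential on the ellipse. -/
def elConst (s : ℝ) (Ω : ℝ → ℝ) (a b : ℝ) : ℝ := kap0 s * R2 s ^ 2 * ∫ α in (-π)..π, kw s Ω a b α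

section EL
variable {s : ℝ} (hs1 : 1 ≤ s) (hs2 : s < 2) {Ω : ℝ → ℝ} (hc : Continuous Ω)
    (hper : ∀ θ, Ω (θ + 2 * π) = Ω θ) (hpos : ∀ θ, 0 < Ω θ) (hpi : ∀ θ, Ω (θ + π) = Ω θ)
    (hsymm : ∀ θ, Ω (-θ) = Ω θ) {a b : ℝ} (ha : 0 < a) (hb : 0 < b)
    (h1 : kap0 s * (∫ α in (-π)..π, kw s Ω a b α * (1 - (2 - s) * cos α ^ 2)) = a ^ 2)
    (h2 : kap0 s * (∫ α in (-π)..π, kw s Ω a b α * (1 - (2 - s) * sin α ^ 2)) = b ^ 2)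

include hper hsymm in
/-- The mixed moment vanishes by the reflection symmetry of `Ω`, so that the ellipse can be taken
with axes along the coordinate axes. -/
lemma kw_cross : ∫ α in (-π)..π, kw s Ω a b α * (cos α * sin α) = 0 := by
  have h := intervalIntegral.integral_comp_neg (a := -π) (b := π)
    (fun α => kw s Ω a b α * (cos α * sin α))
  have e : ∀ α, kw s Ω a b (-α) * (cos (-α) * sin (-α)) = -(kw s Ω a b α * (cos α * sin α)) := by
    intro α
    have : kw s Ω a b (-α) = kw s Ω a b α := by
      rw [kw, kw, ← kap_reflect hper hsymm, cos_neg, sin_neg]; simp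
    rw [this, cos_neg, sin_neg]; ring
  simp only [e, neg_neg, intervalIntegral.integral_neg] at h
  linarith

include hc hper hsymm ha hb h1 h2 in
lemma integral_kw_lineQ (X : ℝ × ℝ) :
    ∫ α in (-π)..π, kw s Ω a b α * lineQ s X α =
      2 * (elConst s Ω a b - nrm (a * X.1, b * X.2) ^ 2) := by
  have hk := continuous_kw (s := s) hc hper ha hb
  have h3 := kw_cross (s := s) (a := a) (b := b) hper hsymm
  have e : ∀ α, kw s Ω a b α * lineQ s X α = 2 * kap0 s * R2 s ^ 2 * kw s Ω a b α -
      2 * kap0 s * X.1 ^ 2 * (kw s Ω a b α * (1 - (2 - s) * cos α ^ 2)) -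
      2 * kap0 s * X.2 ^ 2 * (kw s Ω a b α * (1 - (2 - s) * sin α ^ 2)) +
      4 * kap0 s * (2 - s) * X.1 * X.2 * (kw s Ω a b α * (cos α * sin α)) := by
    intro α; rw [lineQ, kap0, nrm_sq]; ring
  simp only [e]
  rw [intervalIntegral.integral_add, intervalIntegral.integral_sub, intervalIntegral.integral_sub]
  · simp only [intervalIntegral.integral_const_mul]
    rw [h3, elConst, nrm_sq]
    linear_combination -2 * X.1 ^ 2 * h1 - 2 * X.2 ^ 2 * h2
  all_goals exact Continuous.intervalIntegrable (by fun_prop) _ _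

lemma ofReal_integral_le {β : Type*} [MeasurableSpace β] {μ : Measure β} {f : β → ℝ}
    (hf : Integrable f μ) : ENNReal.ofReal (∫ x, f x ∂μ) ≤ ∫⁻ x, ENNReal.ofReal (f x) ∂μ := by
  rw [integral_eq_lintegral_pos_part_sub_lintegral_neg_part hf]
  have h := hf.lintegral_lt_top.ne
  calc _ ≤ ENNReal.ofReal (∫⁻ x, ENNReal.ofReal (f x) ∂μ).toReal :=
        ENNReal.ofReal_le_ofReal (sub_le_self _ ENNReal.toReal_nonneg)
    _ = _ := ENNReal.ofReal_toReal h

lemma integrable_kw_lineQ (hk : Continuous (kw s Ω a b)) (X : ℝ × ℝ) :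
    Integrable (fun α => kw s Ω a b α * lineQ s X α) (volume.restrict (Ioo (-π) π)) := by
  have : Continuous fun α => kw s Ω a b α * lineQ s X α := by unfold lineQ; fun_prop
  exact (this.integrableOn_Icc (a := -π) (b := π)).mono_set Ioo_subset_Icc_self

lemma set_integral_eq (f : ℝ → ℝ) : ∫ α in Ioo (-π) π, f α = ∫ α in (-π)..π, f α := by
  rw [intervalIntegral.integral_of_le (by linarith [pi_pos]), integral_Ioc_eq_integral_Ioo]

lemma two_mul_ofReal (x : ℝ) : 2 * ENNReal.ofReal x = ENNReal.ofReal (2 * x) := by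
  rw [ENNReal.ofReal_mul (by norm_num)]; simp

lemma le_of_two_mul_le {x y : ℝ≥0∞} (h : 2 * x ≤ 2 * y) : x ≤ y :=
  (ENNReal.mul_le_mul_iff_right (by simp) (by simp)).1 h

include hs1 hs2 hc hper hpos hpi hsymm ha hb h1 h2 in
/-- The total potential is at least `elConst` everywhere. -/
lemma EL_ge (x : ℝ × ℝ) : ENNReal.ofReal (elConst s Ω a b) ≤
    Pot s Ω a b x + ENNReal.ofReal (nrm x ^ 2) := by
  set X : ℝ × ℝ := (x.1 / a, x.2 / b) with hX
  have hx : (a * X.1, b * X.2) = x := by ext <;> simp [hX] <;> field_simp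
  have hk := continuous_kw (s := s) hc hper ha hb
  have hp := potential_eq (s := s) hc hper hpi ha hb X
  have hi := integral_kw_lineQ hc hper hsymm ha hb h1 h2 X
  rw [hx] at hp hi
  have hle := ofReal_integral_le (integrable_kw_lineQ hk X)
  rw [set_integral_eq, hi] at hle
  have hle2 : ENNReal.ofReal (2 * (elConst s Ω a b - nrm x ^ 2)) ≤ 2 * Pot s Ω a b x := by
    rw [Pot, hp]
    refine hle.trans (lintegral_mono fun α => ?_)
    rw [ENNReal.ofReal_mul (kw_pos hpos ha hb α).le]
    gcongr
    exact lineInt_ge hs1 hs2 X α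
  apply le_of_two_mul_le
  rw [mul_add, two_mul_ofReal, two_mul_ofReal]
  calc _ = ENNReal.ofReal (2 * (elConst s Ω a b - nrm x ^ 2) + 2 * nrm x ^ 2) := by congr 1; ring
    _ ≤ _ := ENNReal.ofReal_add_le
    _ ≤ _ := by gcongr

include hs1 hs2 hc hper hpos hpi hsymm ha hb h1 h2 in
/-- The total potential equals `elConst` on the ellipse. -/
lemma EL_eq {X : ℝ × ℝ} (hX : nrm X < R2 s) :
    Pot s Ω a b (a * X.1, b * X.2) + ENNReal.ofReal (nrm (a * X.1, b * X.2) ^ 2) =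
      ENNReal.ofReal (elConst s Ω a b) := by
  have hk := continuous_kw (s := s) hc hper ha hb
  have hC := C2_pos hs1 hs2
  have hA := betaA_pos (by linarith : 0 < s) hs2
  have hp := potential_eq (s := s) hc hper hpi ha hb X
  have hi := integral_kw_lineQ hc hper hsymm ha hb h1 h2 X
  have h0 : 0 < R2 s ^ 2 - nrm X ^ 2 := by nlinarith [nrm_nonneg X]
  have hnn : ∀ α, 0 ≤ kw s Ω a b α * lineQ s X α := by
    intro α
    have := kw_pos (s := s) hpos ha hb α
    have : 0 ≤ 2 - s := by linarith
    unfold lineQ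
    positivity
  have hnn2 : 0 ≤ 2 * (elConst s Ω a b - nrm (a * X.1, b * X.2) ^ 2) := by
    rw [← hi]
    exact intervalIntegral.integral_nonneg (by linarith [pi_pos]) (fun α _ => hnn α)
  have hP : 2 * Pot s Ω a b (a * X.1, b * X.2) =
      ENNReal.ofReal (2 * (elConst s Ω a b - nrm (a * X.1, b * X.2) ^ 2)) := by
    rw [Pot, hp, ← hi, ← set_integral_eq, ofReal_integral_eq_lintegral_ofReal
      (integrable_kw_lineQ hk X) (Eventually.of_forall hnn)]
    congr 1; ext α
    rw [ENNReal.ofReal_mul (kw_pos hpos ha hb α).le, lineInt_inside hs1 hs2 hX]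
  apply (ENNReal.mul_right_inj (a := 2) (by simp) (by simp)).1
  rw [mul_add, hP, two_mul_ofReal, two_mul_ofReal, ← ENNReal.ofReal_add hnn2 (by positivity)]
  congr 1; ring

end EL

/-! ### Positive definiteness of Gaussian kernels -/

/-- The mutual interaction of two measures through the kernel `k`. -/
def II (k : ℝ × ℝ → ℝ≥0∞) (μ ν : Measure (ℝ × ℝ)) : ℝ≥0∞ := ∫⁻ x, ∫⁻ y, k (x - y) ∂ν ∂μ

/-- The standard Gaussian measure on the plane. -/
def gam : Measure (ℝ × ℝ) :=
  (ProbabilityTheory.gaussianReal 0 1).prod (ProbabilityTheory.gaussianReal 0 1)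

instance : IsProbabilityMeasure gam := by unfold gam; infer_instance

lemma integral_cos_gam (a b : ℝ) :
    ∫ ξ, cos (ξ.1 * a + ξ.2 * b) ∂gam = exp (-(a ^ 2 + b ^ 2) / 2) := by
  have h1 : ∀ t : ℝ, ∫ x : ℝ, Complex.exp (x * t * Complex.I) ∂(ProbabilityTheory.gaussianReal 0 1)
      = Complex.exp (-(t : ℂ) ^ 2 / 2) := by
    intro t
    have := ProbabilityTheory.charFun_gaussianReal (μ := 0) (v := 1) t
    rw [charFun_apply_real] at this
    simp only [mul_comm (t : ℂ)] at this
    rw [this]; congr 1; simp; ring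
  have h2 : ∫ ξ : ℝ × ℝ, Complex.exp (((ξ.1 * a + ξ.2 * b : ℝ) : ℂ) * Complex.I) ∂gam =
      Complex.exp ((-(a ^ 2 + b ^ 2) / 2 : ℝ) : ℂ) := by
    have e : ∀ ξ : ℝ × ℝ, Complex.exp (((ξ.1 * a + ξ.2 * b : ℝ) : ℂ) * Complex.I) =
        Complex.exp (ξ.1 * a * Complex.I) * Complex.exp (ξ.2 * b * Complex.I) := by
      intro ξ; rw [← Complex.exp_add]; congr 1; push_cast; ring
    simp only [e]
    rw [gam, integral_prod_mul (fun x : ℝ => Complex.exp (x * a * Complex.I))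
      (fun x : ℝ => Complex.exp (x * b * Complex.I)), h1, h1, ← Complex.exp_add]
    congr 1; push_cast; ring
  have hInt : Integrable (fun ξ : ℝ × ℝ =>
      Complex.exp (((ξ.1 * a + ξ.2 * b : ℝ) : ℂ) * Complex.I)) gam := by
    apply Integrable.of_bound (C := 1) (Continuous.aestronglyMeasurable (by fun_prop))
    exact Eventually.of_forall fun ξ => by rw [Complex.norm_exp_ofReal_mul_I]
  have h3 := congrArg Complex.re h2
  rw [← Complex.ofReal_exp, Complex.ofReal_re] at h3
  rw [← h3]
  change _ = Complex.reCLM _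
  rw [← ContinuousLinearMap.integral_comp_comm _ hInt]
  congr 1; ext ξ
  exact (Complex.exp_ofReal_mul_I_re _).symm

section Gauss
variable (A : ℝ × ℝ → ℝ × ℝ)

/-- The Gaussian kernel `exp(-|A z|²/2)`. -/
def gker (z : ℝ × ℝ) : ℝ := exp (-((A z).1 ^ 2 + (A z).2 ^ 2) / 2)

/-- The phase of the plane wave with frequency `ξ` in the coordinates given by `A`. -/
def phase (ξ x : ℝ × ℝ) : ℝ := ξ.1 * (A x).1 + ξ.2 * (A x).2

/-- The squared modulus of the difference of the characteristic functions of the images of `μ`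
and `ρ` under `A`. -/
def cfDiff (μ ρ : Measure (ℝ × ℝ)) (ξ : ℝ × ℝ) : ℝ :=
  (∫ x, cos (phase A ξ x) ∂μ - ∫ x, cos (phase A ξ x) ∂ρ) ^ 2 +
    (∫ x, sin (phase A ξ x) ∂μ - ∫ x, sin (phase A ξ x) ∂ρ) ^ 2

variable {A}
variable (hA : Continuous A) (hsub : ∀ x y, A (x - y) = A x - A y)

include hA in
lemma cont_phase : Continuous fun p : (ℝ × ℝ) × (ℝ × ℝ) => phase A p.1 p.2 := by
  unfold phase; fun_prop

include hA in
lemma cont_cos_int (μ : Measure (ℝ × ℝ)) [IsProbabilityMeasure μ] :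
    Continuous fun ξ => ∫ x, cos (phase A ξ x) ∂μ := by
  have h := cont_phase hA
  apply continuous_of_dominated (bound := fun _ => 1)
  · intro ξ; apply Continuous.aestronglyMeasurable; fun_prop
  · intro ξ; exact Eventually.of_forall fun x => by simpa using abs_cos_le_one _
  · exact integrable_const _
  · exact Eventually.of_forall fun x => by fun_prop

include hA in
lemma cont_sin_int (μ : Measure (ℝ × ℝ)) [IsProbabilityMeasure μ] :
    Continuous fun ξ => ∫ x, sin (phase A ξ x) ∂μ := by
  have h := cont_phase hA
  apply continuous_of_dominated (bound := fun _ => 1)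
  · intro ξ; apply Continuous.aestronglyMeasurable; fun_prop
  · intro ξ; exact Eventually.of_forall fun x => by simpa using abs_sin_le_one _
  · exact integrable_const _
  · exact Eventually.of_forall fun x => by fun_prop

lemma int_prod_bdd {μ : Measure (ℝ × ℝ)} [IsProbabilityMeasure μ] {f : ℝ × ℝ → ℝ}
    (hf : Continuous f) (hb : ∀ x, |f x| ≤ 1) : Integrable f μ :=
  Integrable.of_bound (C := 1) hf.aestronglyMeasurable (Eventually.of_forall hb)

lemma int_prod_bdd2 {μ ν : Measure (ℝ × ℝ)} [IsProbabilityMeasure μ] [IsProbabilityMeasure ν]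
    {f : (ℝ × ℝ) × (ℝ × ℝ) → ℝ}
    (hf : Continuous f) (hb : ∀ x, |f x| ≤ 1) : Integrable f (μ.prod ν) :=
  Integrable.of_bound (C := 1) hf.aestronglyMeasurable (Eventually.of_forall hb)

include hA hsub in
/-- A Gaussian is the Fourier transform of a Gaussian, so Gaussian interactions are integrals of
products of characteristic functions. -/
lemma gker_int (μ ν : Measure (ℝ × ℝ)) [IsProbabilityMeasure μ] [IsProbabilityMeasure ν] :
    ∫ p, gker A (p.1 - p.2) ∂(μ.prod ν) =
      ∫ ξ, ((∫ x, cos (phase A ξ x) ∂μ) * (∫ x, cos (phase A ξ x) ∂ν) +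
        (∫ x, sin (phase A ξ x) ∂μ) * (∫ x, sin (phase A ξ x) ∂ν)) ∂gam := by
  have hph := cont_phase hA
  have e : ∀ p : (ℝ × ℝ) × (ℝ × ℝ), gker A (p.1 - p.2) =
      ∫ ξ, cos (phase A ξ p.1 - phase A ξ p.2) ∂gam := by
    intro p
    rw [gker, ← integral_cos_gam]
    congr 1; ext ξ
    rw [hsub]; simp only [phase, Prod.fst_sub, Prod.snd_sub]; congr 1; ring
  simp only [e]
  rw [integral_integral_swap]
  · congr 1; ext ξ
    simp only [cos_sub]
    rw [integral_add, integral_prod_mul (fun x => cos (phase A ξ x)) (fun x => cos (phase A ξ x)),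
      integral_prod_mul (fun x => sin (phase A ξ x)) (fun x => sin (phase A ξ x))]
    · apply int_prod_bdd2 (by fun_prop)
      intro x; rw [abs_mul]; exact mul_le_one₀ (abs_cos_le_one _) (abs_nonneg _) (abs_cos_le_one _)
    · apply int_prod_bdd2 (by fun_prop)
      intro x; rw [abs_mul]; exact mul_le_one₀ (abs_sin_le_one _) (abs_nonneg _) (abs_sin_le_one _)
  · refine Integrable.of_bound (C := 1) (Continuous.aestronglyMeasurable ?_)
      (Eventually.of_forall fun x => ?_)
    · unfold phase; fun_prop
    · exact abs_cos_le_one _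

include hA in
lemma II_gker (μ ν : Measure (ℝ × ℝ)) [IsProbabilityMeasure μ] [IsProbabilityMeasure ν] :
    II (fun z => ENNReal.ofReal (gker A z)) μ ν =
      ENNReal.ofReal (∫ p, gker A (p.1 - p.2) ∂(μ.prod ν)) := by
  have hg : Continuous (gker A) := by unfold gker; fun_prop
  rw [ofReal_integral_eq_lintegral_ofReal, lintegral_prod, II]
  · apply Measurable.aemeasurable; fun_prop
  · apply int_prod_bdd2 (by fun_prop)
    intro x
    rw [gker, abs_of_pos (exp_pos _), exp_le_one_iff]
    have : 0 ≤ (A (x.1 - x.2)).1 ^ 2 + (A (x.1 - x.2)).2 ^ 2 := by positivity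
    linarith
  · exact Eventually.of_forall fun x => (exp_pos _).le

include hA in
lemma cont_cfDiff (μ ρ : Measure (ℝ × ℝ)) [IsProbabilityMeasure μ] [IsProbabilityMeasure ρ] :
    Continuous (cfDiff A μ ρ) := by
  have := cont_cos_int hA μ
  have := cont_cos_int hA ρ
  have := cont_sin_int hA μ
  have := cont_sin_int hA ρ
  unfold cfDiff; fun_prop

lemma abs_int_le {μ : Measure (ℝ × ℝ)} [IsProbabilityMeasure μ] {f : ℝ × ℝ → ℝ}
    (hb : ∀ x, |f x| ≤ 1) : |∫ x, f x ∂μ| ≤ 1 := by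
  have := norm_integral_le_of_norm_le_const (μ := μ) (f := f) (C := 1)
    (Eventually.of_forall fun x => (hb x : ‖f x‖ ≤ 1))
  simpa using this

include hA hsub in
/-- The Gaussian energy of `μ - ρ` is the Gaussian average of `cfDiff`. -/
lemma gker_identity (μ ρ : Measure (ℝ × ℝ)) [IsProbabilityMeasure μ] [IsProbabilityMeasure ρ] :
    (∫ p, gker A (p.1 - p.2) ∂(μ.prod μ)) + ∫ p, gker A (p.1 - p.2) ∂(ρ.prod ρ) =
    (∫ p, gker A (p.1 - p.2) ∂(μ.prod ρ)) + (∫ p, gker A (p.1 - p.2) ∂(ρ.prod μ)) +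
      ∫ ξ, cfDiff A μ ρ ξ ∂gam := by
  have c1 := cont_cos_int hA μ
  have c2 := cont_cos_int hA ρ
  have c3 := cont_sin_int hA μ
  have c4 := cont_sin_int hA ρ
  have hi : ∀ (α β : Measure (ℝ × ℝ)) [IsProbabilityMeasure α] [IsProbabilityMeasure β],
      Integrable (fun ξ => (∫ x, cos (phase A ξ x) ∂α) * (∫ x, cos (phase A ξ x) ∂β) +
        (∫ x, sin (phase A ξ x) ∂α) * (∫ x, sin (phase A ξ x) ∂β)) gam := by
    intro α β _ _
    have d1 := cont_cos_int hA α
    have d2 := cont_cos_int hA β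
    have d3 := cont_sin_int hA α
    have d4 := cont_sin_int hA β
    apply Integrable.add
    · apply int_prod_bdd (by fun_prop)
      intro x; rw [abs_mul]
      exact mul_le_one₀ (abs_int_le fun _ => abs_cos_le_one _) (abs_nonneg _)
        (abs_int_le fun _ => abs_cos_le_one _)
    · apply int_prod_bdd (by fun_prop)
      intro x; rw [abs_mul]
      exact mul_le_one₀ (abs_int_le fun _ => abs_sin_le_one _) (abs_nonneg _)
        (abs_int_le fun _ => abs_sin_le_one _)
  have hd : Integrable (cfDiff A μ ρ) gam := by
    have := (((hi μ μ).add (hi ρ ρ)).sub (hi μ ρ)).sub (hi ρ μ)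
    refine this.congr (Eventually.of_forall fun ξ => ?_)
    simp only [Pi.sub_apply, Pi.add_apply, cfDiff]; ring
  rw [gker_int hA hsub, gker_int hA hsub, gker_int hA hsub, gker_int hA hsub,
    ← integral_add (hi _ _) (hi _ _), ← integral_add (hi _ _) (hi _ _)]
  refine Eq.trans ?_ (integral_add ((hi μ ρ).add (hi ρ μ)) hd)
  congr 1; ext ξ
  simp only [cfDiff]; ring

lemma gker_int_nonneg (μ ν : Measure (ℝ × ℝ)) : 0 ≤ ∫ p, gker A (p.1 - p.2) ∂(μ.prod ν) :=
  integral_nonneg fun _ => (exp_pos _).le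

lemma cfDiff_nonneg (μ ρ : Measure (ℝ × ℝ)) (ξ : ℝ × ℝ) : 0 ≤ cfDiff A μ ρ ξ := by
  unfold cfDiff; positivity

include hA hsub in
/-- Gaussian kernels are positive definite on differences of probability measures. -/
lemma gauss_pd (μ ρ : Measure (ℝ × ℝ)) [IsProbabilityMeasure μ] [IsProbabilityMeasure ρ] :
    II (fun z => ENNReal.ofReal (gker A z)) μ ρ + II (fun z => ENNReal.ofReal (gker A z)) ρ μ ≤
      II (fun z => ENNReal.ofReal (gker A z)) μ μ + II (fun z => ENNReal.ofReal (gker A z)) ρ ρ := by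
  simp only [II_gker hA]
  rw [← ENNReal.ofReal_add (gker_int_nonneg _ _) (gker_int_nonneg _ _),
    ← ENNReal.ofReal_add (gker_int_nonneg _ _) (gker_int_nonneg _ _), gker_identity hA hsub]
  apply ENNReal.ofReal_le_ofReal
  have : 0 ≤ ∫ ξ, cfDiff A μ ρ ξ ∂gam := integral_nonneg (cfDiff_nonneg μ ρ)
  linarith

lemma volume_ac_gam : (volume : Measure (ℝ × ℝ)) ≪ gam :=
  Measure.AbsolutelyContinuous.prod
    (ProbabilityTheory.gaussianReal_absolutelyContinuous' 0 one_ne_zero)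
    (ProbabilityTheory.gaussianReal_absolutelyContinuous' 0 one_ne_zero)

include hA hsub in
/-- Equality for a Gaussian kernel forces the characteristic functions to agree. -/
lemma gauss_eq (μ ρ : Measure (ℝ × ℝ)) [IsProbabilityMeasure μ] [IsProbabilityMeasure ρ]
    (h : II (fun z => ENNReal.ofReal (gker A z)) μ ρ + II (fun z => ENNReal.ofReal (gker A z)) ρ μ =
      II (fun z => ENNReal.ofReal (gker A z)) μ μ + II (fun z => ENNReal.ofReal (gker A z)) ρ ρ)
    (ξ : ℝ × ℝ) : cfDiff A μ ρ ξ = 0 := by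
  simp only [II_gker hA] at h
  rw [← ENNReal.ofReal_add (gker_int_nonneg _ _) (gker_int_nonneg _ _),
    ← ENNReal.ofReal_add (gker_int_nonneg _ _) (gker_int_nonneg _ _),
    ENNReal.ofReal_eq_ofReal_iff (add_nonneg (gker_int_nonneg _ _) (gker_int_nonneg _ _))
      (add_nonneg (gker_int_nonneg _ _) (gker_int_nonneg _ _)), gker_identity hA hsub] at h
  have h0 : ∫ ξ, cfDiff A μ ρ ξ ∂gam = 0 := by linarith
  have hcont := cont_cfDiff hA μ ρ
  have hInt : Integrable (cfDiff A μ ρ) gam := by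
    apply Integrable.of_bound (C := 8) hcont.aestronglyMeasurable
    refine Eventually.of_forall fun ξ => ?_
    rw [norm_of_nonneg (cfDiff_nonneg μ ρ ξ), cfDiff]
    have b1 := abs_le.1 (abs_int_le (μ := μ) fun x => abs_cos_le_one (phase A ξ x))
    have b2 := abs_le.1 (abs_int_le (μ := ρ) fun x => abs_cos_le_one (phase A ξ x))
    have b3 := abs_le.1 (abs_int_le (μ := μ) fun x => abs_sin_le_one (phase A ξ x))
    have b4 := abs_le.1 (abs_int_le (μ := ρ) fun x => abs_sin_le_one (phase A ξ x))
    have k1 : ∀ u v : ℝ, -1 ≤ u ∧ u ≤ 1 → -1 ≤ v ∧ v ≤ 1 → (u - v) ^ 2 ≤ 4 := fun u v hu hv => by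
      nlinarith [hu.1, hu.2, hv.1, hv.2]
    linarith [k1 _ _ b1 b2, k1 _ _ b3 b4]
  have hae := (integral_eq_zero_iff_of_nonneg (cfDiff_nonneg μ ρ) hInt).1 h0
  have hae2 : cfDiff A μ ρ =ᵐ[volume] fun _ => (0 : ℝ) := volume_ac_gam.ae_eq hae
  exact congrFun ((hcont.ae_eq_iff_eq volume continuous_const).1 hae2) ξ

end Gauss

/-! ### Anisotropic kernels as superpositions of Gaussians -/

/-- The angular profile of the elongated Gaussians: small near `β ∈ π ℤ` when `ε` is small. -/
def Qe (ε β : ℝ) : ℝ := sin β ^ 2 + ε ^ 2 * cos β ^ 2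

lemma Qe_pos {ε : ℝ} (hε : 0 < ε) (β : ℝ) : 0 < Qe ε β := by
  unfold Qe
  rcases eq_or_ne (sin β) 0 with h | h
  · have := cos_sq_add_sin_sq β
    rw [h] at this ⊢
    have h2 : cos β ^ 2 = 1 := by linarith
    rw [h2]; positivity
  · positivity

/-- The total angular mass of the profile. -/
def cE (s ε : ℝ) : ℝ := ∫ β in (-π)..π, Qe ε β ^ (-s / 2)

lemma cont_Qe_rpow {ε : ℝ} (hε : 0 < ε) (p : ℝ) : Continuous fun β => Qe ε β ^ p := by
  apply Continuous.rpow_const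
  · unfold Qe; fun_prop
  · intro β; exact Or.inl (Qe_pos hε β).ne'

/-- The hypothesis `1 ≤ s` enters here: `|sin β|^{-s}` is not integrable, so the mass of the
profile diverges as `ε → 0`. -/
lemma cE_large {s : ℝ} (hs1 : 1 ≤ s) (hs2 : s < 2) {T : ℝ} (hT : 0 ≤ T) :
    ∃ ε : ℝ, 0 < ε ∧ T ≤ cE s ε := by
  refine ⟨exp (-(2 * T)), exp_pos _, ?_⟩
  set ε := exp (-(2 * T)) with hεd
  have hε : 0 < ε := exp_pos _
  have hε1 : ε ≤ 1 := exp_le_one_iff.2 (by linarith)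
  have hpi := pi_gt_three
  have h1 : ∫ β in ε..1, 2⁻¹ * β⁻¹ = T := by
    rw [intervalIntegral.integral_const_mul, integral_inv_of_pos hε one_pos, hεd, one_div,
      ← exp_neg, log_exp]; ring
  have h2 : ∫ β in ε..1, Qe ε β ^ (-s / 2) ≤ cE s ε := by
    apply intervalIntegral.integral_mono_interval (by linarith) hε1 (by linarith)
    · exact Eventually.of_forall fun β => (rpow_pos_of_pos (Qe_pos hε β) _).le
    · exact (cont_Qe_rpow hε _).intervalIntegrable _ _
  refine le_trans (h1.symm.le.trans ?_) h2
  apply intervalIntegral.integral_mono_on hε1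
  · apply ContinuousOn.intervalIntegrable
    rw [uIcc_of_le hε1]
    exact continuousOn_const.mul (continuousOn_inv₀.mono fun x hx => (hε.trans_le hx.1).ne')
  · exact (cont_Qe_rpow hε _).intervalIntegrable _ _
  · intro β hβ
    have hβ0 : 0 < β := hε.trans_le hβ.1
    have q1 : Qe ε β ≤ 2 * β ^ 2 := by
      have a1 : sin β ^ 2 ≤ β ^ 2 := sq_le_sq' (by
        have := sin_nonneg_of_nonneg_of_le_pi hβ0.le (by linarith [hβ.2]); linarith) (sin_le hβ0.le)
      have a2 : ε ^ 2 * cos β ^ 2 ≤ β ^ 2 := by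
        have : ε ^ 2 ≤ β ^ 2 := pow_le_pow_left₀ hε.le hβ.1 2
        nlinarith [cos_sq_le_one β, sq_nonneg (cos β), sq_nonneg ε]
      unfold Qe; linarith
    calc 2⁻¹ * β⁻¹ = (2 : ℝ) ^ (-1 : ℝ) * β ^ (-1 : ℝ) := by rw [rpow_neg_one, rpow_neg_one]
      _ ≤ 2 ^ (-s / 2) * β ^ (-s) := by
        apply mul_le_mul
        · exact rpow_le_rpow_of_exponent_le (by norm_num) (by linarith)
        · exact rpow_le_rpow_of_exponent_ge hβ0 hβ.2 (by linarith)
        · positivity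
        · positivity
      _ = (2 * β ^ 2) ^ (-s / 2) := by
        rw [mul_rpow (by norm_num) (by positivity), ← rpow_natCast β 2, ← rpow_mul hβ0.le]
        congr 2; push_cast; ring
      _ ≤ _ := rpow_le_rpow_of_nonpos (Qe_pos hε β) q1 (by linarith)

/-- Away from its singularity the profile stays bounded: `s < 2` makes `sin² β · |sin β|^{-s}`
bounded uniformly in `ε`. -/
lemma sin_sq_mul_Qe {s ε : ℝ} (hs0 : 0 ≤ s) (hs2 : s < 2) (β : ℝ) :
    sin β ^ 2 * Qe ε β ^ (-s / 2) ≤ 1 := by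
  rcases eq_or_ne (sin β) 0 with h | h
  · rw [h]; simp
  have h0 : 0 < sin β ^ 2 := by positivity
  have hQ : sin β ^ 2 ≤ Qe ε β := by
    have : 0 ≤ ε ^ 2 * cos β ^ 2 := by positivity
    unfold Qe; linarith
  calc sin β ^ 2 * Qe ε β ^ (-s / 2) ≤ sin β ^ 2 * (sin β ^ 2) ^ (-s / 2) :=
        mul_le_mul_of_nonneg_left (rpow_le_rpow_of_nonpos h0 hQ (by linarith)) h0.le
    _ = (sin β ^ 2) ^ (1 + -s / 2) := by rw [rpow_add h0, rpow_one]
    _ ≤ 1 := rpow_le_one h0.le (sin_sq_le_one β) (by linarith)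

/-- By `π`-periodicity the oscillation of a Lipschitz `Ω` is controlled by `|sin (θ - β)|`. -/
lemma osc_bound {Ω : ℝ → ℝ} (hpi : ∀ θ, Ω (θ + π) = Ω θ) {L : ℝ} (hL0 : 0 ≤ L)
    (hL : ∀ x y, |Ω x - Ω y| ≤ L * |x - y|) (θ β : ℝ) :
    |Ω β - Ω θ| ≤ L * (π / 2) * |sin (θ - β)| := by
  set n := round ((θ - β) / π) with hn
  have hpp := pi_pos
  have h1 : |θ - β - n * π| ≤ π / 2 := by
    have := abs_sub_round ((θ - β) / π)
    have e : θ - β - n * π = ((θ - β) / π - n) * π := by field_simp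
    rw [e, abs_mul, abs_of_pos hpp]
    nlinarith
  have h2 := mul_abs_le_abs_sin h1
  have h3 : |sin (θ - β - n * π)| = |sin (θ - β)| := by
    rw [sin_sub_int_mul_pi, abs_mul, abs_neg_one_zpow, one_mul]
  have h4 : Ω (β + n * π) = Ω β := (show Function.Periodic Ω π from hpi).int_mul n β
  have h5 := hL (β + n * π) θ
  rw [h4] at h5
  have h6 : |β + n * π - θ| = |θ - β - n * π| := by rw [← abs_neg]; congr 1; ring
  rw [h6] at h5
  rw [h3] at h2
  have h7 : |θ - β - n * π| ≤ π / 2 * |sin (θ - β)| := by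
    have : |θ - β - n * π| = π / 2 * (2 / π * |θ - β - n * π|) := by field_simp
    rw [this]; gcongr
  calc _ ≤ _ := h5
    _ ≤ L * (π / 2 * |sin (θ - β)|) := by gcongr
    _ = _ := by ring

lemma integral_shift {g : ℝ → ℝ} (hg : Function.Periodic g (2 * π)) (θ : ℝ) :
    ∫ β in (-π)..π, g (θ - β) = ∫ β in (-π)..π, g β := by
  rw [intervalIntegral.integral_comp_sub_left]
  have := hg.intervalIntegral_add_eq (θ - π) (-π)
  rw [show θ - π + 2 * π = θ - -π by ring, show -π + 2 * π = π by ring] at this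
  exact this

/-- The angular function produced by superposing elongated Gaussians with weights `Ω`. -/
def angInt (s : ℝ) (Ω : ℝ → ℝ) (ε θ : ℝ) : ℝ := ∫ β in (-π)..π, Ω β * Qe ε (θ - β) ^ (-s / 2)

/-- Since the profile concentrates at multiples of `π`, `angInt` is a multiplicative
approximation of a multiple of `Ω`. -/
lemma angInt_approx {s : ℝ} (hs1 : 1 ≤ s) (hs2 : s < 2) {Ω : ℝ → ℝ} (hc : Continuous Ω)
    (hpi : ∀ θ, Ω (θ + π) = Ω θ) {m : ℝ} (hm0 : 0 < m) (hm : ∀ θ, m ≤ Ω θ) {L : ℝ} (hL0 : 0 ≤ L)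
    (hL : ∀ x y, |Ω x - Ω y| ≤ L * |x - y|) {δ : ℝ} (hδ : 0 < δ) :
    ∃ ε : ℝ, 0 < ε ∧ 0 < cE s ε ∧ ∀ θ, (1 - δ) * Ω θ * cE s ε ≤ angInt s Ω ε θ ∧
      angInt s Ω ε θ ≤ (1 + δ) * Ω θ * cE s ε := by
  set D := L * (π / 2) with hD
  set η := δ * m / 2 with hη
  have hη0 : 0 < η := by positivity
  set B := D ^ 2 / (4 * η) with hB
  have hB0 : 0 ≤ B := by positivity
  have hpp := pi_pos
  obtain ⟨ε, hε, hcE⟩ := cE_large hs1 hs2 (T := 2 * π * B / η + 1) (by positivity)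
  have hT : 0 ≤ 2 * π * B / η := by positivity
  have hc0 : 0 < cE s ε := by linarith
  refine ⟨ε, hε, hc0, fun θ => ?_⟩
  have hper : Function.Periodic (fun β => Qe ε β ^ (-s / 2)) (2 * π) := by
    intro β; simp only [Qe, sin_add_two_pi, cos_add_two_pi]
  have hsh : ∫ β in (-π)..π, Qe ε (θ - β) ^ (-s / 2) = cE s ε := integral_shift hper θ
  have hcq : Continuous fun β => Qe ε (θ - β) ^ (-s / 2) :=
    (cont_Qe_rpow hε _).comp (by fun_prop : Continuous fun β : ℝ => θ - β)
  have hdiff : |angInt s Ω ε θ - Ω θ * cE s ε| ≤ η * cE s ε + 2 * π * B := by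
    have e1 : angInt s Ω ε θ - Ω θ * cE s ε =
        ∫ β in (-π)..π, (Ω β - Ω θ) * Qe ε (θ - β) ^ (-s / 2) := by
      rw [← hsh, angInt, ← intervalIntegral.integral_const_mul, ← intervalIntegral.integral_sub]
      · congr 1; ext β; ring
      · exact (hc.mul hcq).intervalIntegrable _ _
      · exact (continuous_const.mul hcq).intervalIntegrable _ _
    have e2 : η * cE s ε + 2 * π * B =
        ∫ β in (-π)..π, (η * Qe ε (θ - β) ^ (-s / 2) + B) := by
      have i1 : IntervalIntegrable (fun β => η * Qe ε (θ - β) ^ (-s / 2)) volume (-π) π :=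
        (continuous_const.mul hcq).intervalIntegrable _ _
      have i2 : IntervalIntegrable (fun _ : ℝ => B) volume (-π) π :=
        continuous_const.intervalIntegrable _ _
      rw [intervalIntegral.integral_add i1 i2, intervalIntegral.integral_const_mul, hsh, intervalIntegral.integral_const,
        smul_eq_mul]
      ring
    rw [e1, e2]
    refine (intervalIntegral.abs_integral_le_integral_abs (by linarith)).trans ?_
    apply intervalIntegral.integral_mono_on (by linarith)
    · exact ((hc.sub continuous_const).mul hcq).abs.intervalIntegrable _ _
    · exact ((continuous_const.mul hcq).add continuous_const).intervalIntegrable _ _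
    intro β _
    have hq : 0 < Qe ε (θ - β) ^ (-s / 2) := rpow_pos_of_pos (Qe_pos hε _) _
    -- Young's inequality, with `B` chosen to complete the square.
    have k1 : |Ω β - Ω θ| ≤ η + B * sin (θ - β) ^ 2 := by
      refine (osc_bound hpi hL0 hL θ β).trans ?_
      rw [← hD, ← sq_abs (sin (θ - β))]
      have : η + B * |sin (θ - β)| ^ 2 - D * |sin (θ - β)| =
          (2 * η - D * |sin (θ - β)|) ^ 2 / (4 * η) := by
        rw [hB]; field_simp; ring
      have h0 : 0 ≤ (2 * η - D * |sin (θ - β)|) ^ 2 / (4 * η) := by positivity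
      linarith
    have k2 := sin_sq_mul_Qe (s := s) (ε := ε) (by linarith) hs2 (θ - β)
    rw [abs_mul, abs_of_pos hq]
    nlinarith [mul_le_mul_of_nonneg_right k1 hq.le, mul_le_mul_of_nonneg_left k2 hB0]
  have h3 : 2 * π * B ≤ η * cE s ε := by
    have : 2 * π * B / η ≤ cE s ε := by linarith
    rw [div_le_iff₀ hη0] at this; linarith
  have h4 : 2 * (η * cE s ε) ≤ δ * Ω θ * cE s ε := by
    have : δ * m ≤ δ * Ω θ := by gcongr; exact hm θ
    have h5 : 2 * η = δ * m := by rw [hη]; ring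
    nlinarith
  have h6 := abs_le.1 hdiff
  constructor <;> nlinarith [h6.1, h6.2]

/-- The integral over the Gaussian scale. -/
lemma scale_int {s : ℝ} (hs0 : 0 < s) {q : ℝ} (hq : 0 < q) :
    ∫⁻ l in Ioi (0 : ℝ), ENNReal.ofReal (l ^ (s / 2 - 1)) * ENNReal.ofReal (exp (-(l * q))) =
      ENNReal.ofReal (Gamma (s / 2) * q ^ (-s / 2)) := by
  have h1 := integral_rpow_mul_exp_neg_mul_Ioi (a := s / 2) (r := q) (by linarith) hq
  have hG := Gamma_pos_of_pos (by linarith : 0 < s / 2)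
  have hv : (1 / q) ^ (s / 2) * Gamma (s / 2) = Gamma (s / 2) * q ^ (-s / 2) := by
    rw [one_div, inv_rpow hq.le, ← rpow_neg hq.le, mul_comm]; congr 2; ring
  rw [hv] at h1
  rw [← h1, ofReal_integral_eq_lintegral_ofReal]
  · refine setLIntegral_congr_fun measurableSet_Ioi fun l (hl : 0 < l) => ?_
    rw [← ENNReal.ofReal_mul (by positivity), mul_comm l]
  · by_contra hcon
    rw [integral_undef hcon] at h1
    have : 0 < Gamma (s / 2) * q ^ (-s / 2) := by positivity
    linarith
  · refine (ae_restrict_iff' measurableSet_Ioi).2 (Eventually.of_forall fun l (hl : 0 < l) => ?_)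
    simp only [Pi.zero_apply]; positivity

lemma scale_int_zero (s : ℝ) :
    ∫⁻ l in Ioi (0 : ℝ), ENNReal.ofReal (l ^ (s / 2 - 1)) = ⊤ := by
  by_contra hcon
  apply not_integrableOn_Ioi_rpow (s / 2 - 1)
  refine ⟨by fun_prop, ?_⟩
  rw [hasFiniteIntegral_iff_ofReal]
  · exact lt_top_iff_ne_top.2 hcon
  · refine (ae_restrict_iff' measurableSet_Ioi).2 (Eventually.of_forall fun l (hl : 0 < l) => ?_)
    simp only [Pi.zero_apply]; positivity

/-- The quadratic form of the Gaussian elongated in the direction `e_β`. -/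
def qf (ε β : ℝ) (z : ℝ × ℝ) : ℝ :=
  (-z.1 * sin β + z.2 * cos β) ^ 2 + ε ^ 2 * (z.1 * cos β + z.2 * sin β) ^ 2

/-- The superposition of Gaussians over directions (with weight `Ω`) and scales. -/
def supK (s : ℝ) (Ω : ℝ → ℝ) (ε : ℝ) (z : ℝ × ℝ) : ℝ≥0∞ :=
  ∫⁻ t : ℝ × ℝ in Ioo (-π) π ×ˢ Ioi 0, ENNReal.ofReal (Ω t.1) * ENNReal.ofReal (t.2 ^ (s / 2 - 1)) *
    ENNReal.ofReal (exp (-(t.2 * qf ε t.1 z)))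

lemma qf_polar (ε β r θ : ℝ) : qf ε β (r * cos θ, r * sin θ) = r ^ 2 * Qe ε (θ - β) := by
  unfold qf Qe
  rw [sin_sub, cos_sub]; ring

lemma supK_iter {s : ℝ} {Ω : ℝ → ℝ} (hc : Continuous Ω) (ε : ℝ) (z : ℝ × ℝ) :
    supK s Ω ε z = ∫⁻ β in Ioo (-π) π, ENNReal.ofReal (Ω β) * ∫⁻ l in Ioi (0 : ℝ),
      ENNReal.ofReal (l ^ (s / 2 - 1)) * ENNReal.ofReal (exp (-(l * qf ε β z))) := by
  have hm : Measurable fun t : ℝ × ℝ => ENNReal.ofReal (Ω t.1) *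
      ENNReal.ofReal (t.2 ^ (s / 2 - 1)) * ENNReal.ofReal (exp (-(t.2 * qf ε t.1 z))) := by
    have := hc.measurable
    unfold qf; fun_prop
  rw [supK, Measure.volume_eq_prod, ← Measure.prod_restrict, lintegral_prod _ hm.aemeasurable]
  congr 1; ext β
  rw [← lintegral_const_mul _ (by fun_prop)]
  simp only [mul_assoc]

lemma supK_zero {s : ℝ} {Ω : ℝ → ℝ} (hc : Continuous Ω) {m : ℝ} (hm0 : 0 < m)
    (hm : ∀ θ, m ≤ Ω θ) (ε : ℝ) : supK s Ω ε 0 = ⊤ := by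
  rw [supK_iter hc]
  have : ∀ β, qf ε β 0 = 0 := by intro β; simp [qf]
  simp only [this, mul_zero, neg_zero, exp_zero, ENNReal.ofReal_one, mul_one, scale_int_zero]
  have h2 : ∀ β, ENNReal.ofReal (Ω β) * ⊤ = ⊤ := fun β =>
    ENNReal.mul_top (by simpa using hm0.trans_le (hm β))
  simp only [h2, lintegral_const, Measure.restrict_apply MeasurableSet.univ, univ_inter,
    Real.volume_Ioo]
  apply ENNReal.top_mul
  simp; linarith [pi_pos]

lemma supK_polar {s : ℝ} (hs0 : 0 < s) {Ω : ℝ → ℝ} (hc : Continuous Ω) (h0 : ∀ θ, 0 ≤ Ω θ)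
    {ε : ℝ} (hε : 0 < ε) {r : ℝ} (hr : 0 < r) (θ : ℝ) :
    supK s Ω ε (r * cos θ, r * sin θ) =
      ENNReal.ofReal (Gamma (s / 2) * r ^ (-s) * angInt s Ω ε θ) := by
  rw [supK_iter hc]
  have hG := Gamma_pos_of_pos (by linarith : 0 < s / 2)
  have hcq : Continuous fun β => Ω β * Qe ε (θ - β) ^ (-s / 2) :=
    hc.mul ((cont_Qe_rpow hε _).comp (by fun_prop : Continuous fun β : ℝ => θ - β))
  have e : ∀ β, ENNReal.ofReal (Ω β) * ∫⁻ l in Ioi (0 : ℝ),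
      ENNReal.ofReal (l ^ (s / 2 - 1)) *
        ENNReal.ofReal (exp (-(l * qf ε β (r * cos θ, r * sin θ)))) =
      ENNReal.ofReal (Gamma (s / 2) * r ^ (-s) * (Ω β * Qe ε (θ - β) ^ (-s / 2))) := by
    intro β
    have hQ := Qe_pos hε (θ - β)
    rw [qf_polar, scale_int hs0 (by positivity), ← ENNReal.ofReal_mul (h0 β),
      mul_rpow (by positivity) hQ.le, ← rpow_natCast r 2, ← rpow_mul hr.le]
    congr 1
    rw [show ((2 : ℕ) : ℝ) * (-s / 2) = -s by push_cast; ring]; ring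
  simp only [e]
  rw [angInt, ← set_integral_eq, ← integral_const_mul, ofReal_integral_eq_lintegral_ofReal]
  · exact ((hcq.const_mul _).integrableOn_Icc).mono_set Ioo_subset_Icc_self
  · refine Eventually.of_forall fun β => ?_
    have := h0 β
    have := Qe_pos hε (θ - β)
    simp only [Pi.zero_apply]; positivity

/-! ### Positive definiteness of the repulsive kernel -/

section IIlemmas

variable {μ ν : Measure (ℝ × ℝ)}

lemma II_mono {k k' : ℝ × ℝ → ℝ≥0∞} (h : ∀ z, k z ≤ k' z) : II k μ ν ≤ II k' μ ν :=
  lintegral_mono fun _ => lintegral_mono fun _ => h _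

lemma II_const_mul {c : ℝ≥0∞} (hc : c ≠ ⊤) (k : ℝ × ℝ → ℝ≥0∞) :
    II (fun z => c * k z) μ ν = c * II k μ ν := by
  unfold II
  rw [← lintegral_const_mul' _ _ hc]
  congr 1; ext x
  rw [lintegral_const_mul' _ _ hc]

lemma II_add [SFinite ν] {k k' : ℝ × ℝ → ℝ≥0∞} (hk : Measurable k) :
    II (fun z => k z + k' z) μ ν = II k μ ν + II k' μ ν := by
  unfold II
  rw [← lintegral_add_left]
  · congr 1; ext x
    rw [lintegral_add_left]
    fun_prop
  · exact Measurable.lintegral_prod_right' (f := fun p : (ℝ × ℝ) × (ℝ × ℝ) => k (p.1 - p.2))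
      (by fun_prop)

end IIlemmas

/-- The linear change of variables turning `exp (-l * qf ε β)` into the standard Gaussian. -/
def Alin (ε β l : ℝ) (z : ℝ × ℝ) : ℝ × ℝ :=
  (√(2 * l) * (-z.1 * sin β + z.2 * cos β), √(2 * l) * (ε * (z.1 * cos β + z.2 * sin β)))

lemma Alin_cont (ε β l : ℝ) : Continuous (Alin ε β l) := by unfold Alin; fun_prop

lemma Alin_sub (ε β l : ℝ) (x y : ℝ × ℝ) : Alin ε β l (x - y) = Alin ε β l x - Alin ε β l y := by
  unfold Alin; ext <;> simp <;> ring

/-- The Gaussian with direction `t.1` and scale `t.2`. -/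
def gk (ε : ℝ) (t z : ℝ × ℝ) : ℝ≥0∞ := ENNReal.ofReal (exp (-(t.2 * qf ε t.1 z)))

lemma gk_eq (ε : ℝ) {t : ℝ × ℝ} (ht : 0 < t.2) :
    gk ε t = fun z => ENNReal.ofReal (gker (Alin ε t.1 t.2) z) := by
  ext z
  have h : √(2 * t.2) ^ 2 = 2 * t.2 := sq_sqrt (by linarith)
  unfold gk gker Alin qf
  simp only [mul_pow, h]
  congr 2; ring

lemma gk_meas (ε : ℝ) : Measurable fun p : (ℝ × ℝ) × (ℝ × ℝ) => gk ε p.1 p.2 := by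
  unfold gk qf; fun_prop

/-- The weight of the superposition. -/
def wt (s : ℝ) (Ω : ℝ → ℝ) (t : ℝ × ℝ) : ℝ≥0∞ :=
  ENNReal.ofReal (Ω t.1) * ENNReal.ofReal (t.2 ^ (s / 2 - 1))

lemma wt_meas (s : ℝ) {Ω : ℝ → ℝ} (hc : Continuous Ω) : Measurable (wt s Ω) := by
  have := hc.measurable
  unfold wt; fun_prop

/-- The parameter domain (angle, scale). -/
def Sdom : Set (ℝ × ℝ) := Ioo (-π) π ×ˢ Ioi 0

lemma Sdom_meas : MeasurableSet Sdom := measurableSet_Ioo.prod measurableSet_Ioi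

lemma II_gk_meas (ε : ℝ) (μ ν : Measure (ℝ × ℝ)) [SFinite μ] [SFinite ν] :
    Measurable fun t => II (gk ε t) μ ν := by
  unfold II
  have h := gk_meas ε
  refine Measurable.lintegral_prod_right' (f := fun p : (ℝ × ℝ) × (ℝ × ℝ) =>
    ∫⁻ y, gk ε p.1 (p.2 - y) ∂ν) ?_
  refine Measurable.lintegral_prod_right' (f := fun p : ((ℝ × ℝ) × (ℝ × ℝ)) × (ℝ × ℝ) =>
    gk ε p.1.1 (p.1.2 - p.2)) ?_
  exact h.comp (by fun_prop : Measurable fun p : ((ℝ × ℝ) × (ℝ × ℝ)) × (ℝ × ℝ) =>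
    (p.1.1, p.1.2 - p.2))

lemma II_supK {s : ℝ} {Ω : ℝ → ℝ} (hc : Continuous Ω) (ε : ℝ) (μ ν : Measure (ℝ × ℝ))
    [SFinite μ] [SFinite ν] :
    II (supK s Ω ε) μ ν = ∫⁻ t in Sdom, wt s Ω t * II (gk ε t) μ ν := by
  have h := gk_meas ε
  have hw := wt_meas s hc
  have e1 : ∀ x, ∫⁻ y, supK s Ω ε (x - y) ∂ν =
      ∫⁻ t in Sdom, wt s Ω t * ∫⁻ y, gk ε t (x - y) ∂ν := by
    intro x
    have hm : Measurable fun p : (ℝ × ℝ) × (ℝ × ℝ) => wt s Ω p.2 * gk ε p.2 (x - p.1) :=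
      (hw.comp measurable_snd).mul (h.comp (by fun_prop :
        Measurable fun p : (ℝ × ℝ) × (ℝ × ℝ) => (p.2, x - p.1)))
    calc ∫⁻ y, supK s Ω ε (x - y) ∂ν
        = ∫⁻ y, (∫⁻ t in Sdom, wt s Ω t * gk ε t (x - y)) ∂ν := rfl
      _ = ∫⁻ t in Sdom, ∫⁻ y, wt s Ω t * gk ε t (x - y) ∂ν :=
        lintegral_lintegral_swap (μ := ν) (ν := volume.restrict Sdom)
          (f := fun y t => wt s Ω t * gk ε t (x - y)) hm.aemeasurable
      _ = _ := by
        congr 1; ext t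
        rw [lintegral_const_mul]
        exact h.comp (by fun_prop : Measurable fun y : ℝ × ℝ => (t, x - y))
  have hm2 : Measurable fun p : (ℝ × ℝ) × (ℝ × ℝ) => ∫⁻ y, gk ε p.2 (p.1 - y) ∂ν :=
    Measurable.lintegral_prod_right' (f := fun p : ((ℝ × ℝ) × (ℝ × ℝ)) × (ℝ × ℝ) =>
      gk ε p.1.2 (p.1.1 - p.2)) (h.comp (by fun_prop :
        Measurable fun p : ((ℝ × ℝ) × (ℝ × ℝ)) × (ℝ × ℝ) => (p.1.2, p.1.1 - p.2)))
  rw [II]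
  simp only [e1]
  rw [lintegral_lintegral_swap (f := fun x t => wt s Ω t * ∫⁻ y, gk ε t (x - y) ∂ν)
    ((hw.comp measurable_snd).mul hm2).aemeasurable]
  congr 1; ext t
  rw [lintegral_const_mul, II]
  exact hm2.comp (by fun_prop : Measurable fun x : ℝ × ℝ => (x, t))

section PD

variable (μ ρ : Measure (ℝ × ℝ)) [IsProbabilityMeasure μ] [IsProbabilityMeasure ρ]

lemma gk_pd (ε : ℝ) {t : ℝ × ℝ} (ht : 0 < t.2) :
    II (gk ε t) μ ρ + II (gk ε t) ρ μ ≤ II (gk ε t) μ μ + II (gk ε t) ρ ρ := by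
  rw [gk_eq ε ht]
  exact gauss_pd (Alin_cont _ _ _) (Alin_sub _ _ _) μ ρ

lemma sum_supK {s : ℝ} {Ω : ℝ → ℝ} (hc : Continuous Ω) (ε : ℝ) (μ₁ ν₁ μ₂ ν₂ : Measure (ℝ × ℝ))
    [SFinite μ₁] [SFinite ν₁] [SFinite μ₂] [SFinite ν₂] :
    II (supK s Ω ε) μ₁ ν₁ + II (supK s Ω ε) μ₂ ν₂ =
      ∫⁻ t in Sdom, wt s Ω t * (II (gk ε t) μ₁ ν₁ + II (gk ε t) μ₂ ν₂) := by
  rw [II_supK hc, II_supK hc, ← lintegral_add_left]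
  · simp only [mul_add]
  · exact (wt_meas s hc).mul (II_gk_meas ε _ _)

lemma supK_pd {s : ℝ} {Ω : ℝ → ℝ} (hc : Continuous Ω) (ε : ℝ) :
    II (supK s Ω ε) μ ρ + II (supK s Ω ε) ρ μ ≤ II (supK s Ω ε) μ μ + II (supK s Ω ε) ρ ρ := by
  rw [sum_supK hc, sum_supK hc]
  refine setLIntegral_mono' Sdom_meas fun t ht => ?_
  refine mul_le_mul_right ?_ _
  exact gk_pd μ ρ ε ht.2

variable {μ ρ}

lemma charFunDual_eq_of_cos_sin {L : StrongDual ℝ (ℝ × ℝ)}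
    (h1 : ∫ x, cos (L x) ∂μ = ∫ x, cos (L x) ∂ρ) (h2 : ∫ x, sin (L x) ∂μ = ∫ x, sin (L x) ∂ρ) :
    charFunDual μ L = charFunDual ρ L := by
  have key : ∀ (m : Measure (ℝ × ℝ)) [IsProbabilityMeasure m],
      charFunDual m L = ((∫ x, cos (L x) ∂m : ℝ) : ℂ) + ((∫ x, sin (L x) ∂m : ℝ) : ℂ) * Complex.I := by
    intro m _
    have i1 : Integrable (fun x => cos (L x)) m :=
      int_prod_bdd (by fun_prop) fun x => abs_cos_le_one _
    have i2 : Integrable (fun x => sin (L x)) m :=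
      int_prod_bdd (by fun_prop) fun x => abs_sin_le_one _
    rw [charFunDual_apply]
    simp only [Complex.exp_mul_I, ← Complex.ofReal_cos, ← Complex.ofReal_sin]
    rw [integral_add i1.ofReal (i2.ofReal.mul_const _), integral_mul_const,
      ← integral_complex_ofReal, ← integral_complex_ofReal]
  rw [key μ, key ρ, h1, h2]

/-- Equality for one nondegenerate Gaussian kernel forces the measures to coincide. -/
lemma eq_of_gk_eq {t : ℝ × ℝ} (ht : 0 < t.2)
    (h : II (gk 1 t) μ ρ + II (gk 1 t) ρ μ = II (gk 1 t) μ μ + II (gk 1 t) ρ ρ) : μ = ρ := by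
  rw [gk_eq 1 ht] at h
  apply Measure.ext_of_charFunDual
  ext L
  set l1 := L (1, 0) with hl1
  set l2 := L (0, 1) with hl2
  have hL : ∀ v : ℝ × ℝ, L v = l1 * v.1 + l2 * v.2 := by
    intro v
    have : v = v.1 • ((1 : ℝ), (0 : ℝ)) + v.2 • ((0 : ℝ), (1 : ℝ)) := by ext <;> simp
    conv_lhs => rw [this]
    rw [map_add, map_smul, map_smul, smul_eq_mul, smul_eq_mul]; ring
  have hr : √(2 * t.2) ≠ 0 := by
    have : 0 < √(2 * t.2) := sqrt_pos.2 (by linarith)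
    exact this.ne'
  -- Solve `phase ξ = L`, which is possible since the Gaussian is nondegenerate.
  set ξ : ℝ × ℝ := ((-l1 * sin t.1 + l2 * cos t.1) / √(2 * t.2),
    (l1 * cos t.1 + l2 * sin t.1) / √(2 * t.2)) with hξ
  have hph : ∀ x, phase (Alin 1 t.1 t.2) ξ x = L x := by
    intro x
    rw [hL]; unfold phase Alin
    simp only [hξ]
    field_simp
    have := sin_sq_add_cos_sq t.1
    linear_combination (l1 * x.1 + l2 * x.2) * this
  have h0 := gauss_eq (Alin_cont _ _ _) (Alin_sub _ _ _) μ ρ h ξ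
  unfold cfDiff at h0
  simp only [hph] at h0
  apply charFunDual_eq_of_cos_sin <;> nlinarith

/-- Equality for the isotropic kernel forces the measures to coincide. -/
lemma eq_of_supK_eq {s : ℝ}
    (hfin : II (supK s (fun _ => 1) 1) μ ρ + II (supK s (fun _ => 1) 1) ρ μ ≠ ⊤)
    (h : II (supK s (fun _ => 1) 1) μ ρ + II (supK s (fun _ => 1) 1) ρ μ =
      II (supK s (fun _ => 1) 1) μ μ + II (supK s (fun _ => 1) 1) ρ ρ) : μ = ρ := by
  have hc : Continuous fun _ : ℝ => (1 : ℝ) := continuous_const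
  rw [sum_supK hc] at hfin
  rw [sum_supK hc, sum_supK hc] at h
  have hae := ae_eq_of_ae_le_of_lintegral_le (μ := volume.restrict Sdom)
    (f := fun t => wt s (fun _ => 1) t * (II (gk 1 t) μ ρ + II (gk 1 t) ρ μ))
    (g := fun t => wt s (fun _ => 1) t * (II (gk 1 t) μ μ + II (gk 1 t) ρ ρ))
    ((ae_restrict_iff' Sdom_meas).2 (Eventually.of_forall fun t ht =>
      mul_le_mul_right (gk_pd μ ρ 1 ht.2) _)) hfin
    ((wt_meas s hc).mul ((II_gk_meas 1 _ _).add (II_gk_meas 1 _ _))).aemeasurable h.ge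
  have hS : volume Sdom ≠ 0 := by
    have ho : IsOpen Sdom := isOpen_Ioo.prod isOpen_Ioi
    exact ho.measure_ne_zero _ ⟨(0, 1), ⟨⟨by simp [pi_pos], by simp [pi_pos]⟩, by simp⟩⟩
  have hne : NeBot (ae (volume.restrict Sdom)) := by
    rw [ae_neBot]; exact fun h => hS (Measure.restrict_eq_zero.1 h)
  obtain ⟨t, ht, htS⟩ := (hae.and (ae_restrict_mem Sdom_meas)).exists
  have ht2 : 0 < t.2 := htS.2
  apply eq_of_gk_eq ht2
  refine (ENNReal.mul_right_inj (a := wt s (fun _ => 1) t) ?_ ?_).1 ht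
  · have : 0 < t.2 ^ (s / 2 - 1) := by positivity
    simp [wt, this]
  · exact ENNReal.mul_ne_top ENNReal.ofReal_ne_top ENNReal.ofReal_ne_top

end PD

lemma Krep_zero (s : ℝ) (Ω : ℝ → ℝ) : Krep s Ω 0 = ⊤ := by simp [Krep]

lemma Krep_of_ne (s : ℝ) (Ω : ℝ → ℝ) {z : ℝ × ℝ} (hz : z ≠ 0) :
    Krep s Ω z = ENNReal.ofReal (nrm z ^ (-s) * Ω (ang z)) := by simp [Krep, kap, hz]

lemma supK_iso {s : ℝ} (hs0 : 0 < s) (z : ℝ × ℝ) :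
    supK s (fun _ => 1) 1 z = ENNReal.ofReal (Gamma (s / 2) * (2 * π)) * Krep s (fun _ => 1) z := by
  have hG := Gamma_pos_of_pos (by linarith : 0 < s / 2)
  have hpp := pi_pos
  have hGp : 0 < Gamma (s / 2) * (2 * π) := by positivity
  rcases eq_or_ne z 0 with h | h
  · rw [h, supK_zero continuous_const one_pos (fun _ => le_rfl), Krep_zero, ENNReal.mul_top]
    simpa using hGp
  · have hz := nrm_pos h
    rw [Krep_of_ne _ _ h, ← ENNReal.ofReal_mul hGp.le]
    conv_lhs => rw [polar_repr (x := z)]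
    rw [supK_polar hs0 continuous_const (fun _ => zero_le_one) one_pos hz]
    have : angInt s (fun _ => 1) 1 (ang z) = 2 * π := by
      unfold angInt Qe
      simp; ring
    rw [this]; congr 1; ring

section Krep

variable {s : ℝ} {Ω : ℝ → ℝ} {m L : ℝ}

/-- For every `δ`, the repulsive kernel is, up to factors `1 ± δ`, a superposition of
Gaussians. -/
lemma Krep_approx (hs1 : 1 ≤ s) (hs2 : s < 2) (hc : Continuous Ω)
    (hpi : ∀ θ, Ω (θ + π) = Ω θ) (hm0 : 0 < m) (hm : ∀ θ, m ≤ Ω θ) (hL0 : 0 ≤ L)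
    (hL : ∀ x y, |Ω x - Ω y| ≤ L * |x - y|) {δ : ℝ} (hδ : 0 < δ) (hδ1 : δ < 1) :
    ∃ ε G : ℝ, 0 < G ∧ ∀ z, ENNReal.ofReal (1 - δ) * (ENNReal.ofReal G * Krep s Ω z) ≤ supK s Ω ε z ∧
      supK s Ω ε z ≤ ENNReal.ofReal (1 + δ) * (ENNReal.ofReal G * Krep s Ω z) := by
  obtain ⟨ε, hε, hcE, hε2⟩ := angInt_approx hs1 hs2 hc hpi hm0 hm hL0 hL hδ
  have hG := Gamma_pos_of_pos (by linarith : 0 < s / 2)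
  have hGp : 0 < Gamma (s / 2) * cE s ε := by positivity
  refine ⟨ε, Gamma (s / 2) * cE s ε, hGp, fun z => ?_⟩
  rcases eq_or_ne z 0 with h | h
  · rw [h, supK_zero hc hm0 hm, Krep_zero, ENNReal.mul_top (by simpa using hGp),
      ENNReal.mul_top (by simp; linarith), ENNReal.mul_top (by simp; linarith)]
    simp
  · have hz := nrm_pos h
    have hzs : 0 < nrm z ^ (-s) := rpow_pos_of_pos hz _
    have hk : supK s Ω ε z =
        ENNReal.ofReal (Gamma (s / 2) * nrm z ^ (-s) * angInt s Ω ε (ang z)) := by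
      conv_lhs => rw [polar_repr (x := z)]
      exact supK_polar (by linarith) hc (fun θ => hm0.le.trans (hm θ)) hε hz _
    rw [Krep_of_ne _ _ h, ← ENNReal.ofReal_mul hGp.le, ← ENNReal.ofReal_mul (by linarith),
      ← ENNReal.ofReal_mul (by linarith), hk]
    have hP : 0 < Gamma (s / 2) * nrm z ^ (-s) := by positivity
    constructor
    · apply ENNReal.ofReal_le_ofReal
      have := mul_le_mul_of_nonneg_left (hε2 (ang z)).1 hP.le
      linarith
    · apply ENNReal.ofReal_le_ofReal
      have := mul_le_mul_of_nonneg_left (hε2 (ang z)).2 hP.le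
      linarith

lemma le_of_approx {x y : ℝ≥0∞} (h : ∀ δ : ℝ, 0 < δ → δ < 1 →
    ENNReal.ofReal (1 - δ) * x ≤ ENNReal.ofReal (1 + δ) * y) : x ≤ y := by
  rcases eq_or_ne y ⊤ with hy | hy
  · rw [hy]; exact le_top
  have hx : x ≠ ⊤ := by
    intro hx
    have := h (1 / 2) (by norm_num) (by norm_num)
    rw [hx, ENNReal.mul_top (by norm_num)] at this
    exact ENNReal.mul_ne_top ENNReal.ofReal_ne_top hy (top_le_iff.1 this)
  rw [← ENNReal.ofReal_toReal hx, ← ENNReal.ofReal_toReal hy] at h ⊢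
  have hx0 : 0 ≤ x.toReal := ENNReal.toReal_nonneg
  have hy0 : 0 ≤ y.toReal := ENNReal.toReal_nonneg
  apply ENNReal.ofReal_le_ofReal
  by_contra! hlt
  have hS : 0 < x.toReal + y.toReal := by linarith
  set δ := (x.toReal - y.toReal) / (2 * (x.toReal + y.toReal)) with hδ
  have hδ0 : 0 < δ := by apply div_pos <;> linarith
  have hδ1 : δ < 1 := by rw [hδ, div_lt_one (by linarith)]; linarith
  have h1 := h δ hδ0 hδ1
  rw [← ENNReal.ofReal_mul (by linarith), ← ENNReal.ofReal_mul (by linarith),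
    ENNReal.ofReal_le_ofReal_iff (by positivity)] at h1
  have h2 : δ * (2 * (x.toReal + y.toReal)) = x.toReal - y.toReal := by
    rw [hδ]; field_simp
  nlinarith

variable (μ ρ : Measure (ℝ × ℝ)) [IsProbabilityMeasure μ] [IsProbabilityMeasure ρ]

/-- The repulsive kernel is positive definite on differences of probability measures. -/
lemma Krep_pd (hs1 : 1 ≤ s) (hs2 : s < 2) (hc : Continuous Ω)
    (hpi : ∀ θ, Ω (θ + π) = Ω θ) (hm0 : 0 < m) (hm : ∀ θ, m ≤ Ω θ) (hL0 : 0 ≤ L)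
    (hL : ∀ x y, |Ω x - Ω y| ≤ L * |x - y|) :
    II (Krep s Ω) μ ρ + II (Krep s Ω) ρ μ ≤ II (Krep s Ω) μ μ + II (Krep s Ω) ρ ρ := by
  apply le_of_approx
  intro δ hδ hδ1
  obtain ⟨ε, G, hG, h⟩ := Krep_approx hs1 hs2 hc hpi hm0 hm hL0 hL hδ hδ1
  have e1 : ∀ μ ν : Measure (ℝ × ℝ), ENNReal.ofReal (1 - δ) * (ENNReal.ofReal G * II (Krep s Ω) μ ν)
      ≤ II (supK s Ω ε) μ ν := by
    intro μ ν
    rw [← II_const_mul ENNReal.ofReal_ne_top, ← II_const_mul ENNReal.ofReal_ne_top]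
    exact II_mono fun z => (h z).1
  have e2 : ∀ μ ν : Measure (ℝ × ℝ), II (supK s Ω ε) μ ν ≤
      ENNReal.ofReal (1 + δ) * (ENNReal.ofReal G * II (Krep s Ω) μ ν) := by
    intro μ ν
    rw [← II_const_mul ENNReal.ofReal_ne_top, ← II_const_mul ENNReal.ofReal_ne_top]
    exact II_mono fun z => (h z).2
  have h3 := (add_le_add (e1 μ ρ) (e1 ρ μ)).trans ((supK_pd μ ρ hc ε).trans
    (add_le_add (e2 μ μ) (e2 ρ ρ)))
  have hG0 : ENNReal.ofReal G ≠ 0 := by simpa using hG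
  refine (ENNReal.mul_le_mul_iff_right hG0 ENNReal.ofReal_ne_top).1 ?_
  calc _ = _ := ?_
    _ ≤ _ := h3
    _ = _ := ?_
  all_goals ring

variable {μ ρ}

/-- Strict positive definiteness. The kernel is the sum of a small multiple of the isotropic Riesz
kernel, an exact superposition of Gaussians which detects equality, and of a kernel to which
`Krep_pd` still applies. -/
lemma Krep_eq (hs1 : 1 ≤ s) (hs2 : s < 2) (hc : Continuous Ω)
    (hpi : ∀ θ, Ω (θ + π) = Ω θ) (hm0 : 0 < m) (hm : ∀ θ, m ≤ Ω θ) (hL0 : 0 ≤ L)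
    (hL : ∀ x y, |Ω x - Ω y| ≤ L * |x - y|)
    (hfin : II (Krep s Ω) μ μ + II (Krep s Ω) ρ ρ ≠ ⊤)
    (heq : II (Krep s Ω) μ ρ + II (Krep s Ω) ρ μ = II (Krep s Ω) μ μ + II (Krep s Ω) ρ ρ) :
    μ = ρ := by
  set Ω' : ℝ → ℝ := fun θ => Ω θ - m / 2 with hΩ'
  have hc' : Continuous Ω' := hc.sub continuous_const
  have hG := Gamma_pos_of_pos (by linarith : 0 < s / 2)
  have hpp := pi_pos
  set c := m / 2 / (Gamma (s / 2) * (2 * π)) with hcdef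
  have hc0 : 0 < c := by positivity
  have hdec : Krep s Ω = fun z => Krep s Ω' z + ENNReal.ofReal c * supK s (fun _ => 1) 1 z := by
    ext z
    rw [supK_iso (by linarith), ← mul_assoc, ← ENNReal.ofReal_mul hc0.le]
    have e : c * (Gamma (s / 2) * (2 * π)) = m / 2 := by rw [hcdef]; field_simp
    rw [e]
    rcases eq_or_ne z 0 with h | h
    · rw [h]; simp [Krep_zero]
    · have hzs : 0 < nrm z ^ (-s) := rpow_pos_of_pos (nrm_pos h) _
      have := hm (ang z)
      rw [Krep_of_ne _ _ h, Krep_of_ne _ _ h, Krep_of_ne _ _ h, ← ENNReal.ofReal_mul (by linarith),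
        ← ENNReal.ofReal_add]
      · congr 1; simp only [hΩ']; ring
      · have : 0 ≤ Ω' (ang z) := by simp only [hΩ']; linarith
        positivity
      · positivity
  have hII : ∀ (μ ν : Measure (ℝ × ℝ)) [SFinite ν], II (Krep s Ω) μ ν =
      II (Krep s Ω') μ ν + ENNReal.ofReal c * II (supK s (fun _ => 1) 1) μ ν := by
    intro μ ν _
    rw [hdec, II_add (measurable_Krep hc'), II_const_mul ENNReal.ofReal_ne_top]
  have h1 := Krep_pd (s := s) (Ω := Ω') (m := m / 2) (L := L) μ ρ hs1 hs2 hc'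
    (fun θ => by simp only [hΩ', hpi]) (by linarith) (fun θ => by
      have := hm θ
      simp only [hΩ']; linarith) hL0 (fun x y => by
      have := hL x y
      simpa only [hΩ', sub_sub_sub_cancel_right] using this)
  have h2 := supK_pd (s := s) μ ρ (continuous_const (y := (1 : ℝ))) 1
  have hcc : ENNReal.ofReal c ≠ 0 := by simpa using hc0
  simp only [hII] at heq hfin
  have fin2 : ENNReal.ofReal c * (II (supK s (fun _ => 1) 1) μ μ + II (supK s (fun _ => 1) 1) ρ ρ)
      ≠ ⊤ := by
    refine ne_top_of_le_ne_top hfin ?_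
    rw [mul_add]
    exact add_le_add le_add_self le_add_self
  have fin1 : II (Krep s Ω') μ μ + II (Krep s Ω') ρ ρ ≠ ⊤ := by
    refine ne_top_of_le_ne_top hfin ?_
    exact add_le_add le_self_add le_self_add
  have fin3 : II (supK s (fun _ => 1) 1) μ μ + II (supK s (fun _ => 1) 1) ρ ρ ≠ ⊤ := by
    intro h
    rw [h, ENNReal.mul_top hcc] at fin2
    exact fin2 rfl
  refine eq_of_supK_eq (s := s) (ne_top_of_le_ne_top fin3 h2) (le_antisymm h2 ?_)
  refine (ENNReal.mul_le_mul_iff_right hcc ENNReal.ofReal_ne_top).1 ?_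
  refine (ENNReal.add_le_add_iff_left fin1).1 ?_
  calc _ = _ := ?_
    _ = _ := heq.symm
    _ = (II (Krep s Ω') μ ρ + II (Krep s Ω') ρ μ) + ENNReal.ofReal c *
        (II (supK s (fun _ => 1) 1) μ ρ + II (supK s (fun _ => 1) 1) ρ μ) := by ring
    _ ≤ _ := add_le_add_left h1 _
  ring

end Krep

/-! ### Reduction to centred measures and conclusion -/

/-- The confining part of the interaction kernel. -/
def qk (z : ℝ × ℝ) : ℝ≥0∞ := ENNReal.ofReal (nrm z ^ 2)

lemma qk_meas : Measurable qk := by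
  have := measurable_nrm
  unfold qk; fun_prop

lemma lipschitz_of_periodic {Ω : ℝ → ℝ} (hΩ : ContDiff ℝ (⊤ : ℕ∞) Ω)
    (hper : ∀ θ, Ω (θ + 2 * π) = Ω θ) : ∃ L : ℝ, 0 ≤ L ∧ ∀ x y, |Ω x - Ω y| ≤ L * |x - y| := by
  have hd : Continuous (deriv Ω) := hΩ.continuous_deriv (by exact_mod_cast le_top)
  have hdp : Function.Periodic (deriv Ω) (2 * π) := by
    intro x
    rw [← deriv_comp_add_const]
    congr 1; ext θ; exact hper θ
  have hK := hdp.compact_of_continuous (by positivity) hd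
  obtain ⟨L, hL⟩ := hK.isBounded.exists_norm_le
  have hL' : ∀ x, ‖deriv Ω x‖ ≤ L := fun x => hL _ (mem_range_self x)
  refine ⟨L, (norm_nonneg _).trans (hL' 0), fun x y => ?_⟩
  exact convex_univ.norm_image_sub_le_of_norm_deriv_le
    (fun x _ => (hΩ.differentiable (by simp)).differentiableAt) (fun x _ => hL' x)
    (mem_univ y) (mem_univ x)

section moments

variable {μ : Measure (ℝ × ℝ)} [IsProbabilityMeasure μ]

omit [IsProbabilityMeasure μ] in
lemma integrable_nrm_sq (hM : ∫⁻ x, qk x ∂μ ≠ ⊤) : Integrable (fun x => nrm x ^ 2) μ := by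
  refine ⟨(measurable_nrm.pow_const 2).aestronglyMeasurable, ?_⟩
  rw [hasFiniteIntegral_iff_ofReal (Eventually.of_forall fun x => sq_nonneg _)]
  exact lt_top_iff_ne_top.2 hM

lemma integrable_coord (hM : ∫⁻ x, qk x ∂μ ≠ ⊤) :
    Integrable (fun x => x.1) μ ∧ Integrable (fun x => x.2) μ := by
  have h := (integrable_const (1 : ℝ)).add (integrable_nrm_sq hM)
  constructor
  · refine h.mono' (by fun_prop) (Eventually.of_forall fun x => ?_)
    simp only [Pi.add_apply, nrm_sq, norm_eq_abs]
    rw [← sq_abs x.1]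
    nlinarith [sq_nonneg (|x.1| - 1), sq_nonneg x.2]
  · refine h.mono' (by fun_prop) (Eventually.of_forall fun x => ?_)
    simp only [Pi.add_apply, nrm_sq, norm_eq_abs]
    rw [← sq_abs x.2]
    nlinarith [sq_nonneg (|x.2| - 1), sq_nonneg x.1]

/-- For centred measures the confining energy is twice the second moment. -/
lemma II_qk (hM : ∫⁻ x, qk x ∂μ ≠ ⊤) (h1 : ∫ x, x.1 ∂μ = 0) (h2 : ∫ x, x.2 ∂μ = 0) :
    II qk μ μ = 2 * ∫⁻ x, qk x ∂μ := by
  have i0 := integrable_nrm_sq hM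
  obtain ⟨i1, i2⟩ := integrable_coord hM
  have hin : ∀ x, ∫⁻ y, qk (x - y) ∂μ = qk x + ∫⁻ y, qk y ∂μ := by
    intro x
    have e : ∀ y, nrm (x - y) ^ 2 = nrm x ^ 2 + nrm y ^ 2 - (2 * x.1 * y.1 + 2 * x.2 * y.2) := by
      intro y; simp only [nrm_sq, Prod.fst_sub, Prod.snd_sub]; ring
    have j1 : Integrable (fun y => nrm x ^ 2 + nrm y ^ 2) μ := (integrable_const _).add i0
    have j2 : Integrable (fun y : ℝ × ℝ => 2 * x.1 * y.1 + 2 * x.2 * y.2) μ :=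
      (i1.const_mul _).add (i2.const_mul _)
    have hInt : ∫ y, nrm (x - y) ^ 2 ∂μ = nrm x ^ 2 + ∫ y, nrm y ^ 2 ∂μ := by
      simp only [e]
      rw [integral_sub j1 j2, integral_add (integrable_const _) i0,
        integral_add (i1.const_mul _) (i2.const_mul _), integral_const_mul, integral_const_mul,
        h1, h2]
      simp
    unfold qk
    rw [← ofReal_integral_eq_lintegral_ofReal, ← ofReal_integral_eq_lintegral_ofReal i0,
      ← ENNReal.ofReal_add (sq_nonneg _) (integral_nonneg fun _ => sq_nonneg _), hInt]
    · exact Eventually.of_forall fun _ => sq_nonneg _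
    · simp only [e]; exact j1.sub j2
    · exact Eventually.of_forall fun _ => sq_nonneg _
  unfold II
  simp only [hin]
  rw [lintegral_add_left qk_meas, lintegral_const, measure_univ, mul_one, two_mul]

lemma moment_finite (h : II qk μ μ ≠ ⊤) : ∫⁻ x, qk x ∂μ ≠ ⊤ := by
  have hm : Measurable fun x => ∫⁻ y, qk (x - y) ∂μ :=
    Measurable.lintegral_prod_right' (f := fun p : (ℝ × ℝ) × (ℝ × ℝ) => qk (p.1 - p.2))
      (qk_meas.comp (by fun_prop))
  obtain ⟨x, hx⟩ := (ae_lt_top hm h).exists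
  have hle : ∀ y, qk y ≤ 2 * qk (x - y) + 2 * qk x := by
    intro y
    unfold qk
    rw [two_mul_ofReal, two_mul_ofReal, ← ENNReal.ofReal_add (by positivity) (by positivity)]
    apply ENNReal.ofReal_le_ofReal
    simp only [nrm_sq, Prod.fst_sub, Prod.snd_sub]
    nlinarith [sq_nonneg (2 * x.1 - y.1), sq_nonneg (2 * x.2 - y.2)]
  refine ne_top_of_le_ne_top ?_ (lintegral_mono hle)
  rw [lintegral_add_right _ measurable_const, lintegral_const_mul' _ _ (by simp), lintegral_const,
    measure_univ, mul_one]
  exact ENNReal.add_ne_top.2 ⟨ENNReal.mul_ne_top (by simp) hx.ne,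
    ENNReal.mul_ne_top (by simp) ENNReal.ofReal_ne_top⟩

end moments

lemma II_map {k : ℝ × ℝ → ℝ≥0∞} (hk : Measurable k) (μ : Measure (ℝ × ℝ)) [SFinite μ] (v : ℝ × ℝ) :
    II k (Measure.map (fun x => x + v) μ) (Measure.map (fun x => x + v) μ) = II k μ μ := by
  have hv : Measurable fun x : ℝ × ℝ => x + v := by fun_prop
  have e : ∀ x, ∫⁻ y, k (x - y) ∂(Measure.map (fun x => x + v) μ) = ∫⁻ y, k (x - (y + v)) ∂μ := by
    intro x
    exact lintegral_map (f := fun y => k (x - y)) (hk.comp (by fun_prop)) hv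
  unfold II
  simp only [e]
  rw [lintegral_map _ hv]
  · simp only [add_sub_add_right_eq_sub]
  · exact Measurable.lintegral_prod_right'
      (f := fun p : (ℝ × ℝ) × (ℝ × ℝ) => k (p.1 - (p.2 + v))) (hk.comp (by fun_prop))

section rho

variable {s : ℝ} (hs1 : 1 ≤ s) (hs2 : s < 2) {Ω : ℝ → ℝ} (hc : Continuous Ω)
    (hper : ∀ θ, Ω (θ + 2 * π) = Ω θ) (hpos : ∀ θ, 0 < Ω θ) (hpi : ∀ θ, Ω (θ + π) = Ω θ)
    (hsymm : ∀ θ, Ω (-θ) = Ω θ) {a b : ℝ} (ha : 0 < a) (hb : 0 < b)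
    (h1 : kap0 s * (∫ α in (-π)..π, kw s Ω a b α * (1 - (2 - s) * cos α ^ 2)) = a ^ 2)
    (h2 : kap0 s * (∫ α in (-π)..π, kw s Ω a b α * (1 - (2 - s) * sin α ^ 2)) = b ^ 2)

include hs1 hs2 in
lemma rhoAB_prob (a b : ℝ) : IsProbabilityMeasure (rhoAB s a b) := by
  have := rho2meas_prob hs1 hs2
  rw [rhoAB_eq]
  exact Measure.isProbabilityMeasure_map (by fun_prop)

include hs1 hs2 in
lemma ae_rho2meas : ∀ᵐ X ∂(rho2meas s), nrm X < R2 s := by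
  rw [rho2meas, ae_withDensity_iff (by have := measurable_rho2 s; fun_prop)]
  refine Eventually.of_forall fun X hX => ?_
  by_contra! hle
  apply hX
  have hR := R2_pos hs1 hs2
  have : R2 s ^ 2 - nrm X ^ 2 ≤ 0 := by nlinarith
  rw [rho2, max_eq_right this, zero_rpow (by linarith)]
  simp

lemma integral_rho2meas_odd {g : ℝ × ℝ → ℝ} (hg : ∀ x, g (-x) = -g x) :
    ∫ x, g x ∂(rho2meas s) = 0 := by
  rw [rho2meas, integral_withDensity_eq_integral_toReal_smul
    (by have := measurable_rho2 s; fun_prop) (Eventually.of_forall fun _ => ENNReal.ofReal_lt_top)]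
  have hn : ∀ x, rho2 s (-x) = rho2 s x := by
    intro x; simp [rho2, nrm_sq]
  have := integral_neg_eq_self (fun x => (ENNReal.ofReal (rho2 s x)).toReal • g x)
    (volume : Measure (ℝ × ℝ))
  simp only [hn, hg, smul_neg, integral_neg] at this
  linarith

lemma rhoAB_centred (a b : ℝ) : ∫ x, x.1 ∂(rhoAB s a b) = 0 ∧ ∫ x, x.2 ∂(rhoAB s a b) = 0 := by
  rw [rhoAB_eq]
  constructor
  · rw [integral_map (by fun_prop) (by fun_prop)]
    exact integral_rho2meas_odd (g := fun x => a * x.1) (by simp)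
  · rw [integral_map (by fun_prop) (by fun_prop)]
    exact integral_rho2meas_odd (g := fun x => b * x.2) (by simp)

include hs1 hs2 hc hper hpos hpi hsymm ha hb h1 h2

/-- The Euler-Lagrange equality integrated against `ρ_{a,b}`. -/
lemma EL_rho : II (Krep s Ω) (rhoAB s a b) (rhoAB s a b) + ∫⁻ x, qk x ∂(rhoAB s a b) =
    ENNReal.ofReal (elConst s Ω a b) := by
  have hp := rhoAB_prob hs1 hs2 a b
  have hp2 := rho2meas_prob hs1 hs2
  have hk := measurable_Krep (s := s) hc
  have hPm : Measurable (Pot s Ω a b) :=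
    Measurable.lintegral_prod_right' (f := fun p : (ℝ × ℝ) × (ℝ × ℝ) => Krep s Ω (p.1 - p.2))
      (hk.comp (by fun_prop))
  have e : II (Krep s Ω) (rhoAB s a b) (rhoAB s a b) = ∫⁻ x, Pot s Ω a b x ∂(rhoAB s a b) := rfl
  rw [e, ← lintegral_add_right _ qk_meas]
  conv_lhs => rw [rhoAB_eq]
  rw [lintegral_map (f := fun x => Pot s Ω a b x + qk x) (hPm.add qk_meas) (by fun_prop)]
  have : ∀ᵐ X ∂(rho2meas s), Pot s Ω a b (a * X.1, b * X.2) + qk (a * X.1, b * X.2) =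
      ENNReal.ofReal (elConst s Ω a b) := by
    filter_upwards [ae_rho2meas hs1 hs2] with X hX
    exact EL_eq hs1 hs2 hc hper hpos hpi hsymm ha hb h1 h2 hX
  rw [lintegral_congr_ae this]
  simp

/-- The Euler-Lagrange inequality integrated against a competitor. -/
lemma EL_mu (μ : Measure (ℝ × ℝ)) [IsProbabilityMeasure μ] :
    ENNReal.ofReal (elConst s Ω a b) ≤ II (Krep s Ω) μ (rhoAB s a b) + ∫⁻ x, qk x ∂μ := by
  have e : II (Krep s Ω) μ (rhoAB s a b) = ∫⁻ x, Pot s Ω a b x ∂μ := rfl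
  rw [e, ← lintegral_add_right _ qk_meas]
  calc ENNReal.ofReal (elConst s Ω a b) = ∫⁻ _, ENNReal.ofReal (elConst s Ω a b) ∂μ := by simp
    _ ≤ _ := lintegral_mono fun x => EL_ge hs1 hs2 hc hper hpos hpi hsymm ha hb h1 h2 x

end rho

lemma II_Krep_comm {s : ℝ} {Ω : ℝ → ℝ} (hc : Continuous Ω) (hper : ∀ θ, Ω (θ + 2 * π) = Ω θ)
    (hpi : ∀ θ, Ω (θ + π) = Ω θ) (μ ρ : Measure (ℝ × ℝ)) [SFinite μ] [SFinite ρ] :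
    II (Krep s Ω) μ ρ = II (Krep s Ω) ρ μ := by
  have hk := measurable_Krep (s := s) hc
  unfold II
  rw [lintegral_lintegral_swap (f := fun x y => Krep s Ω (x - y))
    (hk.comp (by fun_prop : Measurable fun p : (ℝ × ℝ) × (ℝ × ℝ) => p.1 - p.2)).aemeasurable]
  congr 1; ext x; congr 1; ext y
  rw [← Krep_neg hper hpi, neg_sub]

/-- The inequality behind minimality, with its equality case, in abstract form: `A, B, C` are
the repulsive energies of `(μ, μ)`, `(μ, ρ)`, `(ρ, ρ)` and `M, N` the second moments. -/
lemma abstract_min {A B C M N Λ : ℝ≥0∞} (hΛ : Λ ≠ ⊤) (hρ : C + N = Λ) (hμ : Λ ≤ B + M)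
    (hpd : B + B ≤ A + C) (hM : M ≠ ⊤) :
    C + 2 * N ≤ A + 2 * M ∧ (A + 2 * M ≤ C + 2 * N → A + C ≠ ⊤ ∧ B + B = A + C) := by
  have hCN : C + N ≠ ⊤ := by rw [hρ]; exact hΛ
  have hC : C ≠ ⊤ := (ENNReal.add_ne_top.1 hCN).1
  have hN : N ≠ ⊤ := (ENNReal.add_ne_top.1 hCN).2
  have h2M : 2 * M ≠ ⊤ := ENNReal.mul_ne_top (by simp) hM
  have h2N : 2 * N ≠ ⊤ := ENNReal.mul_ne_top (by simp) hN
  have key : (C + 2 * N) + C ≤ (B + B) + 2 * M := by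
    calc _ = (C + N) + (C + N) := by ring
      _ ≤ (B + M) + (B + M) := by rw [hρ]; exact add_le_add hμ hμ
      _ = _ := by ring
  constructor
  · refine (ENNReal.add_le_add_iff_right hC).1 (key.trans ?_)
    calc _ ≤ (A + C) + 2 * M := add_le_add_left hpd _
      _ = _ := by ring
  · intro hle
    have hA : A ≠ ⊤ := (ENNReal.add_ne_top.1
      (ne_top_of_le_ne_top (ENNReal.add_ne_top.2 ⟨hC, h2N⟩) hle)).1
    refine ⟨ENNReal.add_ne_top.2 ⟨hA, hC⟩, le_antisymm hpd ?_⟩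
    refine (ENNReal.add_le_add_iff_right h2M).1 (le_trans ?_ key)
    calc _ = (A + 2 * M) + C := by ring
      _ ≤ _ := add_le_add_left hle _

/-- Minimality of `rhoAB s a b` and its equality case among centred measures. -/
lemma centred_min {s : ℝ} (hs1 : 1 ≤ s) (hs2 : s < 2) {Ω : ℝ → ℝ} (hΩ : SatisfiesH Ω)
    (hsymm : ∀ θ, Ω (-θ) = Ω θ) {a b : ℝ} (ha : 0 < a) (hb : 0 < b)
    (h1 : kap0 s * (∫ α in (-π)..π, kw s Ω a b α * (1 - (2 - s) * cos α ^ 2)) = a ^ 2)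
    (h2 : kap0 s * (∫ α in (-π)..π, kw s Ω a b α * (1 - (2 - s) * sin α ^ 2)) = b ^ 2)
    (μ : Measure (ℝ × ℝ)) [IsProbabilityMeasure μ] (hM : ∫⁻ x, qk x ∂μ ≠ ⊤)
    (hx : ∫ x, x.1 ∂μ = 0) (hy : ∫ x, x.2 ∂μ = 0) :
    II (Wkernel s Ω) (rhoAB s a b) (rhoAB s a b) ≤ II (Wkernel s Ω) μ μ ∧
    (II (Wkernel s Ω) μ μ ≤ II (Wkernel s Ω) (rhoAB s a b) (rhoAB s a b) → μ = rhoAB s a b) := by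
  obtain ⟨hsm, hper, hpos, hpi⟩ := hΩ
  have hc : Continuous Ω := hsm.continuous
  obtain ⟨L, hL0, hL⟩ := lipschitz_of_periodic hsm hper
  obtain ⟨m, _, hm0, hm⟩ := Om_bounds hc hper hpos
  have hp := rhoAB_prob hs1 hs2 a b
  have hρ := EL_rho hs1 hs2 hc hper hpos hpi hsymm ha hb h1 h2
  have hMρ : ∫⁻ x, qk x ∂(rhoAB s a b) ≠ ⊤ := by
    refine ne_top_of_le_ne_top ENNReal.ofReal_ne_top (le_of_le_of_eq ?_ hρ)
    exact le_add_self
  have hW : ∀ ν : Measure (ℝ × ℝ), [SFinite ν] → II (Wkernel s Ω) ν ν =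
      II (Krep s Ω) ν ν + II qk ν ν := by
    intro ν _
    rw [← II_add (measurable_Krep hc)]
    congr 1; ext z; exact Wkernel_eq hpos z
  have hcen := rhoAB_centred (s := s) a b
  have hpd := Krep_pd μ (rhoAB s a b) hs1 hs2 hc hpi hm0 (fun θ => (hm θ).1) hL0 hL
  have hcomm := II_Krep_comm (s := s) hc hper hpi (rhoAB s a b) μ
  rw [hcomm] at hpd
  rw [hW, hW, II_qk hM hx hy, II_qk hMρ hcen.1 hcen.2]
  obtain ⟨r1, r2⟩ := abstract_min ENNReal.ofReal_ne_top hρ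
    (EL_mu hs1 hs2 hc hper hpos hpi hsymm ha hb h1 h2 μ) hpd hM
  refine ⟨r1, fun hle => ?_⟩
  obtain ⟨f1, f2⟩ := r2 hle
  refine Krep_eq hs1 hs2 hc hpi hm0 (fun θ => (hm θ).1) hL0 hL f1 ?_
  rw [hcomm]; exact f2

/-- The same statement for arbitrary measures of finite energy, after translating the centre
of mass to the origin. -/
lemma general_min {s : ℝ} (hs1 : 1 ≤ s) (hs2 : s < 2) {Ω : ℝ → ℝ} (hΩ : SatisfiesH Ω)
    (hsymm : ∀ θ, Ω (-θ) = Ω θ) {a b : ℝ} (ha : 0 < a) (hb : 0 < b)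
    (h1 : kap0 s * (∫ α in (-π)..π, kw s Ω a b α * (1 - (2 - s) * cos α ^ 2)) = a ^ 2)
    (h2 : kap0 s * (∫ α in (-π)..π, kw s Ω a b α * (1 - (2 - s) * sin α ^ 2)) = b ^ 2)
    (μ : Measure (ℝ × ℝ)) [IsProbabilityMeasure μ] (hfin : II (Wkernel s Ω) μ μ ≠ ⊤) :
    II (Wkernel s Ω) (rhoAB s a b) (rhoAB s a b) ≤ II (Wkernel s Ω) μ μ ∧
    (II (Wkernel s Ω) μ μ ≤ II (Wkernel s Ω) (rhoAB s a b) (rhoAB s a b) →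
      ∃ v : ℝ × ℝ, μ = Measure.map (fun x => x + v) (rhoAB s a b)) := by
  obtain ⟨hsm, hper, hpos, hpi⟩ := id hΩ
  have hc : Continuous Ω := hsm.continuous
  have hWm : Measurable (Wkernel s Ω) := by
    have e : Wkernel s Ω = fun z => Krep s Ω z + qk z := by
      ext z; exact Wkernel_eq hpos z
    rw [e]; exact (measurable_Krep hc).add qk_meas
  have hqW : ∀ z, qk z ≤ Wkernel s Ω z := by
    intro z; rw [Wkernel_eq hpos]; exact le_add_self
  have hq : II qk μ μ ≠ ⊤ := ne_top_of_le_ne_top hfin (II_mono hqW)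
  obtain ⟨i1, i2⟩ := integrable_coord (moment_finite hq)
  set v : ℝ × ℝ := (∫ x, x.1 ∂μ, ∫ x, x.2 ∂μ) with hv
  have hmv : Measurable fun x : ℝ × ℝ => x + -v := by fun_prop
  set μ' := Measure.map (fun x => x + -v) μ with hμ'
  have hpμ : IsProbabilityMeasure μ' := Measure.isProbabilityMeasure_map hmv.aemeasurable
  have hM : ∫⁻ x, qk x ∂μ' ≠ ⊤ := by
    apply moment_finite
    rw [hμ', II_map qk_meas]; exact hq
  have hx : ∫ x, x.1 ∂μ' = 0 := by
    rw [hμ', integral_map hmv.aemeasurable (by fun_prop)]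
    simp only [Prod.fst_add, Prod.fst_neg]
    rw [integral_add i1 (integrable_const _)]
    simp [hv]
  have hy : ∫ x, x.2 ∂μ' = 0 := by
    rw [hμ', integral_map hmv.aemeasurable (by fun_prop)]
    simp only [Prod.snd_add, Prod.snd_neg]
    rw [integral_add i2 (integrable_const _)]
    simp [hv]
  obtain ⟨r1, r2⟩ := centred_min hs1 hs2 hΩ hsymm ha hb h1 h2 μ' hM hx hy
  rw [hμ', II_map hWm] at r1 r2
  refine ⟨r1, fun hle => ⟨v, ?_⟩⟩
  rw [← r2 hle, Measure.map_map (by fun_prop) hmv]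
  have : (fun x : ℝ × ℝ => x + v) ∘ (fun x => x + -v) = id := by ext x <;> simp
  rw [this, Measure.map_id]

/-- for `1 ≤ s < 2` and `Ω` satisfying (H) with the symmetry
`Ω(-θ) = Ω(θ)`, the unique minimizer of the energy up to translation is some `ρ_{a,b}`
with `a, b > 0`. -/
theorem statement18 (s : ℝ) (hs1 : 1 ≤ s) (hs2 : s < 2) (Ω : ℝ → ℝ) (hΩ : SatisfiesH Ω)
    (hsymm : ∀ θ, Ω (-θ) = Ω θ) :
    ∃ a b : ℝ, 0 < a ∧ 0 < b ∧ IsUniqueMinimizer (energy s Ω) (rhoAB s a b) := by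
  obtain ⟨a, b, ha, hb, h1, h2⟩ := exists_ab hs1 hs2 hΩ.1.continuous hΩ.2.1 hΩ.2.2.1
  have he : ∀ μ, energy s Ω μ = (1 / 2 : ℝ≥0∞) * II (Wkernel s Ω) μ μ := fun _ => rfl
  have hh0 : (1 / 2 : ℝ≥0∞) ≠ 0 := by simp
  have hht : (1 / 2 : ℝ≥0∞) ≠ ⊤ := by simp
  have hmin : IsMinimizer (energy s Ω) (rhoAB s a b) := by
    refine ⟨rhoAB_prob hs1 hs2 a b, fun μ hμ => ?_⟩
    rw [he, he]
    refine mul_le_mul_right ?_ _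
    by_cases hfin : II (Wkernel s Ω) μ μ = ⊤
    · rw [hfin]; exact le_top
    · exact (general_min hs1 hs2 hΩ hsymm ha hb h1 h2 μ hfin).1
  refine ⟨a, b, ha, hb, hmin, fun μ hμ => ?_⟩
  have hp := hμ.1
  have hle := hμ.2 _ hmin.1
  rw [he, he, ENNReal.mul_le_mul_iff_right hh0 hht] at hle
  have hfinρ : II (Wkernel s Ω) (rhoAB s a b) (rhoAB s a b) ≠ ⊤ := by
    have hp' := rhoAB_prob hs1 hs2 a b
    have hc := hΩ.1.continuous
    have hρ := EL_rho hs1 hs2 hc hΩ.2.1 hΩ.2.2.1 hΩ.2.2.2 hsymm ha hb h1 h2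
    have hcen := rhoAB_centred (s := s) a b
    obtain ⟨f1, f2⟩ := ENNReal.add_ne_top.1 (hρ.trans_ne ENNReal.ofReal_ne_top)
    have e : Wkernel s Ω = fun z => Krep s Ω z + qk z := by
      ext z; exact Wkernel_eq hΩ.2.2.1 z
    rw [e, II_add (measurable_Krep hc), II_qk f2 hcen.1 hcen.2]
    exact ENNReal.add_ne_top.2 ⟨f1, ENNReal.mul_ne_top (by simp) f2⟩
  exact (general_min hs1 hs2 hΩ hsymm ha hb h1 h2 μ (ne_top_of_le_ne_top hfinρ hle)).2 hle

end Aniso
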